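/- arXiv:2206.12776 — 2 statements merged into one kernel-verified Lean document; each statement's English description precedes it below -/
import Mathlib

section
/- Let X be a smooth fan with vertex p such that p ∉ cl(E(X)), and let 𝒦 = {K_n : n ∈ ω} be a countably infinite set of compact subsets of (0,1), no two of which are order isomorphic. Then there exists a 𝒦-fan X' such that X embeds in X' and, identifying X with its image in X', E(X) is a closed and open subset of E(X'). Moreover, X' can be chosen so that additionally any one of the following holds: (1) (when every K_n is nonempty) E(X') ∖ E(X) is homeomorphic to the natural numbers (countably infinite discrete) and E(X') ∖ E(X) = E_𝒦, where E_𝒦 is the witnessing set of the 𝒦-fan; or (2) E(X') ∖ E(X) is homeomorphic to the space of irrational numbers; or (3) E(X') ∖ E(X) is homeomorphic to the product of the Cantor set with the natural numbers. -/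
/-!
A smooth fan is the subgraph `{(a, t) | 0 ≤ t ≤ φ a}` of an upper semicontinuous height function `φ` on
a Cantor set `A` of codes, with height `0` collapsed to the vertex (`exists_profile`), and its endpoints
are the tips `(a, φ a)` with `φ a > 0` (`endpoints_fanOf`). Away from the vertex, closures may be
computed in `A × ℝ` (`mem_closure_ray`). So the task is to construct one height function.

The fan `X'` is a countable tree of blocks. The root block is `X`; every other block is a small copy
of a fixed model with one distinguished leg `d`. With every block `s` goes a set `S s` of points on its
legs, strictly below the tips. The children of `s` are placed next to the points of `S s` so that their
heights cluster at every point of `S s` and nowhere else except at the vertex. The codes are pairs of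
binary sequences: the first one holds digits, which bring a child close to its parent, and the second one
holds markers, which show where the children split off and thereby separate blocks. Since heights at
least halve from parent to child and the range of heights in a block shrinks, tips of infinitely many
blocks can accumulate at positive height only along the children of a single block (`dichotomy`).
Hence the closure of the endpoints meets the legs of block `s` exactly in `S s` and in limits of
tips of the block itself (`closure_tips`). The points of `S s` lie below the tips, so the tips of every
block are open in the endpoint set (`block_isolated`, `isOpen_block`); in particular `E(X)` is clopen,
and its complement is a countable topological sum of blocks (`homeo_blocks`). The root can be treated in
this way because `p ∉ cl(E(X))` bounds the heights of its tips from below.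

The sets `S s` are chosen as follows (`exists_fanData`). On the distinguished leg of the `n`-th added
block, `S s` is an order isomorphic copy of `K n` close to the vertex, and this is the whole trace
because `d` is a lowest leg of its block. On all other legs `S s` contains an initial interval `(0, x]`,
so the trace has points of arbitrarily small height. It is therefore not order isomorphic to
a compact subset of `(0,1)` (`not_orderIsomorphic_of_small`), and since the sequence of children has
distinguished tips clustering at these points, the closure of `E_𝒦` meets the leg.

It remains to choose the model (`exists_extension`): a single leg gives `ℕ`; a Cantor set of legs of equal
height gives the product of the Cantor set and `ℕ`; and legs whose tips form the graph of an upper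
semicontinuous function homeomorphic to the Baire space (`graphHomeoBaire`) give `ℕ × ℕ^ℕ`, which is the
space of irrationals by continued fractions (`nat_prod_baire_homeo_irrational`).
-/

open Set Topology

noncomputable section

namespace SmoothFanPaper

/-- `A` is an arc (a homeomorphic copy of `[0,1]`) with endpoints `a` and `b`. -/
def IsArc {α : Type*} [TopologicalSpace α] (A : Set α) (a b : α) : Prop :=
  ∃ h : (Set.Icc (0:ℝ) 1) ≃ₜ A,
    (h ⟨0, Set.left_mem_Icc.mpr zero_le_one⟩ : α) = a ∧
    (h ⟨1, Set.right_mem_Icc.mpr zero_le_one⟩ : α) = b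

/-- The order of `x` in `X` is at least `n`: there are `n` arcs contained in `X`, each with
`x` as an endpoint, which pairwise meet only in `x`. -/
def OrderAtLeast {α : Type*} [TopologicalSpace α] (X : Set α) (x : α) (n : ℕ) : Prop :=
  ∃ A : Fin n → Set α, (∀ i, A i ⊆ X) ∧ (∀ i, ∃ b, IsArc (A i) x b) ∧
    ∀ i j, i ≠ j → A i ∩ A j = {x}

/-- The set of endpoints of `X`: points of order exactly `1`. -/
def Endpoints {α : Type*} [TopologicalSpace α] (X : Set α) : Set α :=
  {x | x ∈ X ∧ OrderAtLeast X x 1 ∧ ¬ OrderAtLeast X x 2}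

/-- The Cantor fan: the union of all straight-line segments from the origin to the points of
`cantorSet × {1}` in the plane. -/
def CantorFan : Set (ℝ × ℝ) :=
  {q | ∃ c ∈ cantorSet, ∃ t ∈ Set.Icc (0:ℝ) 1, q = (t * c, t)}

/-- The cone point of the Cantor fan. -/
def fanVertex : ℝ × ℝ := (0, 0)

/-- A smooth fan: a non-degenerate subcontinuum of the Cantor fan containing the cone point,
whose cone point (the vertex) has order at least 2.  (Every statement below about smooth fans
is invariant under homeomorphisms, so we may realize all smooth fans concretely as such
subcontinua.) -/
structure IsSmoothFan (X : Set (ℝ × ℝ)) : Prop where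
  subset_fan : X ⊆ CantorFan
  isCompact : IsCompact X
  isConnected : IsConnected X
  nondegenerate : ∃ x ∈ X, ∃ y ∈ X, x ≠ y
  vertex_mem : fanVertex ∈ X
  vertex_order : OrderAtLeast X fanVertex 2

/-- Two subsets of `(0,1)` are order isomorphic if some order preserving self-homeomorphism
of `[0,1]` maps one onto the other. -/
def OrderIsomorphic (A B : Set ℝ) : Prop :=
  ∃ h : (Set.Icc (0:ℝ) 1) ≃ₜ (Set.Icc (0:ℝ) 1), StrictMono h ∧
    Subtype.val '' (⇑h '' (Subtype.val ⁻¹' A)) = B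

/-- The canonical parametrization of (subsets of) the leg of the Cantor fan through `e`:
a point of the leg is sent to its height, rescaled so that `e` is at height `1`. -/
def legParam (e : ℝ × ℝ) (S : Set (ℝ × ℝ)) : Set ℝ :=
  (fun q : ℝ × ℝ => q.2 / e.2) '' S

/-- The trace of the closure of a set `T` on the open leg `pe ∖ {p, e}` (where `p` is the
vertex and `pe = segment ℝ p e` is the unique arc in a smooth fan from `p` to an endpoint
`e`), viewed as a subset of `(0,1)` via the canonical parametrization of the leg. -/
def legTrace (T : Set (ℝ × ℝ)) (e : ℝ × ℝ) : Set ℝ :=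
  legParam e ((closure T ∩ segment ℝ fanVertex e) \ {fanVertex, e})

/-- `K` enumerates a countably infinite set `𝒦` of compact subsets of `(0,1)`, no two of
which are order isomorphic. -/
def KFamily (K : ℕ → Set ℝ) : Prop :=
  (∀ n, IsCompact (K n) ∧ K n ⊆ Set.Ioo (0:ℝ) 1) ∧
    ∀ m n, m ≠ n → ¬ OrderIsomorphic (K m) (K n)

/-- `X` is a `𝒦`-fan with witnessing endpoint set `E_𝒦 = {e n : n ∈ ℕ}`. -/
structure IsKFan (K : ℕ → Set ℝ) (X : Set (ℝ × ℝ)) (e : ℕ → ℝ × ℝ) : Prop where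
  fan : IsSmoothFan X
  mem_endpoints : ∀ n, e n ∈ Endpoints X
  trace_iso : ∀ n, OrderIsomorphic (legTrace (Endpoints X) (e n)) (K n)
  trace_not_iso : ∀ x ∈ Endpoints X \ Set.range e, ∀ n,
    ¬ OrderIsomorphic (legTrace (Endpoints X) x) (K n)
  meets_closure : ∀ x ∈ Endpoints X \ Set.range e,
    ((closure (Set.range e) ∩ segment ℝ fanVertex x) \ {fanVertex}).Nonempty

/-- A smooth fan is endpoint rigid if every self-homeomorphism fixes every endpoint. -/
def EndpointRigid (X : Set (ℝ × ℝ)) : Prop :=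
  ∀ h : X ≃ₜ X, ∀ x : X, (x : ℝ × ℝ) ∈ Endpoints X → ((h x : X) : ℝ × ℝ) = (x : ℝ × ℝ)

/-- Complete Erdős space `𝔈_c`: the points of the Hilbert space `ℓ²` all of whose
coordinates lie in `{0} ∪ {1/m : m ≥ 1}`. -/
def ErdosSpace : Set (lp (fun _ : ℕ => ℝ) 2) :=
  {x | ∀ n : ℕ, x n = 0 ∨ ∃ m : ℕ, 0 < m ∧ x n = 1 / m}

/-- `z` is a point of zero-dimensionality of the space it lives in: it has a neighborhood
basis of clopen subsets. -/
def ZeroDimPointAt {α : Type*} [TopologicalSpace α] (z : α) : Prop :=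
  ∀ U ∈ nhds z, ∃ V : Set α, IsClopen V ∧ z ∈ V ∧ V ⊆ U
/-- `L₀^φ = {(x,y) : x ∈ C, 0 ≤ y ≤ φ(x)}`, over the Cantor set. -/
def L0 (φ : ℝ → ℝ) : Set (ℝ × ℝ) :=
  {q | q.1 ∈ cantorSet ∧ 0 ≤ q.2 ∧ q.2 ≤ φ q.1}

/-- `G₀^φ = {(x,φ(x)) : x ∈ C, φ(x) > 0}`, over the Cantor set. -/
def G0 (φ : ℝ → ℝ) : Set (ℝ × ℝ) :=
  {q | q.1 ∈ cantorSet ∧ 0 < q.2 ∧ q.2 = φ q.1}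

/-- The setoid on `L₀^φ` identifying the set `C × {0}` to a point. -/
def L0Setoid (φ : ℝ → ℝ) : Setoid (L0 φ) where
  r a b := a = b ∨ ((a : ℝ × ℝ).2 = 0 ∧ (b : ℝ × ℝ).2 = 0)
  iseqv := by
    constructor
    · exact fun _ => Or.inl rfl
    · rintro a b (rfl | ⟨h1, h2⟩)
      · exact Or.inl rfl
      · exact Or.inr ⟨h2, h1⟩
    · rintro a b c (rfl | ⟨h1, h2⟩) (rfl | ⟨h3, h4⟩)
      · exact Or.inl rfl
      · exact Or.inr ⟨h3, h4⟩
      · exact Or.inr ⟨h1, h2⟩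
      · exact Or.inr ⟨h1, h4⟩

/-- The quotient space `L₀^φ / (C × {0})`. -/
def L0Quot (φ : ℝ → ℝ) : Type := Quotient (L0Setoid φ)

instance (φ : ℝ → ℝ) : TopologicalSpace (L0Quot φ) :=
  inferInstanceAs (TopologicalSpace (Quotient (L0Setoid φ)))

/-- The quotient projection `L₀^φ → L₀^φ / (C × {0})`. -/
def L0Proj (φ : ℝ → ℝ) : L0 φ → L0Quot φ := Quotient.mk (L0Setoid φ)

/-- The setoid on `E × [0,1]` identifying `E × {0}` to a point. -/
def coneSetoid (E : Type*) : Setoid (E × Set.Icc (0:ℝ) 1) where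
  r a b := a = b ∨ ((a.2 : ℝ) = 0 ∧ (b.2 : ℝ) = 0)
  iseqv := by
    constructor
    · exact fun _ => Or.inl rfl
    · rintro a b (rfl | ⟨h1, h2⟩)
      · exact Or.inl rfl
      · exact Or.inr ⟨h2, h1⟩
    · rintro a b c (rfl | ⟨h1, h2⟩) (rfl | ⟨h3, h4⟩)
      · exact Or.inl rfl
      · exact Or.inr ⟨h3, h4⟩
      · exact Or.inr ⟨h1, h2⟩
      · exact Or.inr ⟨h1, h4⟩

/-- The cone over a space `E`: the quotient `(E × [0,1]) / (E × {0})`. -/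
def Cone (E : Type*) [TopologicalSpace E] : Type _ := Quotient (coneSetoid E)

instance (E : Type*) [TopologicalSpace E] : TopologicalSpace (Cone E) :=
  inferInstanceAs (TopologicalSpace (Quotient (coneSetoid E)))

/-- A point of the one-point compactification of the disjoint union of the fans `X i`
is to be glued iff it is `∞` or the vertex of one of the fans. -/
def isGluedPoint {ι : Type*} (X : ι → Set (ℝ × ℝ)) :
    OnePoint (Σ i : ι, X i) → Prop :=
  fun a => a.elim True (fun q => (q.2 : ℝ × ℝ) = fanVertex)

/-- The setoid gluing the vertices (and the point at infinity) of the fans `X i`. -/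
def fanSumSetoid {ι : Type*} (X : ι → Set (ℝ × ℝ)) :
    Setoid (OnePoint (Σ i : ι, X i)) where
  r a b := a = b ∨ (isGluedPoint X a ∧ isGluedPoint X b)
  iseqv := by
    constructor
    · exact fun _ => Or.inl rfl
    · rintro a b (rfl | ⟨h1, h2⟩)
      · exact Or.inl rfl
      · exact Or.inr ⟨h2, h1⟩
    · rintro a b c (rfl | ⟨h1, h2⟩) (rfl | ⟨h3, h4⟩)
      · exact Or.inl rfl
      · exact Or.inr ⟨h3, h4⟩
      · exact Or.inr ⟨h1, h2⟩
      · exact Or.inr ⟨h1, h4⟩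

/-- The sum `Σᵢ Xᵢ` of a (finite or countably infinite) family of smooth fans: the quotient of
the one-point compactification of their disjoint union identifying the set consisting of all
the vertices and the point at infinity to a single point.  (For a finite family, `∞` is an
isolated point which is absorbed by the vertex class, so this agrees with the quotient of the
plain disjoint union identifying the vertices.) -/
def FanSum {ι : Type*} (X : ι → Set (ℝ × ℝ)) : Type _ := Quotient (fanSumSetoid X)

instance {ι : Type*} (X : ι → Set (ℝ × ℝ)) : TopologicalSpace (FanSum X) :=
  inferInstanceAs (TopologicalSpace (Quotient (fanSumSetoid X)))

/-- The image of the endpoint set of `X` inside `X'` under the map `g : X → X'`,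
viewed as a subset of the plane. -/
def imageOfEndpoints (X X' : Set (ℝ × ℝ)) (g : ↥X → ↥X') : Set (ℝ × ℝ) :=
  (fun x : X => ((g x : X') : ℝ × ℝ)) '' {x : X | (x : ℝ × ℝ) ∈ Endpoints X}

/-- `X'` is a `𝒦`-fan in which `X` embeds via `g`, with (the image of) `E(X)` contained in
`E(X')`. -/
structure IsKFanExtension (K : ℕ → Set ℝ) (X X' : Set (ℝ × ℝ)) (e : ℕ → ℝ × ℝ)
    (g : ↥X → ↥X') : Prop where
  kfan : IsKFan K X' e
  embedding : Topology.IsEmbedding g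
  endpoints_subset : ∀ x : X, (x : ℝ × ℝ) ∈ Endpoints X →
    ((g x : X') : ℝ × ℝ) ∈ Endpoints X'

/-! ### Continued fractions and the irrationals -/

/-- The sequence with its first term dropped. -/
def cfShift (α : ℕ → ℕ) : ℕ → ℕ := fun n => α (n + 1)

/-- The finite continued fraction `1/(α₀+1+1/(α₁+1+⋯+y))` with `n` steps and tail `y`. -/
def cfPart : ℕ → (ℕ → ℕ) → ℝ → ℝ
  | 0, _, y => y
  | n + 1, α, y => 1 / (α 0 + 1 + cfPart n (cfShift α) y)

lemma cfPart_mem (n : ℕ) (α : ℕ → ℕ) {y : ℝ} (hy : y ∈ Icc (0:ℝ) 1) :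
    cfPart n α y ∈ Icc (0:ℝ) 1 := by
  induction n generalizing α with
  | zero => exact hy
  | succ n ih =>
    obtain ⟨h0, h1⟩ := ih (cfShift α)
    have h2 : (0:ℝ) ≤ α 0 := Nat.cast_nonneg _
    simp only [cfPart]
    constructor
    · positivity
    · rw [div_le_one (by positivity)]; linarith

lemma cfPart_add (n m : ℕ) (α : ℕ → ℕ) (y : ℝ) :
    cfPart (n + m) α y = cfPart n α (cfPart m (cfShift^[n] α) y) := by
  induction n generalizing α with
  | zero => simp [cfPart]
  | succ n ih =>
    rw [show n + 1 + m = (n + m) + 1 by ring]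
    simp only [cfPart, Function.iterate_succ, Function.comp]
    rw [ih]

lemma cf_step (a : ℕ) {y z : ℝ} (hy : 0 ≤ y) (hz : 0 ≤ z) :
    |1 / ((a:ℝ) + 1 + y) - 1 / ((a:ℝ) + 1 + z)| ≤ |y - z| := by
  have h2 : (0:ℝ) ≤ a := Nat.cast_nonneg _
  rw [div_sub_div _ _ (by positivity) (by positivity), abs_div]
  rw [show (1 * ((a:ℝ) + 1 + z) - (a + 1 + y) * 1) = -(y - z) by ring, abs_neg]
  apply div_le_self (abs_nonneg _)
  rw [abs_of_pos (by positivity)]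
  nlinarith [mul_nonneg h2 hy, mul_nonneg h2 hz, mul_nonneg hy hz]

/-- Two steps of the continued fraction contract distances by the factor `1 / 4`; a single step need
not contract. -/
lemma cf_step2 (a b : ℕ) {y z : ℝ} (hy : 0 ≤ y) (hz : 0 ≤ z) :
    |1 / ((a:ℝ) + 1 + 1 / ((b:ℝ) + 1 + y)) - 1 / ((a:ℝ) + 1 + 1 / ((b:ℝ) + 1 + z))|
      ≤ |y - z| / 4 := by
  have ha : (0:ℝ) ≤ a := Nat.cast_nonneg _
  have hb : (0:ℝ) ≤ b := Nat.cast_nonneg _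
  have e : ∀ w : ℝ, 0 ≤ w → 1 / ((a:ℝ) + 1 + 1 / ((b:ℝ) + 1 + w))
      = (b + 1 + w) / ((a + 1) * (b + 1 + w) + 1) := by
    intro w hw
    have : (b:ℝ) + 1 + w ≠ 0 := by positivity
    have : ((a:ℝ) + 1) * (b + 1 + w) + 1 ≠ 0 := by positivity
    have h3 : (a:ℝ) + 1 + 1 / ((b:ℝ) + 1 + w) ≠ 0 := by positivity
    field_simp
  rw [e y hy, e z hz, div_sub_div _ _ (by positivity) (by positivity), abs_div]
  rw [show ((b:ℝ) + 1 + y) * ((a + 1) * (b + 1 + z) + 1) - ((a + 1) * (b + 1 + y) + 1) * (b + 1 + z)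
    = y - z by ring]
  apply div_le_div_of_nonneg_left (abs_nonneg _) (by norm_num)
  rw [abs_of_pos (by positivity)]
  have h1 : (2:ℝ) ≤ (a + 1) * (b + 1 + y) + 1 := by
    nlinarith [mul_nonneg ha hb, mul_nonneg ha hy]
  have h2 : (2:ℝ) ≤ (a + 1) * (b + 1 + z) + 1 := by
    nlinarith [mul_nonneg ha hb, mul_nonneg ha hz]
  nlinarith

lemma cfPart_dist (n : ℕ) (α : ℕ → ℕ) {y z : ℝ} (hy : y ∈ Icc (0:ℝ) 1) (hz : z ∈ Icc (0:ℝ) 1) :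
    |cfPart n α y - cfPart n α z| ≤ 2 * (1 / 2) ^ n := by
  induction n using Nat.twoStepInduction generalizing α with
  | zero =>
    simp only [cfPart]
    rw [abs_le]; constructor <;> norm_num <;> linarith [hy.1, hy.2, hz.1, hz.2]
  | one =>
    simp only [cfPart]
    refine (cf_step _ hy.1 hz.1).trans ?_
    rw [abs_le]; constructor <;> norm_num <;> linarith [hy.1, hy.2, hz.1, hz.2]
  | more n ih _ =>
    simp only [cfPart]
    refine (cf_step2 _ _ (cfPart_mem n _ hy).1 (cfPart_mem n _ hz).1).trans ?_
    have := ih (cfShift (cfShift α))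
    rw [pow_add]; linarith

lemma cf_cauchy (α : ℕ → ℕ) : CauchySeq fun n => cfPart n α 0 := by
  refine cauchySeq_of_le_geometric (1/2) 2 (by norm_num) fun n => ?_
  rw [cfPart_add n 1, Real.dist_eq]
  exact cfPart_dist n α (by simp) (cfPart_mem _ _ (by simp))

/-- The value of the infinite continued fraction `1/(α₀+1+1/(α₁+1+⋯))`. -/
def cfVal (α : ℕ → ℕ) : ℝ := Classical.choose (cauchySeq_tendsto_of_complete (cf_cauchy α))

lemma cfVal_tendsto (α : ℕ → ℕ) : Filter.Tendsto (fun n => cfPart n α 0) Filter.atTop (𝓝 (cfVal α)) :=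
  Classical.choose_spec (cauchySeq_tendsto_of_complete (cf_cauchy α))

lemma cfVal_mem_Icc (α : ℕ → ℕ) : cfVal α ∈ Icc (0:ℝ) 1 :=
  isClosed_Icc.mem_of_tendsto (cfVal_tendsto α)
    (Filter.Eventually.of_forall fun n => cfPart_mem n α (by simp))

lemma cfVal_eq (α : ℕ → ℕ) : cfVal α = 1 / (α 0 + 1 + cfVal (cfShift α)) := by
  have h1 := (Filter.tendsto_add_atTop_iff_nat 1).2 (cfVal_tendsto α)
  have h2 := (cfVal_tendsto (cfShift α)).const_add ((α 0 : ℝ) + 1)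
  have h3 : (α 0 : ℝ) + 1 + cfVal (cfShift α) ≠ 0 := by
    have := (cfVal_mem_Icc (cfShift α)).1; positivity
  exact tendsto_nhds_unique h1 (tendsto_const_nhds.div h2 h3)

lemma cfVal_pos (α : ℕ → ℕ) : 0 < cfVal α := by
  rw [cfVal_eq]; have := (cfVal_mem_Icc (cfShift α)).1; positivity

lemma cfVal_lt_one (α : ℕ → ℕ) : cfVal α < 1 := by
  rw [cfVal_eq]
  have := cfVal_pos (cfShift α)
  rw [div_lt_one (by positivity)]
  have : (0:ℝ) ≤ α 0 := Nat.cast_nonneg _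
  linarith

/-- Infinite descent on the denominator: removing the first digit of a rational value gives a
rational with a smaller denominator. -/
lemma cfVal_irrational (α : ℕ → ℕ) : Irrational (cfVal α) := by
  -- passing to the tail replaces a fraction `p / q` by one with the smaller denominator `p`
  have key : ∀ (q : ℕ) (α : ℕ → ℕ) (p : ℤ), 0 < q → cfVal α ≠ p / q := by
    intro q
    induction q using Nat.strong_induction_on with
    | _ q ih =>
      intro α p hq h
      have hq' : (0:ℝ) < q := by exact_mod_cast hq
      have h0 := cfVal_pos α
      have h1 := cfVal_lt_one α
      have hp : 0 < p := by
        have : (0:ℝ) < p := by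
          rw [h] at h0; rwa [lt_div_iff₀ hq', zero_mul] at h0
        exact_mod_cast this
      have hpq : p < q := by
        have : (p:ℝ) < q := by rw [h] at h1; rwa [div_lt_one hq'] at h1
        exact_mod_cast this
      obtain ⟨r, rfl⟩ := Int.eq_ofNat_of_zero_le hp.le
      have hr' : (0:ℝ) < r := by exact_mod_cast hp
      refine ih r (by exact_mod_cast hpq) (cfShift α) (q - (α 0 + 1) * r) (by exact_mod_cast hp) ?_
      have e := cfVal_eq α
      rw [h] at e
      have hs := cfVal_pos (cfShift α)
      push_cast at e ⊢
      have h3 : (α 0 : ℝ) + 1 + cfVal (cfShift α) ≠ 0 := by positivity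
      rw [div_eq_div_iff hq'.ne' h3] at e
      rw [eq_div_iff hr'.ne']
      linarith
  rintro ⟨x, hx⟩
  refine key x.den α x.num x.den_pos ?_
  rw [← hx]; exact_mod_cast (Rat.num_div_den x).symm

/-- The irrationals of the unit interval. -/
abbrev IrrUnit : Type := {x : ℝ // x ∈ Ioo (0:ℝ) 1 ∧ Irrational x}

lemma fract_irr {x : ℝ} (hx : Irrational x) :
    Int.fract x ∈ Ioo (0:ℝ) 1 ∧ Irrational (Int.fract x) := by
  have h : Irrational (Int.fract x) := by
    rw [Int.fract]; exact hx.sub_intCast _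
  exact ⟨⟨lt_of_le_of_ne (Int.fract_nonneg x) (by simpa using (h.ne_int 0).symm),
    Int.fract_lt_one x⟩, h⟩

/-- The Gauss map `x ↦ fract (1/x)`. -/
def gauss (x : IrrUnit) : IrrUnit :=
  ⟨Int.fract (x.1)⁻¹, fract_irr (irrational_inv_iff.2 x.2.2)⟩

/-- The leading continued fraction digit, shifted so that it ranges over all of `ℕ`. -/
def cfDigit (x : IrrUnit) : ℕ := (⌊(x.1)⁻¹⌋ - 1).toNat

lemma gauss_spec (x : IrrUnit) : x.1 = 1 / (cfDigit x + 1 + (gauss x).1) := by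
  have h0 := x.2.1.1
  have h1 : 1 ≤ ⌊(x.1)⁻¹⌋ := by
    rw [Int.le_floor]; exact_mod_cast (one_le_inv₀ h0).2 x.2.1.2.le
  have h2 : ((cfDigit x : ℕ) : ℝ) = ⌊(x.1)⁻¹⌋ - 1 := by
    have : ((cfDigit x : ℕ) : ℤ) = ⌊(x.1)⁻¹⌋ - 1 := Int.toNat_of_nonneg (by omega)
    exact_mod_cast this
  rw [h2]
  simp only [gauss, Int.fract]
  rw [show ((⌊(x.1)⁻¹⌋:ℝ) - 1 + 1 + ((x.1)⁻¹ - ⌊(x.1)⁻¹⌋)) = (x.1)⁻¹ by ring]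
  simp

/-- The sequence of continued fraction digits. -/
def cfDigits (x : IrrUnit) : ℕ → ℕ := fun n => cfDigit (gauss^[n] x)

lemma cfPart_digits (n : ℕ) (x : IrrUnit) : cfPart n (cfDigits x) (gauss^[n] x).1 = x.1 := by
  induction n generalizing x with
  | zero => rfl
  | succ n ih =>
    have h : cfShift (cfDigits x) = cfDigits (gauss x) := by
      funext k; simp [cfShift, cfDigits]
    simp only [cfPart, h, Function.iterate_succ, Function.comp]
    rw [ih (gauss x), gauss_spec x]; rfl

lemma cfVal_digits (x : IrrUnit) : cfVal (cfDigits x) = x.1 := by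
  refine tendsto_nhds_unique (cfVal_tendsto _) ?_
  rw [tendsto_iff_dist_tendsto_zero]
  refine squeeze_zero (fun _ => dist_nonneg) (fun n => ?_) (g := fun n => 2 * (1/2 : ℝ) ^ n) ?_
  · rw [Real.dist_eq]
    have h := cfPart_dist n (cfDigits x) (y := 0) (z := (gauss^[n] x).1) (by simp)
      ⟨(gauss^[n] x).2.1.1.le, (gauss^[n] x).2.1.2.le⟩
    rwa [cfPart_digits] at h
  · simpa using (tendsto_pow_atTop_nhds_zero_of_lt_one (r := (1/2:ℝ)) (by norm_num)
      (by norm_num)).const_mul 2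

/-- A continued fraction as a point of the irrationals of the unit interval. -/
def cfPoint (α : ℕ → ℕ) : IrrUnit :=
  ⟨cfVal α, ⟨cfVal_pos α, cfVal_lt_one α⟩, cfVal_irrational α⟩

lemma cfPoint_inv (α : ℕ → ℕ) : (cfVal α)⁻¹ = ((α 0 + 1 : ℤ) : ℝ) + cfVal (cfShift α) := by
  rw [cfVal_eq α]; push_cast; simp

lemma cf_floor (α : ℕ → ℕ) : ⌊(cfVal α)⁻¹⌋ = α 0 + 1 := by
  rw [cfPoint_inv, Int.floor_intCast_add,
    Int.floor_eq_zero_iff.2 ⟨(cfVal_pos _).le, cfVal_lt_one _⟩, add_zero]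

lemma cfDigit_point (α : ℕ → ℕ) : cfDigit (cfPoint α) = α 0 := by
  simp only [cfDigit, cfPoint, cf_floor]; omega

lemma gauss_point (α : ℕ → ℕ) : gauss (cfPoint α) = cfPoint (cfShift α) := by
  apply Subtype.ext
  simp only [gauss, cfPoint]
  rw [cfPoint_inv, Int.fract_intCast_add,
    Int.fract_eq_self.2 ⟨(cfVal_pos _).le, cfVal_lt_one _⟩]

lemma cfDigits_point (α : ℕ → ℕ) : cfDigits (cfPoint α) = α := by
  funext n
  simp only [cfDigits]
  induction n generalizing α with
  | zero => exact cfDigit_point α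
  | succ n ih => rw [Function.iterate_succ, Function.comp, gauss_point, ih]; rfl

lemma continuous_floor_irr {Z : Type*} [TopologicalSpace Z] {f : Z → ℝ} (hf : Continuous f)
    (hi : ∀ z, Irrational (f z)) : Continuous fun z => ⌊f z⌋ := by
  rw [continuous_iff_continuousAt]
  intro z
  rw [ContinuousAt, nhds_discrete ℤ, Filter.tendsto_pure]
  have h : Ioo ((⌊f z⌋ : ℤ) : ℝ) (⌊f z⌋ + 1) ∈ 𝓝 (f z) := by
    refine Ioo_mem_nhds (lt_of_le_of_ne (Int.floor_le _) ?_) (Int.lt_floor_add_one _)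
    exact ((hi z).ne_int _).symm
  filter_upwards [hf.continuousAt h] with w hw
  exact Int.floor_eq_iff.2 ⟨hw.1.le, hw.2⟩

lemma continuous_fract_irr {Z : Type*} [TopologicalSpace Z] {f : Z → ℝ} (hf : Continuous f)
    (hi : ∀ z, Irrational (f z)) : Continuous fun z => Int.fract (f z) :=
  hf.sub ((continuous_of_discreteTopology (f := fun n : ℤ => (n:ℝ))).comp
    (continuous_floor_irr hf hi))

lemma continuous_inv_irr : Continuous fun x : IrrUnit => (x.1)⁻¹ :=
  continuous_subtype_val.inv₀ fun x => x.2.1.1.ne'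

lemma continuous_gauss : Continuous gauss :=
  (continuous_fract_irr continuous_inv_irr fun x => irrational_inv_iff.2 x.2.2).subtype_mk _

lemma continuous_cfDigits : Continuous cfDigits := by
  refine continuous_pi fun n => ?_
  have h : Continuous cfDigit :=
    (continuous_of_discreteTopology (f := fun k : ℤ => (k - 1).toNat)).comp
      (continuous_floor_irr continuous_inv_irr fun x => irrational_inv_iff.2 x.2.2)
  exact h.comp (continuous_gauss.iterate n)

lemma cfPart_congr (n : ℕ) {α β : ℕ → ℕ} (h : ∀ k < n, α k = β k) (y : ℝ) :
    cfPart n α y = cfPart n β y := by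
  induction n generalizing α β with
  | zero => rfl
  | succ n ih =>
    simp only [cfPart]
    rw [h 0 (by omega), ih (α := cfShift α) (β := cfShift β) fun k hk => h (k+1) (by omega)]

lemma cfVal_mem_part (n : ℕ) (α : ℕ → ℕ) : |cfVal α - cfPart n α 0| ≤ 2 * (1/2)^n := by
  have h := cfPart_digits n (cfPoint α)
  rw [cfDigits_point] at h
  have h' : cfVal α = cfPart n α (gauss^[n] (cfPoint α)).1 := h.symm
  rw [h']
  exact cfPart_dist n α ⟨(gauss^[n] (cfPoint α)).2.1.1.le, (gauss^[n] (cfPoint α)).2.1.2.le⟩ (by simp)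

lemma continuous_cfVal : Continuous cfVal := by
  refine continuous_of_uniform_approx_of_continuous ?_
  intro u hu
  obtain ⟨ε, hε, hu⟩ := Metric.mem_uniformity_dist.1 hu
  obtain ⟨n, hn⟩ := exists_pow_lt_of_lt_one (show 0 < ε / 2 by linarith) (show (1/2:ℝ) < 1 by norm_num)
  refine ⟨fun α => cfPart n α 0, ?_, fun α => hu ?_⟩
  · -- a finite continued fraction depends only on the first `n` digits
    rw [continuous_iff_continuousAt]
    intro α
    have : ∀ᶠ β in 𝓝 α, ∀ k < n, β k = α k := by
      have h := (Filter.eventually_all_finite (Finset.range n).finite_toSet).2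
        (fun k _ => ((continuous_apply k).tendsto α).eventually
          (IsOpen.mem_nhds (isOpen_discrete {α k}) rfl))
      filter_upwards [h] with β hβ k hk using hβ k (by simpa using hk)
    refine Filter.Tendsto.congr' (f₁ := fun _ => cfPart n α 0) ?_ tendsto_const_nhds
    filter_upwards [this] with β hβ using (cfPart_congr n hβ 0).symm
  · rw [Real.dist_eq]
    exact (cfVal_mem_part n α).trans_lt (by linarith)

/-- Continued fractions identify Baire space with the irrationals of the unit interval. -/
def baireHomeoIrrUnit : (ℕ → ℕ) ≃ₜ IrrUnit where
  toFun := cfPoint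
  invFun := cfDigits
  left_inv := cfDigits_point
  right_inv x := Subtype.ext (cfVal_digits x)
  continuous_toFun := continuous_cfVal.subtype_mk _
  continuous_invFun := continuous_cfDigits

/-- Integer and fractional part. -/
def irrHomeoProd : {x : ℝ // Irrational x} ≃ₜ ℤ × IrrUnit where
  toFun x := (⌊x.1⌋, ⟨Int.fract x.1, fract_irr x.2⟩)
  invFun p := ⟨p.1 + p.2.1, p.2.2.2.intCast_add _⟩
  left_inv x := Subtype.ext (Int.floor_add_fract x.1)
  right_inv p := by
    have h0 := p.2.2.1
    refine Prod.ext ?_ (Subtype.ext ?_)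
    · simp only [Int.floor_intCast_add, Int.floor_eq_zero_iff.2 ⟨h0.1.le, h0.2⟩, add_zero]
    · simp only [Int.fract_intCast_add, Int.fract_eq_self.2 ⟨h0.1.le, h0.2⟩]
  continuous_toFun := (continuous_floor_irr continuous_subtype_val fun x => x.2).prodMk
    ((continuous_fract_irr continuous_subtype_val fun x => x.2).subtype_mk _)
  continuous_invFun := (((continuous_of_discreteTopology (f := fun n : ℤ => (n:ℝ))).comp
    continuous_fst).add (continuous_subtype_val.comp continuous_snd)).subtype_mk _

/-- `ℕ × ℕ^ℕ` is `ℤ × ℕ^ℕ`, hence the space of irrationals. -/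
theorem nat_prod_baire_homeo_irrational :
    Nonempty ((ℕ × (ℕ → ℕ)) ≃ₜ {x : ℝ // Irrational x}) := by
  obtain ⟨e⟩ : Nonempty (ℕ ≃ ℤ) := ⟨(Denumerable.eqv ℤ).symm⟩
  have e' : ℕ ≃ₜ ℤ := ⟨e, continuous_of_discreteTopology, continuous_of_discreteTopology⟩
  exact ⟨(e'.prodCongr baireHomeoIrrUnit).trans irrHomeoProd.symm⟩

/-! ### Fans as subgraphs of height functions -/

section Geometry

variable {A : Type*} [TopologicalSpace A]

/-- The point at height `p.2` of the leg of the Cantor fan over the code `p.1`. Codes are taken in any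
space `A` identified with the Cantor set. At height `0` this is the vertex, for every code. -/
def ray (Θ : A ≃ₜ cantorSet) (p : A × ℝ) : ℝ × ℝ := (p.2 * (Θ p.1 : ℝ), p.2)

/-- The subset of the Cantor fan cut out by the height function `φ`. -/
def fanOf (Θ : A ≃ₜ cantorSet) (φ : A → ℝ) : Set (ℝ × ℝ) :=
  ray Θ '' {p | 0 ≤ p.2 ∧ p.2 ≤ φ p.1}

/-- Height functions of fans: values in `[0,1]`, and upper semicontinuous, which is expressed by saying
that the set below the graph is closed. -/
structure IsProfile (φ : A → ℝ) : Prop where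
  nonneg : ∀ a, 0 ≤ φ a
  le_one : ∀ a, φ a ≤ 1
  closed : IsClosed {p : A × ℝ | p.2 ≤ φ p.1}

lemma continuous_ray (Θ : A ≃ₜ cantorSet) : Continuous (ray Θ) := by
  unfold ray
  exact (continuous_snd.mul (continuous_subtype_val.comp (Θ.continuous.comp continuous_fst))).prodMk
    continuous_snd

@[simp] lemma ray_snd (Θ : A ≃ₜ cantorSet) (p : A × ℝ) : (ray Θ p).2 = p.2 := rfl

lemma ray_zero (Θ : A ≃ₜ cantorSet) (a : A) : ray Θ (a, 0) = fanVertex := by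
  simp [ray, fanVertex]

lemma ray_inj (Θ : A ≃ₜ cantorSet) {p q : A × ℝ} (h : ray Θ p = ray Θ q) (hp : p.2 ≠ 0) : p = q := by
  have h2 : p.2 = q.2 := congrArg (fun q : ℝ × ℝ => q.2) h
  have h1 : p.2 * (Θ p.1 : ℝ) = q.2 * (Θ q.1 : ℝ) := congrArg (fun q : ℝ × ℝ => q.1) h
  rw [← h2] at h1
  exact Prod.ext (Θ.injective (Subtype.ext (mul_left_cancel₀ hp h1))) h2

lemma ray_ne_vertex (Θ : A ≃ₜ cantorSet) {p : A × ℝ} (hp : p.2 ≠ 0) : ray Θ p ≠ fanVertex :=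
  fun h => hp (congrArg (fun q : ℝ × ℝ => q.2) h)

lemma compactSpace_code (Θ : A ≃ₜ cantorSet) : CompactSpace A := by
  have : CompactSpace cantorSet := isCompact_iff_compactSpace.1 isCompact_cantorSet
  exact Θ.symm.compactSpace

lemma t2Space_code (Θ : A ≃ₜ cantorSet) : T2Space A := Θ.symm.t2Space

lemma totallyDisconnected_code (Θ : A ≃ₜ cantorSet) : TotallyDisconnectedSpace A := by
  let e := Θ.trans cantorSetHomeomorphNatToBool
  exact e.symm.totallyDisconnectedSpace

/-- Above the height `0` the leg coordinates can be recovered continuously, so closures may be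
computed upstairs. -/
lemma mem_closure_ray (Θ : A ≃ₜ cantorSet) {T : Set (A × ℝ)} {q : ℝ × ℝ}
    (hq : q ∈ closure (ray Θ '' T)) (h0 : 0 < q.2) :
    ∃ p ∈ closure T, ray Θ p = q := by
  obtain ⟨u, hu, hlim⟩ := mem_closure_iff_seq_limit.1 hq
  choose p hpT hpu using hu
  have h2 : Filter.Tendsto (fun n => (p n).2) Filter.atTop (𝓝 q.2) := by
    have := (continuous_snd.tendsto q).comp hlim
    refine this.congr fun n => ?_
    simp [← hpu]
  have h1 : Filter.Tendsto (fun n => ((Θ (p n).1 : cantorSet) : ℝ)) Filter.atTop (𝓝 (q.1 / q.2)) := by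
    have h := ((continuous_fst.tendsto q).comp hlim).div h2 h0.ne'
    refine h.congr' ?_
    filter_upwards [h2.eventually (lt_mem_nhds h0)] with n hn
    simp only [Function.comp, ← hpu, ray, Pi.div_apply]
    field_simp
  have hc : q.1 / q.2 ∈ cantorSet :=
    isClosed_cantorSet.mem_of_tendsto h1 (Filter.Eventually.of_forall fun n => (Θ (p n).1).2)
  have h3 : Filter.Tendsto (fun n => Θ (p n).1) Filter.atTop (𝓝 (⟨_, hc⟩ : cantorSet)) :=
    tendsto_subtype_rng.2 h1
  have h4 : Filter.Tendsto (fun n => (p n).1) Filter.atTop (𝓝 (Θ.symm ⟨_, hc⟩)) := by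
    have := (Θ.symm.continuous.tendsto _).comp h3
    simpa [Function.comp_def] using this
  refine ⟨(Θ.symm ⟨_, hc⟩, q.2), mem_closure_of_tendsto (h4.prodMk_nhds h2)
    (Filter.Eventually.of_forall hpT), ?_⟩
  simp only [ray, Homeomorph.apply_symm_apply]
  exact Prod.ext (by field_simp) rfl

lemma ray_mem_closure (Θ : A ≃ₜ cantorSet) {T : Set (A × ℝ)} {p : A × ℝ} (hp : p ∈ closure T) :
    ray Θ p ∈ closure (ray Θ '' T) :=
  image_closure_subset_closure_image (continuous_ray Θ) ⟨p, hp, rfl⟩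

lemma cantorFan_eq (Θ : A ≃ₜ cantorSet) : CantorFan = fanOf Θ (fun _ => 1) := by
  ext q
  constructor
  · rintro ⟨c, hc, t, ht, rfl⟩
    exact ⟨(Θ.symm ⟨c, hc⟩, t), ⟨ht.1, ht.2⟩, by simp [ray]⟩
  · rintro ⟨⟨a, t⟩, ht, rfl⟩
    exact ⟨Θ a, (Θ a).2, t, ⟨ht.1, ht.2⟩, rfl⟩

/-- A connected closed subset of the Cantor fan which misses a point of a leg, but contains a point
of the same leg further away from the vertex, is contained in the part of that leg beyond the missed
point: a clopen neighborhood of the leg in code space cuts off everything else. -/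
lemma leg_cut (Θ : A ≃ₜ cantorSet) {S : Set (ℝ × ℝ)} (hS : S ⊆ CantorFan) (hc : IsClosed S)
    (hcon : IsPreconnected S) {a : A} {s t : ℝ} (hs : 0 < s) (hst : s < t)
    (hmiss : ray Θ (a, s) ∉ S) (hmem : ray Θ (a, t) ∈ S) :
    ∀ q ∈ S, ∃ r, s < r ∧ q = ray Θ (a, r) := by
  have := compactSpace_code Θ
  have := t2Space_code Θ
  have := totallyDisconnected_code Θ
  intro q hq
  rw [cantorFan_eq Θ] at hS
  obtain ⟨⟨b, r⟩, ⟨hr0, hr1⟩, rfl⟩ := hS hq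
  by_contra hcontra
  push Not at hcontra
  have hbr : s < r → b ≠ a := fun h hb => hcontra r h (by rw [hb])
  have hO : IsOpen {a' : A | ray Θ (a', s) ∉ S ∧ (s < r → a' ≠ b)} := by
    refine IsOpen.inter ?_ ?_
    · exact (hc.preimage ((continuous_ray Θ).comp (by fun_prop : Continuous fun a' : A => (a', s)))).isOpen_compl
    · by_cases h : s < r
      · simp only [h, forall_const]
        exact (isClosed_singleton (x := b)).isOpen_compl
      · simp only [h, false_imp_iff]
        exact isOpen_const
  obtain ⟨U, hUc, haU, hUO⟩ := compact_exists_isClopen_in_isOpen hO ⟨hmiss, fun h => (hbr h).symm⟩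
  -- the part of the fan over `U` above height `s` is separated from the rest
  let C1 : Set (A × ℝ) := U ×ˢ Icc s 1
  let C2 : Set (A × ℝ) := (univ ×ˢ Icc 0 s) ∪ (Uᶜ ×ˢ Icc 0 1)
  have k1 : IsClosed (ray Θ '' C1) :=
    ((hUc.isClosed.isCompact.prod isCompact_Icc).image (continuous_ray Θ)).isClosed
  have k2 : IsClosed (ray Θ '' C2) :=
    (((isCompact_univ.prod isCompact_Icc).union
      (hUc.compl.isClosed.isCompact.prod isCompact_Icc)).image (continuous_ray Θ)).isClosed
  have hcov : S ⊆ ray Θ '' C1 ∪ ray Θ '' C2 := by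
    intro x hx
    obtain ⟨⟨a', t'⟩, ⟨h0, h1⟩, rfl⟩ := hS hx
    simp only at h0 h1
    by_cases h : s ≤ t'
    · by_cases hU : a' ∈ U
      · exact Or.inl ⟨_, ⟨hU, h, h1⟩, rfl⟩
      · exact Or.inr ⟨(a', t'), Or.inr ⟨hU, h0, h1⟩, rfl⟩
    · exact Or.inr ⟨_, Or.inl ⟨trivial, h0, (not_le.1 h).le⟩, rfl⟩
  have ht1 : t ≤ 1 := by
    obtain ⟨⟨a', t'⟩, ⟨h0, h1⟩, he⟩ := hS hmem
    have : t' = t := congrArg Prod.snd he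
    simp only at h1; linarith
  obtain ⟨x, hxS, ⟨⟨a1, t1⟩, ⟨hU1, h1, h1'⟩, rfl⟩, ⟨⟨a2, t2⟩, h2, he⟩⟩ :=
    isPreconnected_closed_iff.1 hcon _ _ k1 k2 hcov
      ⟨_, hmem, _, ⟨haU, hst.le, ht1⟩, rfl⟩
      ⟨_, hq, (b, r), by
        by_cases h : s < r
        · exact Or.inr ⟨fun hb => (hUO hb).2 h rfl, hr0, hr1⟩
        · exact Or.inl ⟨trivial, hr0, not_lt.1 h⟩, rfl⟩
  simp only at hU1 h1 h1'
  have heq := ray_inj Θ he.symm (by simp only; linarith)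
  obtain ⟨rfl, rfl⟩ := Prod.mk.inj heq
  rcases h2 with ⟨-, -, h⟩ | ⟨h, -⟩
  · simp only at h
    have : t1 = s := le_antisymm h h1
    subst this
    exact (hUO hU1).1 hxS
  · exact h hU1

lemma isArc_leg (Θ : A ≃ₜ cantorSet) (a : A) {t u : ℝ} (h : t ≠ u) :
    IsArc ((fun r => ray Θ (a, r)) '' segment ℝ t u) (ray Θ (a, t)) (ray Θ (a, u)) := by
  let f : Icc (0:ℝ) 1 → ℝ × ℝ := fun l => ray Θ (a, t + l * (u - t))
  have hf : Continuous f := (continuous_ray Θ).comp (by fun_prop)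
  have hinj : Function.Injective f := by
    intro l m hlm
    have := congrArg Prod.snd hlm
    simp only [f, ray_snd, add_right_inj] at this
    exact Subtype.ext (mul_right_cancel₀ (sub_ne_zero.2 h.symm) this)
  have hr : range f = (fun r => ray Θ (a, r)) '' segment ℝ t u := by
    rw [segment_eq_image', image_image]
    ext q
    constructor
    · rintro ⟨l, rfl⟩; exact ⟨l, l.2, rfl⟩
    · rintro ⟨l, hl, rfl⟩; exact ⟨⟨l, hl⟩, rfl⟩
  have hemb : IsEmbedding f := (hf.isClosedEmbedding hinj).isEmbedding
  refine ⟨hemb.toHomeomorph.trans (Homeomorph.setCongr hr), ?_, ?_⟩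
  · simp [f, Homeomorph.setCongr, IsEmbedding.toHomeomorph]
  · simp [f, Homeomorph.setCongr, IsEmbedding.toHomeomorph]

lemma leg_subset (Θ : A ≃ₜ cantorSet) {φ : A → ℝ} {a : A} {t u : ℝ} (ht : t ∈ Icc 0 (φ a))
    (hu : u ∈ Icc 0 (φ a)) : (fun r => ray Θ (a, r)) '' segment ℝ t u ⊆ fanOf Θ φ := by
  rintro _ ⟨r, hr, rfl⟩
  have := (convex_Icc 0 (φ a)).segment_subset ht hu hr
  exact ⟨(a, r), this, rfl⟩

lemma orderAtLeast_one {S : Set (ℝ × ℝ)} {x b : ℝ × ℝ} {Γ : Set (ℝ × ℝ)} (h : Γ ⊆ S)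
    (hΓ : IsArc Γ x b) : OrderAtLeast S x 1 :=
  ⟨fun _ => Γ, fun _ => h, fun _ => ⟨b, hΓ⟩, fun i j hij => (hij (Subsingleton.elim i j)).elim⟩

lemma orderAtLeast_two {S : Set (ℝ × ℝ)} {x b c : ℝ × ℝ} {Γ Δ : Set (ℝ × ℝ)} (h : Γ ⊆ S)
    (h' : Δ ⊆ S) (hΓ : IsArc Γ x b) (hΔ : IsArc Δ x c) (hi : Γ ∩ Δ = {x}) :
    OrderAtLeast S x 2 := by
  refine ⟨![Γ, Δ], ?_, ?_, ?_⟩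
  · intro i; fin_cases i
    · exact h
    · exact h'
  · intro i; fin_cases i
    · exact ⟨b, hΓ⟩
    · exact ⟨c, hΔ⟩
  · intro i j hij
    fin_cases i <;> fin_cases j
    · exact absurd rfl hij
    · exact hi
    · simpa [inter_comm] using hi
    · exact absurd rfl hij

lemma mem_leg_iff (Θ : A ≃ₜ cantorSet) {a b : A} {t u r : ℝ} (hr : r ≠ 0) :
    ray Θ (b, r) ∈ (fun r => ray Θ (a, r)) '' segment ℝ t u ↔ b = a ∧ r ∈ segment ℝ t u := by
  constructor
  · rintro ⟨r', hr', he⟩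
    have := ray_inj Θ he.symm hr
    obtain ⟨rfl, rfl⟩ := Prod.mk.inj this
    exact ⟨rfl, hr'⟩
  · rintro ⟨rfl, h⟩
    exact ⟨r, h, rfl⟩

lemma vertex_order_two (Θ : A ≃ₜ cantorSet) {φ : A → ℝ} {a b : A} (hab : a ≠ b) (ha : 0 < φ a)
    (hb : 0 < φ b) : OrderAtLeast (fanOf Θ φ) fanVertex 2 := by
  refine orderAtLeast_two (leg_subset Θ (a := a) (t := 0) (u := φ a) ⟨le_rfl, ha.le⟩ ⟨ha.le, le_rfl⟩)
    (leg_subset Θ (a := b) (t := 0) (u := φ b) ⟨le_rfl, hb.le⟩ ⟨hb.le, le_rfl⟩)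
    (b := ray Θ (a, φ a)) (c := ray Θ (b, φ b)) ?_ ?_ ?_
  · simpa only [ray_zero] using isArc_leg Θ a ha.ne
  · simpa only [ray_zero] using isArc_leg Θ b hb.ne
  · apply Subset.antisymm
    · rintro _ ⟨⟨r, hr, rfl⟩, h⟩
      by_cases h0 : r = 0
      · subst h0; exact ray_zero Θ a
      · exact absurd ((mem_leg_iff Θ h0).1 h).1 hab
    · rintro _ rfl
      exact ⟨⟨0, left_mem_segment ℝ _ _, ray_zero Θ a⟩, ⟨0, left_mem_segment ℝ _ _, ray_zero Θ b⟩⟩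

lemma inner_order_two (Θ : A ≃ₜ cantorSet) {φ : A → ℝ} {a : A} {t : ℝ} (h0 : 0 < t) (ht : t < φ a) :
    OrderAtLeast (fanOf Θ φ) (ray Θ (a, t)) 2 := by
  refine orderAtLeast_two (leg_subset Θ (a := a) (t := t) (u := φ a) ⟨h0.le, ht.le⟩ ⟨by linarith, le_rfl⟩)
    (leg_subset Θ (a := a) (t := t) (u := 0) ⟨h0.le, ht.le⟩ ⟨le_rfl, by linarith⟩)
    (isArc_leg Θ a ht.ne) (isArc_leg Θ a h0.ne') ?_
  apply Subset.antisymm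
  · rintro _ ⟨⟨r, hr, rfl⟩, h⟩
    rw [segment_eq_Icc ht.le] at hr
    have := ((mem_leg_iff Θ (by linarith [hr.1])).1 h).2
    rw [segment_symm, segment_eq_Icc h0.le] at this
    have e : r = t := le_antisymm this.2 hr.1
    subst e; rfl
  · rintro _ rfl
    exact ⟨⟨t, left_mem_segment ℝ _ _, rfl⟩, ⟨t, left_mem_segment ℝ _ _, rfl⟩⟩

lemma IsArc.facts {Γ : Set (ℝ × ℝ)} {x b : ℝ × ℝ} (h : IsArc Γ x b) :
    IsClosed Γ ∧ IsPreconnected Γ ∧ x ∈ Γ ∧ ∃ y ∈ Γ, y ≠ x := by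
  obtain ⟨e, h0, h1⟩ := h
  have hr : Γ = range (fun l => (e l : ℝ × ℝ)) := by
    have : range (fun l => (e l : ℝ × ℝ)) = Subtype.val '' (range e) := by
      rw [← range_comp]; rfl
    rw [this, e.surjective.range_eq, image_univ, Subtype.range_coe]
  have hcont : Continuous (fun l => (e l : ℝ × ℝ)) := continuous_subtype_val.comp e.continuous
  refine ⟨?_, ?_, h0 ▸ (e _).2, e ⟨1, right_mem_Icc.2 zero_le_one⟩, (e _).2, ?_⟩
  · rw [hr]; exact (isCompact_range hcont).isClosed
  · rw [hr]
    exact isPreconnected_range hcont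
  · intro h
    rw [← h0] at h
    have := e.injective (Subtype.ext h)
    simp at this

/-- An arc in a fan issuing from the tip of a leg contains a final piece of that leg. Two such arcs
overlap beyond their common endpoint, so tips have order one. -/
lemma tip_piece (Θ : A ≃ₜ cantorSet) {φ : A → ℝ} (hφ : IsProfile φ) {a : A} (ha : 0 < φ a)
    {Γ : Set (ℝ × ℝ)} {b : ℝ × ℝ} (hΓ : Γ ⊆ fanOf Θ φ) (h : IsArc Γ (ray Θ (a, φ a)) b) :
    ∃ s < φ a, 0 < s ∧ ∀ r, s ≤ r → r < φ a → ray Θ (a, r) ∈ Γ := by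
  obtain ⟨hc, hcon, hx, y, hy, hyx⟩ := h.facts
  have hfan : Γ ⊆ CantorFan := by
    rw [cantorFan_eq Θ]
    refine hΓ.trans ?_
    rintro _ ⟨p, hp, rfl⟩
    exact ⟨p, ⟨hp.1, hp.2.trans (hφ.le_one _)⟩, rfl⟩
  by_cases hleg : ∃ r, 0 < r ∧ y = ray Θ (a, r)
  · obtain ⟨r, hr, rfl⟩ := hleg
    have hrφ : r < φ a := by
      obtain ⟨⟨a', r'⟩, ⟨h0, h1⟩, he⟩ := hΓ hy
      obtain ⟨rfl, rfl⟩ := Prod.mk.inj (ray_inj Θ he.symm hr.ne')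
      refine lt_of_le_of_ne h1 fun (he : r = φ a) => hyx ?_
      rw [he]
    refine ⟨r, hrφ, hr, fun s hs hsφ => ?_⟩
    by_contra hmiss
    obtain ⟨r', hr', he⟩ := leg_cut Θ hfan hc hcon (lt_of_lt_of_le hr hs) hsφ hmiss hx _ hy
    obtain ⟨-, rfl⟩ := Prod.mk.inj (ray_inj Θ he hr.ne')
    linarith
  · refine ⟨φ a / 2, by linarith, by linarith, fun s hs hsφ => ?_⟩
    by_contra hmiss
    obtain ⟨r', hr', he⟩ := leg_cut Θ hfan hc hcon (by linarith) hsφ hmiss hx _ hy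
    exact hleg ⟨r', by linarith, he⟩

lemma tip_not_order_two (Θ : A ≃ₜ cantorSet) {φ : A → ℝ} (hφ : IsProfile φ) {a : A} (ha : 0 < φ a) :
    ¬ OrderAtLeast (fanOf Θ φ) (ray Θ (a, φ a)) 2 := by
  rintro ⟨Γ, hsub, harc, hdisj⟩
  obtain ⟨b, hb⟩ := harc 0
  obtain ⟨c, hc⟩ := harc 1
  obtain ⟨s, hs, hs0, h1⟩ := tip_piece Θ hφ ha (hsub 0) hb
  obtain ⟨s', hs', hs0', h2⟩ := tip_piece Θ hφ ha (hsub 1) hc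
  have hm : max s s' < φ a := max_lt hs hs'
  have : ray Θ (a, max s s') ∈ ({ray Θ (a, φ a)} : Set (ℝ × ℝ)) := by
    rw [← hdisj 0 1 (by simp)]
    exact ⟨h1 _ (le_max_left _ _) hm, h2 _ (le_max_right _ _) hm⟩
  have h3 : max s s' = φ a := congrArg (fun q : ℝ × ℝ => q.2) this
  linarith

/-- The tips of the legs of positive length, as points of code space times height. -/
def tips (φ : A → ℝ) : Set (A × ℝ) := {p | 0 < p.2 ∧ p.2 = φ p.1}

lemma endpoints_fanOf (Θ : A ≃ₜ cantorSet) {φ : A → ℝ} (hφ : IsProfile φ)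
    (hv : OrderAtLeast (fanOf Θ φ) fanVertex 2) :
    Endpoints (fanOf Θ φ) = ray Θ '' tips φ := by
  ext x
  constructor
  · rintro ⟨⟨⟨a, t⟩, ⟨h0, h1⟩, rfl⟩, -, h2⟩
    simp only at h0 h1
    rcases h0.eq_or_lt with rfl | h0
    · rw [ray_zero] at h2; exact absurd hv h2
    rcases h1.eq_or_lt with rfl | h1
    · exact ⟨_, ⟨h0, rfl⟩, rfl⟩
    · exact absurd (inner_order_two Θ h0 h1) h2
  · rintro ⟨⟨a, t⟩, ⟨h0, h1⟩, rfl⟩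
    simp only at h0 h1
    subst h1
    refine ⟨⟨_, ⟨h0.le, le_rfl⟩, rfl⟩, ?_, tip_not_order_two Θ hφ h0⟩
    exact orderAtLeast_one (leg_subset Θ (t := φ a) (u := 0) ⟨h0.le, le_rfl⟩ ⟨le_rfl, h0.le⟩)
      (isArc_leg Θ a h0.ne')

lemma isClosed_sub (φ : A → ℝ) (hφ : IsProfile φ) :
    IsClosed {p : A × ℝ | 0 ≤ p.2 ∧ p.2 ≤ φ p.1} :=
  (isClosed_le continuous_const continuous_snd).inter hφ.closed

lemma isCompact_sub (Θ : A ≃ₜ cantorSet) {φ : A → ℝ} (hφ : IsProfile φ) :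
    IsCompact {p : A × ℝ | 0 ≤ p.2 ∧ p.2 ≤ φ p.1} := by
  have := compactSpace_code Θ
  refine (isCompact_univ.prod (isCompact_Icc (a := (0:ℝ)) (b := 1))).of_isClosed_subset
    (isClosed_sub φ hφ) ?_
  rintro ⟨a, t⟩ ⟨h0, h1⟩
  exact ⟨trivial, h0, h1.trans (hφ.le_one a)⟩

lemma isSmoothFan_fanOf (Θ : A ≃ₜ cantorSet) {φ : A → ℝ} (hφ : IsProfile φ) {a b : A} (hab : a ≠ b)
    (ha : 0 < φ a) (hb : 0 < φ b) : IsSmoothFan (fanOf Θ φ) := by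
  have hv : fanVertex ∈ fanOf Θ φ := ⟨(a, 0), ⟨le_rfl, ha.le⟩, ray_zero Θ a⟩
  refine ⟨?_, (isCompact_sub Θ hφ).image (continuous_ray Θ), ⟨⟨_, hv⟩, ?_⟩, ?_, hv,
    vertex_order_two Θ hab ha hb⟩
  · rw [cantorFan_eq Θ]
    rintro _ ⟨p, hp, rfl⟩
    exact ⟨p, ⟨hp.1, hp.2.trans (hφ.le_one _)⟩, rfl⟩
  · refine isPreconnected_of_forall fanVertex ?_
    rintro _ ⟨⟨a, t⟩, ht, rfl⟩
    refine ⟨(fun r => ray Θ (a, r)) '' segment ℝ 0 t, leg_subset Θ ⟨le_rfl, ht.1.trans ht.2⟩ ht,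
      ⟨0, left_mem_segment ℝ _ _, ray_zero Θ a⟩, ⟨t, right_mem_segment ℝ _ _, rfl⟩, ?_⟩
    exact (convex_segment _ _).isPreconnected.image _
      ((continuous_ray Θ).comp (by fun_prop)).continuousOn
  · exact ⟨fanVertex, hv, ray Θ (a, φ a), ⟨_, ⟨ha.le, le_rfl⟩, rfl⟩, (ray_ne_vertex Θ ha.ne').symm⟩

/-- Every smooth fan is given by a height function. -/
lemma exists_profile (Θ : A ≃ₜ cantorSet) {X : Set (ℝ × ℝ)} (hX : IsSmoothFan X) :
    ∃ φ : A → ℝ, IsProfile φ ∧ X = fanOf Θ φ := by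
  have hX1 := hX.subset_fan
  rw [cantorFan_eq Θ] at hX1
  let T : A → Set ℝ := fun a => {t | 0 ≤ t ∧ ray Θ (a, t) ∈ X}
  have hT1 : ∀ a, ∀ t ∈ T a, t ≤ 1 := by
    rintro a t ⟨h0, ht⟩
    obtain ⟨⟨a', t'⟩, ⟨h0, h1⟩, he⟩ := hX1 ht
    have : t' = t := congrArg Prod.snd he
    simp only at h1; linarith
  have hbdd : ∀ a, BddAbove (T a) := fun a => ⟨1, hT1 a⟩
  have h0 : ∀ a, (0:ℝ) ∈ T a := fun a => ⟨le_rfl, by rw [ray_zero]; exact hX.vertex_mem⟩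
  have hcl : ∀ a, IsClosed (T a) := fun a =>
    (isClosed_le continuous_const continuous_id).inter (hX.isCompact.isClosed.preimage
      ((continuous_ray Θ).comp (by fun_prop : Continuous fun t : ℝ => (a, t))))
  have hmem : ∀ a, sSup (T a) ∈ T a := fun a => (hcl a).csSup_mem ⟨0, h0 a⟩ (hbdd a)
  -- `X` contains every leg up to its supremal height, since it is connected and contains the vertex
  have hdown : ∀ a t, 0 ≤ t → (t ≤ sSup (T a) ↔ ray Θ (a, t) ∈ X) := by
    intro a t ht
    refine ⟨fun h => ?_, fun h => le_csSup (hbdd a) ⟨ht, h⟩⟩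
    by_contra hmiss
    have ht0 : 0 < t := lt_of_le_of_ne ht (by rintro rfl; exact hmiss (h0 a).2)
    have hlt : t < sSup (T a) := lt_of_le_of_ne h (by intro he; rw [he] at hmiss; exact hmiss (hmem a).2)
    obtain ⟨r, hr, he⟩ := leg_cut Θ hX.subset_fan hX.isCompact.isClosed hX.isConnected.isPreconnected
      ht0 hlt hmiss (hmem a).2 _ hX.vertex_mem
    have := congrArg Prod.snd he
    simp only [ray_snd, fanVertex] at this
    linarith
  refine ⟨fun a => sSup (T a), ⟨fun a => (hmem a).1, fun a => hT1 a _ (hmem a), ?_⟩, ?_⟩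
  · have : {p : A × ℝ | p.2 ≤ sSup (T p.1)} = {p | p.2 ≤ 0} ∪ {p | 0 ≤ p.2} ∩ ray Θ ⁻¹' X := by
      ext ⟨a, t⟩
      simp only [mem_ofPred_eq, mem_union, mem_inter_iff, mem_preimage]
      constructor
      · intro h
        rcases le_total t 0 with h' | h'
        · exact Or.inl h'
        · exact Or.inr ⟨h', (hdown a t h').1 h⟩
      · rintro (h | ⟨h, h'⟩)
        · exact h.trans (hmem a).1
        · exact (hdown a t h).2 h'
    rw [this]
    exact (isClosed_le continuous_snd continuous_const).union
      ((isClosed_le continuous_const continuous_snd).inter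
        (hX.isCompact.isClosed.preimage (continuous_ray Θ)))
  · ext q
    constructor
    · intro hq
      obtain ⟨⟨a, t⟩, ⟨h0, h1⟩, rfl⟩ := hX1 hq
      exact ⟨(a, t), ⟨h0, (hdown a t h0).2 hq⟩, rfl⟩
    · rintro ⟨⟨a, t⟩, ⟨h0, h1⟩, rfl⟩
      exact (hdown a t h0).1 h1

end Geometry

/-! ### The tree of blocks -/

open Filter in
/-- Closure in code space times the line, in terms of agreement of longer and longer initial
segments. -/
lemma mem_closure_code {c m : ℕ → Bool} {t : ℝ} {Z : Set (((ℕ → Bool) × (ℕ → Bool)) × ℝ)} :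
    ((c, m), t) ∈ closure Z ↔ ∀ N : ℕ, ∃ z ∈ Z, (∀ j < N, z.1.1 j = c j) ∧ (∀ j < N, z.1.2 j = m j) ∧
      |z.2 - t| < 1 / ((N : ℝ) + 1) := by
  have cyl : ∀ (a : ℕ → Bool) (N : ℕ), {b : ℕ → Bool | ∀ j < N, b j = a j} ∈ 𝓝 a := by
    intro a N
    have h := (Filter.eventually_all_finite (Finset.range N).finite_toSet).2
      (fun k _ => ((continuous_apply (A := fun _ : ℕ => Bool) k).tendsto a).eventually
        (IsOpen.mem_nhds (isOpen_discrete {a k}) rfl))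
    filter_upwards [h] with b hb k hk using hb k (by simpa using hk)
  constructor
  · intro h N
    have hN : (0:ℝ) < 1 / ((N:ℝ) + 1) := by positivity
    obtain ⟨z, ⟨⟨h1, h2⟩, h3⟩, hz⟩ := mem_closure_iff_nhds.1 h _
      (prod_mem_nhds (prod_mem_nhds (cyl c N) (cyl m N)) (Metric.ball_mem_nhds t hN))
    exact ⟨z, hz, h1, h2, by simpa [Real.dist_eq] using h3⟩
  · intro h
    choose z hz h1 h2 h3 using h
    refine mem_closure_of_tendsto (f := z) (b := atTop) ?_ (Eventually.of_forall hz)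
    have pi : ∀ (a : ℕ → Bool) (f : ℕ → ℕ → Bool), (∀ N, ∀ j < N, f N j = a j) →
        Tendsto f atTop (𝓝 a) := by
      intro a f hf
      refine tendsto_pi_nhds.2 fun j => tendsto_const_nhds.congr' ?_
      filter_upwards [eventually_gt_atTop j] with N hN using (hf N j hN).symm
    have k1 := pi c (fun N => (z N).1.1) h1
    have k2 := pi m (fun N => (z N).1.2) h2
    have k3 : Tendsto (fun N => (z N).2) atTop (𝓝 t) := by
      rw [tendsto_iff_dist_tendsto_zero]
      exact squeeze_zero (fun _ => dist_nonneg) (fun N => by rw [Real.dist_eq]; exact (h3 N).le)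
        tendsto_one_div_add_atTop_nhds_zero_nat
    exact (k1.prodMk_nhds k2).prodMk_nhds k3

/-- One factor version of `mem_closure_code`. -/
lemma mem_closure_code' {c : ℕ → Bool} {t : ℝ} {Z : Set ((ℕ → Bool) × ℝ)} :
    (c, t) ∈ closure Z ↔ ∀ N : ℕ, ∃ z ∈ Z, (∀ j < N, z.1 j = c j) ∧
      |z.2 - t| < 1 / ((N : ℝ) + 1) := by
  let f : (ℕ → Bool) × ℝ → ((ℕ → Bool) × (ℕ → Bool)) × ℝ := fun p => ((p.1, fun _ => false), p.2)
  have hf : IsClosedEmbedding f := by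
    refine ⟨IsEmbedding.of_leftInverse (f := fun q => (q.1.1, q.2)) (fun _ => rfl)
      (by fun_prop) (by fun_prop), ?_⟩
    have : range f = {q | q.1.2 = fun _ => false} := by
      ext ⟨⟨a, b⟩, t⟩
      constructor
      · rintro ⟨p, hp⟩; rw [← hp]; rfl
      · intro h; exact ⟨(a, t), by simp only [f]; rw [← show b = _ from h]⟩
    rw [this]
    exact isClosed_eq (by fun_prop) continuous_const
  have h1 : (c, t) ∈ closure Z ↔ f (c, t) ∈ closure (f '' Z) := by
    rw [hf.closure_image_eq, hf.injective.mem_set_image]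
  rw [h1, mem_closure_code]
  refine forall_congr' fun N => ?_
  constructor
  · rintro ⟨_, ⟨z, hz, rfl⟩, h1, -, h3⟩; exact ⟨z, hz, h1, h3⟩
  · rintro ⟨z, hz, h1, h3⟩; exact ⟨f z, ⟨z, hz, rfl⟩, h1, fun _ _ => rfl, h3⟩

/-- The number of digits fixed by a node. Nodes of the tree of blocks are lists of child numbers, the
most recent one first. The child of `s` with number `i` splits off at place `off s + i`, sets
a marker there, and has its own digits begin at the next place. -/
def off : List ℕ → ℕ
  | [] => 0
  | i :: s => off s + i + 1

/-- The marker sequence of a node: it is true at the places where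
the node and its ancestors split off. -/
def mark : List ℕ → ℕ → Bool
  | [], _ => false
  | i :: s, j => mark s j || decide (j = off s + i)

lemma mark_ge (s : List ℕ) {j : ℕ} (h : off s ≤ j) : mark s j = false := by
  induction s with
  | nil => rfl
  | cons i s ih =>
    simp only [off] at h
    simp only [mark, ih (by omega), Bool.false_or, decide_eq_false_iff_not]
    omega

lemma mark_cons_lt {i : ℕ} {s : List ℕ} {j : ℕ} (h : j < off s + i) : mark (i :: s) j = mark s j := by
  simp only [mark, decide_eq_false (show ¬ j = off s + i by omega), Bool.or_false]

lemma mark_cons_self (i : ℕ) (s : List ℕ) : mark (i :: s) (off s + i) = true := by simp [mark]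

lemma mark_injective : Function.Injective mark := by
  -- the last true value sits right before the offset
  have last : ∀ (i j : ℕ) (s u : List ℕ), mark (i :: s) = mark (j :: u) → off u + j ≤ off s + i := by
    intro i j s u h
    by_contra hlt
    have h1 := mark_ge (i :: s) (j := off u + j) (by simp only [off]; omega)
    rw [h, mark_cons_self] at h1
    simp at h1
  intro s
  induction s with
  | nil =>
    intro u h
    cases u with
    | nil => rfl
    | cons j u => have := congrFun h (off u + j); rw [mark_cons_self] at this; simp [mark] at this
  | cons i s ih =>
    intro u h
    cases u with
    | nil => have := congrFun h (off s + i); rw [mark_cons_self] at this; simp [mark] at this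
    | cons j u =>
      have e : off s + i = off u + j := le_antisymm (last _ _ _ _ h.symm) (last _ _ _ _ h)
      have : s = u := by
        apply ih
        funext k
        rcases lt_or_ge k (off s + i) with hk | hk
        · rw [← mark_cons_lt hk, h, mark_cons_lt (by omega)]
        · rw [mark_ge s (by omega), mark_ge u (by omega)]
      subst this
      rw [show i = j by omega]

lemma eq_of_mark_agree {s u : List ℕ} {N : ℕ} (hs : off s ≤ N) (hu : off u ≤ N)
    (h : ∀ j < N, mark s j = mark u j) : s = u := by
  apply mark_injective
  funext j
  rcases lt_or_ge j N with hj | hj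
  · exact h j hj
  · rw [mark_ge s (by omega), mark_ge u (by omega)]

/-- Cutting the markers of a node at `N` gives the markers of an ancestor. -/
lemma mark_trunc (u : List ℕ) (N : ℕ) : ∃ v s, u = v ++ s ∧ off s ≤ N ∧ (∀ j < N, mark s j = mark u j) ∧
    (v = [] ∨ ∃ v' i, v = v' ++ [i] ∧ N ≤ off s + i) := by
  induction u with
  | nil => exact ⟨[], [], rfl, Nat.zero_le _, fun _ _ => rfl, Or.inl rfl⟩
  | cons i u ih =>
    by_cases h : off (i :: u) ≤ N
    · exact ⟨[], i :: u, rfl, h, fun _ _ => rfl, Or.inl rfl⟩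
    · simp only [off, not_le] at h
      obtain ⟨v, s, rfl, hs, hj, hv⟩ := ih
      refine ⟨i :: v, s, rfl, hs, fun j hjN => ?_, Or.inr ?_⟩
      · rw [hj j hjN, mark_cons_lt (by omega)]
      · rcases hv with rfl | ⟨v', i', rfl, hi⟩
        · exact ⟨[], i, rfl, by simpa using Nat.lt_succ_iff.1 h⟩
        · exact ⟨i :: v', i', rfl, hi⟩

/-- The data from which the large fan is assembled. Every node `s` of the tree carries a block: legs
over the closed set `Y s`, with upper semicontinuous relative heights `G s`. The children of `s` have
relative positions and heights `pt s i`, a sequence in `S s` every point of which is a cluster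
point of the sequence; besides these, the sequence can only cluster at height zero. The points
of `S s` are at most `β s` high, hence strictly below the tips of the block. The point `d` is the
distinguished leg of every block but the root's. -/
structure FanData where
  Y : List ℕ → Set (ℕ → Bool)
  G : List ℕ → (ℕ → Bool) → ℝ
  β : List ℕ → ℝ
  S : List ℕ → Set ((ℕ → Bool) × ℝ)
  pt : List ℕ → ℕ → (ℕ → Bool) × ℝ
  d : ℕ → Bool
  Y_closed : ∀ s, IsClosed (Y s)
  hypo_closed : ∀ s, IsClosed {p : (ℕ → Bool) × ℝ | p.1 ∈ Y s ∧ p.2 ≤ G s p.1}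
  β_pos : ∀ s, 0 < β s
  β_le : ∀ s, β s ≤ (1 / 2) ^ (off s + 1)
  β_lt : ∀ s, ∀ y ∈ Y s, β s < G s y
  G_root : ∀ y ∈ Y [], G [] y ≤ 1
  G_ge : ∀ s, s ≠ [] → ∀ y ∈ Y s, 1 ≤ G s y
  G_le : ∀ s, s ≠ [] → ∀ y ∈ Y s, G s y ≤ 1 + (1 / 2) ^ (off s)
  S_sub : ∀ s, ∀ p ∈ S s, p.1 ∈ Y s ∧ 0 < p.2 ∧ p.2 ≤ β s
  S_closed : ∀ s, ∀ p ∈ closure (S s), 0 < p.2 → p ∈ S s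
  pt_mem : ∀ s i, pt s i ∈ S s
  pt_cluster : ∀ s, ∀ p ∈ S s, ∀ N : ℕ, ∃ i, N ≤ i ∧ (∀ j < N, (pt s i).1 j = p.1 j) ∧
    |(pt s i).2 - p.2| < 1 / ((N : ℝ) + 1)
  d_mem : ∀ s, s ≠ [] → d ∈ Y s
  d_G : ∀ s, s ≠ [] → G s d = 1

namespace FanData

variable (D : FanData)

/-- The digits of the leg of block `s` with relative position `y`. -/
def pos : List ℕ → (ℕ → Bool) → ℕ → Bool
  | [], y, j => y j
  | i :: s, y, j =>
    if j < off s + i + 1 then pos s (D.pt s i).1 j else y (j - (off s + i + 1))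

/-- The height of a block, by which all its relative heights are multiplied: the product of the relative
heights along the path from the root. -/
def hgt : List ℕ → ℝ
  | [] => 1
  | i :: s => hgt s * (D.pt s i).2

/-- The code of a leg: digits together with markers. -/
def loc (s : List ℕ) (y : ℕ → Bool) : (ℕ → Bool) × (ℕ → Bool) := (D.pos s y, mark s)

lemma pos_prefix (s : List ℕ) (y y' : ℕ → Bool) {j : ℕ} (h : j < off s) :
    D.pos s y j = D.pos s y' j := by
  cases s with
  | nil => simp [off] at h
  | cons i s => simp only [off] at h; simp only [pos, h, if_true]

lemma pos_shift (s : List ℕ) (y : ℕ → Bool) (j : ℕ) : D.pos s y (off s + j) = y j := by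
  cases s with
  | nil => simp [off, pos]
  | cons i s =>
    simp [off, pos]
    intro h
    omega

lemma pos_child (s : List ℕ) (i : ℕ) (y : ℕ → Bool) {j : ℕ} (h : j < off s + i + 1) :
    D.pos (i :: s) y j = D.pos s (D.pt s i).1 j := by
  simp only [pos, h, if_true]

lemma pos_agree (s : List ℕ) {y y' : ℕ → Bool} {N : ℕ} (h : ∀ j < N, y j = y' j) {j : ℕ}
    (hj : j < off s + N) : D.pos s y j = D.pos s y' j := by
  rcases lt_or_ge j (off s) with h1 | h1
  · exact D.pos_prefix s _ _ h1
  · obtain ⟨k, rfl⟩ := Nat.exists_eq_add_of_le h1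
    rw [pos_shift, pos_shift, h k (by omega)]

lemma continuous_pos (s : List ℕ) : Continuous (D.pos s) := by
  refine continuous_pi fun j => ?_
  rcases lt_or_ge j (off s) with h1 | h1
  · rw [show (fun y => D.pos s y j) = fun _ => D.pos s (fun _ => false) j from
      funext fun y => D.pos_prefix s _ _ h1]
    exact continuous_const
  · obtain ⟨k, rfl⟩ := Nat.exists_eq_add_of_le h1
    simp only [pos_shift]
    exact continuous_apply k

lemma loc_injective {s u : List ℕ} {y z : ℕ → Bool} (h : D.loc s y = D.loc u z) : s = u ∧ y = z := by
  obtain ⟨h1, h2⟩ := Prod.mk.inj h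
  have := mark_injective h2
  subst this
  exact ⟨rfl, funext fun j => by rw [← D.pos_shift s y j, h1, pos_shift]⟩

lemma pt_pos (s : List ℕ) (i : ℕ) : 0 < (D.pt s i).2 := (D.S_sub s _ (D.pt_mem s i)).2.1

lemma pt_le (s : List ℕ) (i : ℕ) : (D.pt s i).2 ≤ D.β s := (D.S_sub s _ (D.pt_mem s i)).2.2

lemma β_le_half (s : List ℕ) : D.β s ≤ 1 / 2 := by
  refine (D.β_le s).trans ?_
  rw [pow_succ]
  have : ((1:ℝ)/2) ^ off s ≤ 1 := pow_le_one₀ (by norm_num) (by norm_num)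
  linarith

lemma hgt_pos (s : List ℕ) : 0 < D.hgt s := by
  induction s with
  | nil => simp [hgt]
  | cons i s ih => exact mul_pos ih (D.pt_pos s i)

lemma hgt_append (v s : List ℕ) : D.hgt (v ++ s) ≤ D.hgt s * (1 / 2) ^ v.length := by
  induction v with
  | nil => simp
  | cons i v ih =>
    have h1 := (D.pt_le (v ++ s) i).trans (D.β_le_half _)
    have h0 := D.hgt_pos (v ++ s)
    simp only [List.cons_append, hgt, List.length_cons, pow_succ]
    nlinarith

lemma hgt_le (s : List ℕ) : D.hgt s ≤ (1 / 2) ^ s.length := by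
  simpa [hgt] using D.hgt_append s []

lemma hgt_le_one (s : List ℕ) : D.hgt s ≤ 1 :=
  (D.hgt_le s).trans (pow_le_one₀ (by norm_num) (by norm_num))

/-- Proper descendants of a child are much lower than the child. -/
lemma hgt_deep (v s : List ℕ) (i : ℕ) (hv : v ≠ []) : D.hgt (v ++ i :: s) ≤ (1 / 2) ^ i := by
  rcases List.eq_nil_or_concat v with rfl | ⟨v', j, rfl⟩
  · exact absurd rfl hv
  have h1 := D.hgt_append v' (j :: i :: s)
  have h2 : ((1:ℝ)/2) ^ v'.length ≤ 1 := pow_le_one₀ (by norm_num) (by norm_num)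
  have h3 : D.hgt (j :: i :: s) ≤ (1 / 2) ^ i := by
    have h4 := (D.pt_le (i :: s) j).trans (D.β_le _)
    have h5 : ((1:ℝ)/2) ^ (off (i :: s) + 1) ≤ (1/2) ^ i :=
      pow_le_pow_of_le_one (by norm_num) (by norm_num) (by simp only [off]; omega)
    have h6 := D.hgt_le_one (i :: s)
    have h7 := D.hgt_pos (i :: s)
    have h8 := D.pt_pos (i :: s) j
    simp only [hgt] at h6 h7 ⊢
    nlinarith
  have h9 := D.hgt_pos (j :: i :: s)
  simp only [List.concat_eq_append, List.append_assoc, List.cons_append, List.nil_append]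
  nlinarith

lemma G_pos (s : List ℕ) {y : ℕ → Bool} (hy : y ∈ D.Y s) : 0 < D.G s y :=
  (D.β_pos s).trans (D.β_lt s y hy)

lemma G_le_two (s : List ℕ) {y : ℕ → Bool} (hy : y ∈ D.Y s) : D.G s y ≤ 2 := by
  by_cases h : s = []
  · subst h; linarith [D.G_root y hy]
  · have := D.G_le s h y hy
    have h1 : ((1:ℝ)/2) ^ off s ≤ 1 := pow_le_one₀ (by norm_num) (by norm_num)
    linarith

lemma H_le_one (s : List ℕ) {y : ℕ → Bool} (hy : y ∈ D.Y s) : D.hgt s * D.G s y ≤ 1 := by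
  cases s with
  | nil => simpa [hgt] using D.G_root y hy
  | cons i s =>
    have h1 := D.hgt_le (i :: s)
    have h2 := D.G_le_two (i :: s) hy
    have h3 := D.hgt_pos (i :: s)
    have h4 : ((1:ℝ)/2) ^ (i :: s).length ≤ 1 / 2 := by
      rw [List.length_cons, pow_succ]
      have : ((1:ℝ)/2) ^ s.length ≤ 1 := pow_le_one₀ (by norm_num) (by norm_num)
      linarith
    nlinarith

open Filter in
/-- The accumulation analysis. If points of positive height lying in the blocks accumulate at a point
of positive height, then the limit lies over a block `s`, and they do so either within `s` or along
an infinite sequence of children of `s`: all other blocks that are close are too low. -/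
lemma dichotomy {w : (ℕ → Bool) × (ℕ → Bool)} {t : ℝ} (ht : 0 < t)
    (T : List ℕ → Set ((ℕ → Bool) × ℝ))
    (hT : ∀ s, ∀ p ∈ T s, p.1 ∈ D.Y s ∧ p.2 ≤ D.hgt s * D.G s p.1)
    (h : (w, t) ∈ closure {z | ∃ s, ∃ p ∈ T s, z = (D.loc s p.1, p.2)}) :
    ∃ s y, w = D.loc s y ∧ ((y, t) ∈ closure (T s) ∨
      ∃ (ι : ℕ → ℕ) (p : ℕ → (ℕ → Bool) × ℝ), (∀ N, N ≤ ι N) ∧ (∀ N, p N ∈ T (ι N :: s)) ∧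
        Tendsto (fun N => (D.pt s (ι N)).1) atTop (𝓝 y) ∧ Tendsto (fun N => (p N).2) atTop (𝓝 t)) := by
  obtain ⟨c, m⟩ := w
  rw [mem_closure_code] at h
  choose z hz h1 h2 h3 using h
  choose u p hp hzp using hz
  have hc : ∀ N, ∀ j < N, D.pos (u N) (p N).1 j = c j := fun N j hj => by
    rw [← h1 N j hj, hzp]; rfl
  have hm : ∀ N, ∀ j < N, mark (u N) j = m j := fun N j hj => by
    rw [← h2 N j hj, hzp]; rfl
  have hlim : Tendsto (fun N => (p N).2) atTop (𝓝 t) := by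
    rw [tendsto_iff_dist_tendsto_zero]
    refine squeeze_zero (fun _ => dist_nonneg) (fun N => ?_) tendsto_one_div_add_atTop_nhds_zero_nat
    have := (h3 N).le
    rw [hzp] at this
    rw [Real.dist_eq]; exact this
  have hhalf : ∀ᶠ N in atTop, t / 4 < D.hgt (u N) := by
    filter_upwards [hlim.eventually (lt_mem_nhds (show t / 2 < t by linarith))] with N hN
    have k1 := (hT _ _ (hp N)).2
    have k2 := D.G_le_two _ (hT _ _ (hp N)).1
    have k3 := D.hgt_pos (u N)
    nlinarith
  obtain ⟨L, hL⟩ := exists_pow_lt_of_lt_one (show 0 < t / 4 by linarith) (show (1/2:ℝ) < 1 by norm_num)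
  obtain ⟨N0, hN0⟩ := eventually_atTop.1 hhalf
  have hlen : ∀ N ≥ N0, (u N).length < L := by
    intro N hN
    by_contra hcon
    have := (D.hgt_le (u N)).trans (pow_le_pow_of_le_one (by norm_num) (by norm_num) (not_lt.1 hcon))
    linarith [hN0 N hN]
  choose v s hvs hoff hmk hv using fun N => mark_trunc (u N) N
  -- the truncation with the largest number of markers is the block carrying the limit
  obtain ⟨N1, hN1, hmax⟩ : ∃ N1 ≥ N0, ∀ N ≥ N0, (s N).length ≤ (s N1).length := by
    have hb : ∀ N ≥ N0, (s N).length ≤ L := by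
      intro N hN
      have := hlen N hN
      rw [hvs N, List.length_append] at this
      omega
    have hfin : (((fun N => (s N).length) '' Ici N0)).Finite :=
      (Set.finite_Iic L).subset (by rintro _ ⟨N, hN, rfl⟩; exact hb N hN)
    obtain ⟨l, ⟨N1, hN1, rfl⟩, hl⟩ := hfin.exists_maximal ⟨_, N0, self_mem_Ici, rfl⟩
    refine ⟨N1, hN1, fun N hN => ?_⟩
    rcases le_total (s N).length (s N1).length with h | h
    · exact h
    · exact hl ⟨N, hN, rfl⟩ h
  have hsN : ∀ N ≥ N1, s N = s N1 := by
    intro N hN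
    obtain ⟨v', s', he, ho, hj, -⟩ := mark_trunc (s N) N1
    have : s' = s N1 := eq_of_mark_agree ho (hoff N1) fun j hjN => by
      rw [hj j hjN, hmk N j (by omega), hm N j (by omega), hmk N1 j hjN, hm N1 j hjN]
    have hle := hmax N (by omega)
    rw [he, this, List.length_append] at hle
    have : v' = [] := List.eq_nil_of_length_eq_zero (by omega)
    rw [he, this, List.nil_append]; assumption
  set σ := s N1 with hσ
  have hmσ : m = mark σ := by
    funext j
    have hj : j < max N1 (j + 1) := by omega
    rw [← hm (max N1 (j+1)) j hj, ← hmk (max N1 (j+1)) j hj, hsN _ (le_max_left _ _)]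
  -- for large `N` the block `u N` is `σ` or one of its children
  have hev : ∀ᶠ N in atTop, u N = σ ∨ ∃ i, u N = i :: σ ∧ N ≤ off σ + i := by
    have hsmall : ∀ᶠ N : ℕ in atTop, ((1:ℝ)/2) ^ (N - off σ) < t / 4 :=
      ((tendsto_pow_atTop_nhds_zero_of_lt_one (by norm_num) (by norm_num)).comp
        (tendsto_sub_atTop_nat (off σ))).eventually (gt_mem_nhds (by linarith))
    filter_upwards [eventually_ge_atTop N1, hhalf, hsmall] with N hN hh hs
    have hu := hvs N
    have hvN := hv N
    rw [hsN N hN] at hu hvN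
    rcases hvN with h0 | ⟨v', i, hv', hi⟩
    · left; rw [hu, h0, List.nil_append]
    · right
      refine ⟨i, ?_, hi⟩
      by_cases hv0 : v' = []
      · rw [hu, hv', hv0]; rfl
      · exfalso
        have k := D.hgt_deep v' σ i hv0
        rw [hu, hv'] at hh
        simp only [List.append_assoc, List.cons_append, List.nil_append] at hh
        have k2 : ((1:ℝ)/2) ^ i ≤ (1/2) ^ (N - off σ) :=
          pow_le_pow_of_le_one (by norm_num) (by norm_num) (by omega)
        linarith
  obtain ⟨N2, hN2⟩ := eventually_atTop.1 hev
  -- the candidate for the relative position of the limit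
  let y : ℕ → Bool := fun j => c (off σ + j)
  have hloc : (∃ N ≥ off σ, ∃ y', ∀ j < N, D.pos σ y' j = c j) → ((c, m) : _ × _) = D.loc σ y := by
    rintro ⟨N, hN, y', hy'⟩
    refine Prod.ext (funext fun j => ?_) hmσ
    simp only [loc]
    rcases lt_or_ge j (off σ) with h1 | h1
    · rw [← hy' j (by omega)]; exact D.pos_prefix σ _ _ h1
    · obtain ⟨k, rfl⟩ := Nat.exists_eq_add_of_le h1
      rw [pos_shift]
  by_cases hcase : ∀ N, ∃ N' ≥ N, u N' = σ
  · refine ⟨σ, y, hloc ?_, Or.inl ?_⟩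
    · obtain ⟨N', hN', hu⟩ := hcase (off σ)
      exact ⟨N', hN', (p N').1, fun j hj => by rw [← hc N' j hj, hu]⟩
    · rw [mem_closure_code']
      intro N
      obtain ⟨N', hN', hu⟩ := hcase (N + off σ)
      refine ⟨p N', hu ▸ hp N', fun j hj => ?_, ?_⟩
      · have := hc N' (off σ + j) (by omega)
        rwa [hu, pos_shift] at this
      · have := h3 N'
        rw [hzp] at this
        refine lt_of_lt_of_le this ?_
        have : (N:ℝ) ≤ N' := by exact_mod_cast (by omega : N ≤ N')
        exact one_div_le_one_div_of_le (by positivity) (by linarith)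
  · push Not at hcase
    obtain ⟨N3, hN3⟩ := hcase
    have hch : ∀ N, ∃ i, u (N + N2 + N3 + off σ) = i :: σ ∧ N + N2 + N3 ≤ i := by
      intro N
      rcases hN2 (N + N2 + N3 + off σ) (by omega) with h | ⟨i, hi, hi'⟩
      · exact absurd h (hN3 _ (by omega))
      · exact ⟨i, hi, by omega⟩
    choose ι hι hι' using hch
    have hagree : ∀ N j, j < N + N2 + N3 + off σ → D.pos σ (D.pt σ (ι N)).1 j = c j := by
      intro N j hj
      rw [← hc _ j hj, hι N, pos_child _ _ _ _ (by have := hι' N; omega)]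
    refine ⟨σ, y, hloc ⟨_, by omega, _, hagree 0⟩, Or.inr ⟨ι, fun N => p (N + N2 + N3 + off σ),
      fun N => by have := hι' N; omega, fun N => hι N ▸ hp _, ?_, ?_⟩⟩
    · refine tendsto_pi_nhds.2 fun j => tendsto_const_nhds.congr' ?_
      filter_upwards [eventually_gt_atTop j] with N hN
      have := hagree N (off σ + j) (by omega)
      rw [pos_shift] at this
      exact this.symm
    · refine hlim.comp (tendsto_atTop_mono (fun N => ?_) tendsto_id)
      simp only [id]; omega

open Classical in
/-- The height function of the assembled fan; it vanishes off the codes of legs. -/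
def prof (w : (ℕ → Bool) × (ℕ → Bool)) : ℝ :=
  if h : ∃ q : List ℕ × (ℕ → Bool), q.2 ∈ D.Y q.1 ∧ w = D.loc q.1 q.2 then
    D.hgt h.choose.1 * D.G h.choose.1 h.choose.2 else 0

lemma prof_loc {s : List ℕ} {y : ℕ → Bool} (hy : y ∈ D.Y s) :
    D.prof (D.loc s y) = D.hgt s * D.G s y := by
  have h : ∃ q : List ℕ × (ℕ → Bool), q.2 ∈ D.Y q.1 ∧ D.loc s y = D.loc q.1 q.2 := ⟨(s, y), hy, rfl⟩
  obtain ⟨h1, h2⟩ := D.loc_injective h.choose_spec.2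
  rw [prof, dif_pos h, ← h1, ← h2]

lemma exists_of_prof_pos {w : (ℕ → Bool) × (ℕ → Bool)} (h : 0 < D.prof w) :
    ∃ s y, y ∈ D.Y s ∧ w = D.loc s y := by
  by_contra hcon
  rw [prof, dif_neg] at h
  · exact lt_irrefl _ h
  · rintro ⟨q, hq⟩; exact hcon ⟨q.1, q.2, hq⟩

lemma H_pos (s : List ℕ) {y : ℕ → Bool} (hy : y ∈ D.Y s) : 0 < D.hgt s * D.G s y :=
  mul_pos (D.hgt_pos s) (D.G_pos s hy)

lemma prof_nonneg (w : (ℕ → Bool) × (ℕ → Bool)) : 0 ≤ D.prof w := by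
  by_contra h
  by_cases hw : ∃ q : List ℕ × (ℕ → Bool), q.2 ∈ D.Y q.1 ∧ w = D.loc q.1 q.2
  · obtain ⟨q, hq, rfl⟩ := hw
    rw [D.prof_loc hq] at h
    exact h (D.H_pos _ hq).le
  · rw [prof, dif_neg hw] at h; exact h le_rfl

open Filter in
lemma isProfile_prof : IsProfile D.prof := by
  refine ⟨D.prof_nonneg, fun w => ?_, ?_⟩
  · rcases (D.prof_nonneg w).eq_or_lt with h | h
    · rw [← h]; norm_num
    · obtain ⟨s, y, hy, rfl⟩ := D.exists_of_prof_pos h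
      rw [D.prof_loc hy]; exact D.H_le_one s hy
  · refine isClosed_of_closure_subset ?_
    rintro ⟨w, t⟩ hwt
    change t ≤ D.prof w
    rcases le_or_gt t 0 with ht | ht
    · exact ht.trans (D.prof_nonneg w)
    let T : List ℕ → Set ((ℕ → Bool) × ℝ) := fun s => {p | p.1 ∈ D.Y s ∧ p.2 ≤ D.hgt s * D.G s p.1}
    have h : (w, t) ∈ closure {z | ∃ s, ∃ p ∈ T s, z = (D.loc s p.1, p.2)} := by
      refine closure_mono ?_ ((isOpen_lt continuous_const continuous_snd).inter_closure
        (⟨ht, hwt⟩ : (w, t) ∈ {p : ((ℕ → Bool) × (ℕ → Bool)) × ℝ | 0 < p.2} ∩ _))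
      rintro ⟨w', t'⟩ ⟨h0, h1⟩
      obtain ⟨s, y, hy, rfl⟩ := D.exists_of_prof_pos (lt_of_lt_of_le h0 h1)
      refine ⟨s, (y, t'), ⟨hy, ?_⟩, rfl⟩
      rw [← D.prof_loc hy]; exact h1
    obtain ⟨s, y, rfl, h | ⟨ι, p, hι, hp, hy, hlim⟩⟩ := D.dichotomy ht T (fun _ _ h => h) h
    · have hcl : IsClosed {p : (ℕ → Bool) × ℝ | p.1 ∈ D.Y s ∧ p.2 ≤ D.hgt s * D.G s p.1} := by
        have := (D.hypo_closed s).preimage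
          (by fun_prop : Continuous fun p : (ℕ → Bool) × ℝ => (p.1, p.2 / D.hgt s))
        convert this using 1
        ext p
        simp only [mem_preimage, mem_ofPred_eq, div_le_iff₀ (D.hgt_pos s), mul_comm]
      rw [hcl.closure_eq] at h
      rw [D.prof_loc h.1]; exact h.2
    · have hyY : y ∈ D.Y s := (D.Y_closed s).mem_of_tendsto hy
        (Eventually.of_forall fun N => (D.S_sub s _ (D.pt_mem s _)).1)
      rw [D.prof_loc hyY]
      have hb : ∀ N, (p N).2 ≤ D.hgt s * D.β s * (1 + (1/2) ^ N) := by
        intro N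
        obtain ⟨h1, h2⟩ := hp N
        have h3 := D.G_le _ (by simp) _ h1
        have h4 : ((1:ℝ)/2) ^ off (ι N :: s) ≤ (1/2) ^ N :=
          pow_le_pow_of_le_one (by norm_num) (by norm_num) (by have := hι N; simp only [off]; omega)
        refine h2.trans ?_
        simp only [hgt]
        have h5 := D.hgt_pos s
        have h6 := D.pt_le s (ι N)
        have h7 := D.pt_pos s (ι N)
        have h8 := D.G_pos _ h1
        exact mul_le_mul (mul_le_mul_of_nonneg_left h6 h5.le) (by linarith) h8.le
          (mul_pos h5 (D.β_pos s)).le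
      have hlim2 : Tendsto (fun N : ℕ => D.hgt s * D.β s * (1 + (1/2:ℝ) ^ N)) atTop
          (𝓝 (D.hgt s * D.β s * (1 + 0))) :=
        ((tendsto_pow_atTop_nhds_zero_of_lt_one (by norm_num) (by norm_num)).const_add 1).const_mul _
      have := le_of_tendsto_of_tendsto' hlim hlim2 hb
      have h9 := mul_lt_mul_of_pos_left (D.β_lt s y hyY) (D.hgt_pos s)
      linarith

lemma tips_prof : tips D.prof = {z | ∃ s, ∃ p ∈ {p : (ℕ → Bool) × ℝ | p.1 ∈ D.Y s ∧
        p.2 = D.hgt s * D.G s p.1}, z = (D.loc s p.1, p.2)} := by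
  ext ⟨w, t⟩
  constructor
  · rintro ⟨h0, h1⟩
    simp only at h0 h1
    obtain ⟨s, y, hy, rfl⟩ := D.exists_of_prof_pos (h1 ▸ h0)
    exact ⟨s, (y, t), ⟨hy, by rw [h1, D.prof_loc hy]⟩, rfl⟩
  · rintro ⟨s, ⟨y, r⟩, ⟨hy, hr⟩, h⟩
    obtain ⟨rfl, rfl⟩ := Prod.mk.inj h
    simp only at hy hr
    subst hr
    exact ⟨D.H_pos s hy, (D.prof_loc hy).symm⟩

open Filter in
/-- Where the tips accumulate at positive height; `T` may single out some of the tips. -/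
lemma closure_tips {w : (ℕ → Bool) × (ℕ → Bool)} {t : ℝ} (ht : 0 < t)
    (T : List ℕ → Set ((ℕ → Bool) × ℝ))
    (hT : ∀ s, ∀ p ∈ T s, p.1 ∈ D.Y s ∧ p.2 = D.hgt s * D.G s p.1)
    (h : (w, t) ∈ closure {z | ∃ s, ∃ p ∈ T s, z = (D.loc s p.1, p.2)}) : ∃ s y, w = D.loc s y ∧
      ((y, t) ∈ closure (T s) ∨ (y, t / D.hgt s) ∈ D.S s) := by
  obtain ⟨s, y, rfl, h | ⟨ι, p, hι, hp', hy, hlim⟩⟩ :=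
    D.dichotomy ht T (fun s p h => ⟨(hT s p h).1, (hT s p h).2.le⟩) h
  · exact ⟨s, y, rfl, Or.inl h⟩
  have hp := fun N => hT _ _ (hp' N)
  refine ⟨s, y, rfl, Or.inr (D.S_closed s _ ?_ (div_pos ht (D.hgt_pos s)))⟩
  have hG : Tendsto (fun N => D.G (ι N :: s) (p N).1) atTop (𝓝 1) := by
    refine tendsto_of_tendsto_of_tendsto_of_le_of_le tendsto_const_nhds
      (h := fun N : ℕ => 1 + (1/2:ℝ) ^ N) ?_ (fun N => D.G_ge _ (by simp) _ (hp N).1) (fun N => ?_)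
    · simpa using (tendsto_pow_atTop_nhds_zero_of_lt_one (r := (1/2:ℝ)) (by norm_num)
        (by norm_num)).const_add 1
    · have h4 : ((1:ℝ)/2) ^ off (ι N :: s) ≤ (1/2) ^ N :=
        pow_le_pow_of_le_one (by norm_num) (by norm_num) (by have := hι N; simp only [off]; omega)
      have := D.G_le _ (by simp) _ (hp N).1
      simp only at this ⊢
      linarith
  have hlim2 : Tendsto (fun N => (D.pt s (ι N)).2) atTop (𝓝 (t / D.hgt s)) := by
    have := (hlim.div_const (D.hgt s)).div hG one_ne_zero
    rw [div_one] at this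
    refine this.congr fun N => ?_
    have h1 := (hp N).2
    simp only [hgt] at h1
    have h2 := (D.hgt_pos s).ne'
    have h3 := (D.G_pos _ (hp N).1).ne'
    simp only [Pi.div_apply]
    rw [h1]
    field_simp
  exact mem_closure_of_tendsto (hy.prodMk_nhds hlim2) (Eventually.of_forall fun N => D.pt_mem s _)

/-- The tips over the distinguished legs accumulate at all points prescribed by the sets `S s`. -/
lemma mem_closure_dtips {s : List ℕ} {y : ℕ → Bool} {x : ℝ} (h : (y, x) ∈ D.S s) :
    (D.loc s y, D.hgt s * x) ∈ closure {z | ∃ u, u ≠ [] ∧ z = (D.loc u D.d, D.hgt u)} := by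
  rw [loc, mem_closure_code]
  intro N
  obtain ⟨i, hi, h1, h2⟩ := D.pt_cluster s _ h N
  refine ⟨_, ⟨i :: s, by simp, rfl⟩, fun j hj => ?_, fun j hj => ?_, ?_⟩
  · simp only [loc]
    rw [pos_child _ _ _ _ (by omega)]
    exact D.pos_agree s h1 (by omega)
  · exact mark_cons_lt (s := s) (i := i) (by omega)
  · simp only [hgt]
    rw [← mul_sub, abs_mul, abs_of_pos (D.hgt_pos s)]
    have := D.hgt_le_one s
    have h3 := abs_nonneg ((D.pt s i).2 - x)
    simp only at h2
    nlinarith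

lemma dtips_subset : {z | ∃ u, u ≠ [] ∧ z = (D.loc u D.d, D.hgt u)} ⊆ tips D.prof := by
  rintro _ ⟨u, hu, rfl⟩
  refine ⟨D.hgt_pos u, ?_⟩
  simp only
  rw [D.prof_loc (D.d_mem u hu), D.d_G u hu, mul_one]

end FanData

/-! ### Traces on the legs and separation of the blocks -/

section Legs

variable {A : Type*} [TopologicalSpace A]

lemma mem_segment_ray (Θ : A ≃ₜ cantorSet) {a : A} {H : ℝ} (hH : 0 < H) {q : ℝ × ℝ} :
    q ∈ segment ℝ fanVertex (ray Θ (a, H)) ↔ ∃ t ∈ Icc 0 H, q = ray Θ (a, t) := by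
  rw [segment_eq_image]
  constructor
  · rintro ⟨θ, hθ, rfl⟩
    refine ⟨θ * H, ⟨mul_nonneg hθ.1 hH.le, by nlinarith [hθ.2]⟩, ?_⟩
    simp [ray, fanVertex, mul_assoc]
  · rintro ⟨t, ht, rfl⟩
    refine ⟨t / H, ⟨div_nonneg ht.1 hH.le, (div_le_one hH).2 ht.2⟩, ?_⟩
    simp only [ray, fanVertex, smul_eq_mul, Prod.smul_mk, Prod.mk_add_mk, mul_zero, zero_add,
      Prod.mk.injEq]
    constructor <;> field_simp

/-- Traces can be computed in leg coordinates. -/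
lemma legTrace_ray (Θ : A ≃ₜ cantorSet) {a : A} {H : ℝ} (hH : 0 < H) (T : Set (A × ℝ)) :
    legTrace (ray Θ '' T) (ray Θ (a, H)) = {x | 0 < x ∧ x < 1 ∧ (a, x * H) ∈ closure T} := by
  ext x
  constructor
  · rintro ⟨q, ⟨⟨hq, hs⟩, hne⟩, rfl⟩
    obtain ⟨t, ht, rfl⟩ := (mem_segment_ray Θ hH).1 hs
    have h0 : t ≠ 0 := fun h => hne (Or.inl (by rw [h, ray_zero]))
    have h1 : t ≠ H := fun h => hne (Or.inr (by rw [h]; rfl))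
    have ht0 : 0 < t := lt_of_le_of_ne ht.1 h0.symm
    obtain ⟨p, hp, he⟩ := mem_closure_ray Θ hq ht0
    have := ray_inj Θ he.symm h0
    subst this
    simp only [ray_snd]
    exact ⟨div_pos ht0 hH, (div_lt_one hH).2 (lt_of_le_of_ne ht.2 h1),
      by rwa [div_mul_cancel₀ _ hH.ne']⟩
  · rintro ⟨h0, h1, hc⟩
    have h2 : 0 < x * H := mul_pos h0 hH
    refine ⟨ray Θ (a, x * H), ⟨⟨ray_mem_closure Θ hc, (mem_segment_ray Θ hH).2
      ⟨x * H, ⟨h2.le, by nlinarith⟩, rfl⟩⟩, ?_⟩, ?_⟩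
    · rintro (h | h)
      · exact ray_ne_vertex Θ (p := (a, x * H)) h2.ne' h
      · have : x * H = H := congrArg (fun q : ℝ × ℝ => q.2) h
        nlinarith
    · simp only [ray_snd]
      field_simp

/-- Away from the vertex, leg coordinates are coordinates. -/
lemma isEmbedding_ray (Θ : A ≃ₜ cantorSet) :
    IsEmbedding fun p : {p : A × ℝ // 0 < p.2} => ray Θ p.1 := by
  let r : {p : A × ℝ // 0 < p.2} → {q : ℝ × ℝ // 0 < q.2} := fun p => ⟨ray Θ p.1, p.2⟩
  let u : {q : ℝ × ℝ // 0 < q.2} → ℝ × ℝ := fun q => (q.1.1 / q.1.2, q.1.2)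
  have hr : Continuous r := ((continuous_ray Θ).comp continuous_subtype_val).subtype_mk _
  have hu : Continuous u := by
    refine Continuous.prodMk (Continuous.div ?_ ?_ fun q => q.2.ne') ?_ <;> fun_prop
  have hur : u ∘ r = (Prod.map (fun a => (Θ a : ℝ)) id) ∘ Subtype.val := by
    funext p
    have := p.2.ne'
    simp only [u, r, ray, Function.comp_apply]
    rw [mul_div_cancel_left₀ _ this]
    rfl
  have h : IsEmbedding (u ∘ r) := by
    rw [hur]
    exact ((IsEmbedding.subtypeVal.comp Θ.isEmbedding).prodMap IsEmbedding.id).comp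
      IsEmbedding.subtypeVal
  exact IsEmbedding.subtypeVal.comp (IsEmbedding.of_comp hr hu h)

end Legs

/-- A set with arbitrarily small positive elements is not order isomorphic to a compact subset of
`(0,1)`. -/
lemma not_orderIsomorphic_of_small {A K : Set ℝ} (hA : A ⊆ Ioo 0 1)
    (hs : ∀ ε > 0, ∃ x ∈ A, x < ε) (hK : IsCompact K) (hK1 : K ⊆ Ioo 0 1) :
    ¬ OrderIsomorphic A K := by
  rintro ⟨h, hmono, hAK⟩
  have hbot : h ⟨0, left_mem_Icc.2 zero_le_one⟩ = ⟨0, left_mem_Icc.2 zero_le_one⟩ := by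
    obtain ⟨z, hz⟩ := h.surjective ⟨0, left_mem_Icc.2 zero_le_one⟩
    refine le_antisymm ?_ (h _).2.1
    exact (hmono.monotone (show ⟨0, left_mem_Icc.2 zero_le_one⟩ ≤ z from z.2.1)).trans hz.le
  choose! x hxA hxs using fun n : ℕ => hs (1 / ((n : ℝ) + 1)) (by positivity)
  let z : ℕ → Icc (0:ℝ) 1 := fun n => ⟨x n, Ioo_subset_Icc_self (hA (hxA n))⟩
  have hz : Filter.Tendsto z Filter.atTop (𝓝 ⟨0, left_mem_Icc.2 zero_le_one⟩) := by
    rw [tendsto_subtype_rng]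
    exact squeeze_zero (fun n => (hA (hxA n)).1.le) (fun n => (hxs n).le)
      tendsto_one_div_add_atTop_nhds_zero_nat
  have hlim := (continuous_subtype_val.tendsto _).comp ((h.continuous.tendsto _).comp hz)
  rw [hbot] at hlim
  have : (0:ℝ) ∈ K := hK.isClosed.mem_of_tendsto hlim
    (Filter.Eventually.of_forall fun n => hAK ▸ ⟨h (z n), ⟨z n, hxA n, rfl⟩, rfl⟩)
  exact lt_irrefl _ (hK1 this).1

namespace FanData

variable (D : FanData) (Θ : ((ℕ → Bool) × (ℕ → Bool)) ≃ₜ cantorSet)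

/-- The tips of block `s`. -/
def blockTips (s : List ℕ) : Set (((ℕ → Bool) × (ℕ → Bool)) × ℝ) :=
  {z | ∃ y ∈ D.Y s, z = (D.loc s y, D.hgt s * D.G s y)}

/-- The fan assembled from the data. -/
def fan : Set (ℝ × ℝ) := fanOf Θ D.prof

lemma tips_eq : tips D.prof = {z | ∃ s, z ∈ D.blockTips s} := by
  rw [tips_prof]
  ext z
  constructor
  · rintro ⟨s, ⟨y, r⟩, ⟨hy, hr⟩, rfl⟩; exact ⟨s, y, hy, Prod.ext rfl hr⟩
  · rintro ⟨s, y, hy, rfl⟩; exact ⟨s, (y, _), ⟨hy, rfl⟩, rfl⟩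

lemma isSmoothFan (hne : (D.Y []).Nonempty) : IsSmoothFan (D.fan Θ) := by
  obtain ⟨y, hy⟩ := hne
  refine isSmoothFan_fanOf Θ D.isProfile_prof (a := D.loc [] y) (b := D.loc [0] D.d) ?_ ?_ ?_
  · intro h; exact absurd (D.loc_injective h).1 (by simp)
  · rw [D.prof_loc hy]; exact D.H_pos _ hy
  · rw [D.prof_loc (D.d_mem _ (by simp))]; exact D.H_pos _ (D.d_mem _ (by simp))

lemma endpoints_fan (hne : (D.Y []).Nonempty) : Endpoints (D.fan Θ) = ray Θ '' tips D.prof :=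
  endpoints_fanOf Θ D.isProfile_prof (D.isSmoothFan Θ hne).vertex_order

/-- A tip of one block is not a limit of tips of other blocks: on the legs of block `s` these
accumulate only at height at most `β s` times the height of the block. -/
lemma block_isolated {s : List ℕ} {z} (hz : z ∈ D.blockTips s) :
    z ∉ closure {z | ∃ u, u ≠ s ∧ z ∈ D.blockTips u} := by
  obtain ⟨y, hy, rfl⟩ := hz
  intro h
  have h' : (D.loc s y, D.hgt s * D.G s y) ∈ closure {z | ∃ u, ∃ p ∈ {p : (ℕ → Bool) × ℝ |
      u ≠ s ∧ p.1 ∈ D.Y u ∧ p.2 = D.hgt u * D.G u p.1}, z = (D.loc u p.1, p.2)} := by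
    refine closure_mono ?_ h
    rintro _ ⟨u, hu, y, hy, rfl⟩
    exact ⟨u, (y, _), ⟨hu, hy, rfl⟩, rfl⟩
  obtain ⟨u, v, he, h1 | h1⟩ := D.closure_tips (D.H_pos s hy)
    (fun u => {p | u ≠ s ∧ p.1 ∈ D.Y u ∧ p.2 = D.hgt u * D.G u p.1}) (fun u p hp => hp.2) h'
  · obtain ⟨rfl, rfl⟩ := D.loc_injective he
    simp at h1
  · obtain ⟨rfl, rfl⟩ := D.loc_injective he
    have h2 := (D.S_sub _ _ h1).2.2
    simp only at h2
    rw [mul_div_cancel_left₀ _ (D.hgt_pos s).ne'] at h2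
    exact absurd (D.β_lt s y hy) (not_lt.2 h2)

lemma mem_closure_tips {s : List ℕ} {y : ℕ → Bool} {x : ℝ} (h : (y, x) ∈ D.S s) :
    (D.loc s y, D.hgt s * x) ∈ closure (tips D.prof) :=
  closure_mono D.dtips_subset (D.mem_closure_dtips h)

/-- The trace on a distinguished leg is the prescribed set. -/
lemma trace_d (hne : (D.Y []).Nonempty) {s : List ℕ} (hs : s ≠ []) :
    legTrace (Endpoints (D.fan Θ)) (ray Θ (D.loc s D.d, D.hgt s)) = {x | (D.d, x) ∈ D.S s} := by
  rw [D.endpoints_fan Θ hne, legTrace_ray Θ (D.hgt_pos s)]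
  ext x
  constructor
  · rintro ⟨h0, h1, hc⟩
    have hpos := mul_pos h0 (D.hgt_pos s)
    rw [tips_prof] at hc
    obtain ⟨u, v, he, h2 | h2⟩ := D.closure_tips hpos
      (fun s => {p : (ℕ → Bool) × ℝ | p.1 ∈ D.Y s ∧ p.2 = D.hgt s * D.G s p.1}) (fun u p hp => hp) hc
    · obtain ⟨rfl, rfl⟩ := D.loc_injective he
      have hsub : closure {p : (ℕ → Bool) × ℝ | p.1 ∈ D.Y s ∧ p.2 = D.hgt s * D.G s p.1} ⊆
          {p | D.hgt s ≤ p.2} := by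
        refine closure_minimal ?_ (isClosed_le continuous_const continuous_snd)
        rintro p ⟨hp, hp2⟩
        have := D.G_ge s hs _ hp
        have h3 := D.hgt_pos s
        change _ ≤ p.2
        nlinarith
      have := hsub h2
      have h4 : D.hgt s ≤ x * D.hgt s := this
      have h3 := D.hgt_pos s
      nlinarith
    · obtain ⟨rfl, rfl⟩ := D.loc_injective he
      rwa [mul_div_cancel_right₀ _ (D.hgt_pos s).ne'] at h2
  · intro h
    have h1 := D.S_sub s _ h
    have := D.β_le_half s
    refine ⟨h1.2.1, by linarith [h1.2.2], ?_⟩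
    rw [mul_comm]; exact D.mem_closure_tips h

lemma trace_sub (hne : (D.Y []).Nonempty) {s : List ℕ} {y : ℕ → Bool} (hy : y ∈ D.Y s) :
    legTrace (Endpoints (D.fan Θ)) (ray Θ (D.loc s y, D.hgt s * D.G s y)) ⊆ Ioo 0 1 := by
  rw [D.endpoints_fan Θ hne, legTrace_ray Θ (D.H_pos s hy)]
  exact fun x h => ⟨h.1, h.2.1⟩

lemma trace_small (hne : (D.Y []).Nonempty) {s : List ℕ} {y : ℕ → Bool} (hy : y ∈ D.Y s)
    (hS : ∀ ε > 0, ∃ x < ε, (y, x) ∈ D.S s) :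
    ∀ ε > 0, ∃ x ∈ legTrace (Endpoints (D.fan Θ)) (ray Θ (D.loc s y, D.hgt s * D.G s y)), x < ε := by
  intro ε hε
  have hG := D.G_pos s hy
  obtain ⟨x, hx, hxS⟩ := hS (ε * D.G s y) (mul_pos hε hG)
  rw [D.endpoints_fan Θ hne, legTrace_ray Θ (D.H_pos s hy)]
  have h1 := D.S_sub s _ hxS
  have h2 := D.β_lt s y hy
  refine ⟨x / D.G s y, ⟨div_pos h1.2.1 hG, (div_lt_one hG).2 (lt_of_le_of_lt h1.2.2 h2), ?_⟩,
    (div_lt_iff₀ hG).2 hx⟩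
  rw [show x / D.G s y * (D.hgt s * D.G s y) = D.hgt s * x by field_simp]
  exact D.mem_closure_tips hxS

/-- The closure of the distinguished tips meets every leg carrying a prescribed point, away from the
vertex. -/
lemma meets {s : List ℕ} {y : ℕ → Bool} (hy : y ∈ D.Y s) {x : ℝ} (hx : (y, x) ∈ D.S s) :
    ((closure (ray Θ '' {z | ∃ u, u ≠ [] ∧ z = (D.loc u D.d, D.hgt u)}) ∩
      segment ℝ fanVertex (ray Θ (D.loc s y, D.hgt s * D.G s y))) \ {fanVertex}).Nonempty := by
  have h1 := D.S_sub s _ hx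
  have h2 := D.β_lt s y hy
  have h3 := mul_pos (D.hgt_pos s) h1.2.1
  have h4 := D.hgt_pos s
  refine ⟨ray Θ (D.loc s y, D.hgt s * x), ⟨ray_mem_closure Θ (D.mem_closure_dtips hx),
    (mem_segment_ray Θ (D.H_pos s hy)).2 ⟨_, ⟨h3.le, ?_⟩, rfl⟩⟩, ray_ne_vertex Θ h3.ne'⟩
  exact mul_le_mul_of_nonneg_left (h1.2.2.trans h2.le) h4.le

/-- The tips of one block of the fan form an open subset of the endpoint set. -/
lemma isOpen_block (s : List ℕ) {E : Set (ℝ × ℝ)} (hE : E ⊆ ray Θ '' tips D.prof) :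
    IsOpen (Subtype.val ⁻¹' (ray Θ '' D.blockTips s) : Set E) := by
  have : (Subtype.val ⁻¹' (ray Θ '' D.blockTips s) : Set E) =
      Subtype.val ⁻¹' (closure (ray Θ '' {z | ∃ u, u ≠ s ∧ z ∈ D.blockTips u}))ᶜ := by
    ext ⟨q, hq⟩
    simp only [mem_preimage, mem_compl_iff]
    constructor
    · rintro ⟨z, hz, rfl⟩ hcl
      have h0 : 0 < z.2 := by obtain ⟨y, hy, rfl⟩ := hz; exact D.H_pos s hy
      obtain ⟨p, hp, he⟩ := mem_closure_ray Θ hcl h0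
      have := ray_inj Θ he.symm h0.ne'
      subst this
      exact D.block_isolated hz hp
    · intro h
      obtain ⟨z, hz, rfl⟩ := hE hq
      rw [tips_eq] at hz
      obtain ⟨u, hu⟩ := hz
      by_cases hus : u = s
      · subst hus; exact ⟨z, hu, rfl⟩
      · exact absurd (subset_closure (mem_image_of_mem (ray Θ)
          (show z ∈ {z | ∃ u, u ≠ s ∧ z ∈ D.blockTips u} from ⟨u, hus, hu⟩))) h
  rw [this]
  exact isClosed_closure.isOpen_compl.preimage continuous_subtype_val

lemma isClopen_block (s : List ℕ) {E : Set (ℝ × ℝ)} (hE : E ⊆ ray Θ '' tips D.prof) :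
    IsClopen (Subtype.val ⁻¹' (ray Θ '' D.blockTips s) : Set E) := by
  refine ⟨⟨?_⟩, D.isOpen_block Θ s hE⟩
  have : (Subtype.val ⁻¹' (ray Θ '' D.blockTips s) : Set E)ᶜ =
      ⋃ u ∈ {u | u ≠ s}, Subtype.val ⁻¹' (ray Θ '' D.blockTips u) := by
    ext ⟨q, hq⟩
    simp only [mem_preimage, mem_compl_iff, mem_iUnion]
    constructor
    · intro h
      obtain ⟨z, hz, rfl⟩ := hE hq
      rw [tips_eq] at hz
      obtain ⟨u, hu⟩ := hz
      exact ⟨u, fun hus => h ⟨z, hus ▸ hu, rfl⟩, z, hu, rfl⟩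
    · rintro ⟨u, hu, z, ⟨y, hy, rfl⟩, rfl⟩ ⟨z', ⟨y', hy', rfl⟩, he⟩
      have := ray_inj Θ he (D.H_pos s hy').ne'
      exact hu (D.loc_injective (congrArg Prod.fst this)).1.symm
  rw [this]
  exact isOpen_biUnion fun u _ => D.isOpen_block Θ u hE

lemma isEmbedding_loc {Z : Type*} [TopologicalSpace Z] (s : List ℕ) {γ : Z → (ℕ → Bool) × ℝ}
    (hγ : IsEmbedding γ) (hpos : ∀ z, 0 < (γ z).2) :
    IsEmbedding fun z => ray Θ (D.loc s (γ z).1, (γ z).2) := by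
  let f : Z → {p : ((ℕ → Bool) × (ℕ → Bool)) × ℝ // 0 < p.2} :=
    fun z => ⟨(D.loc s (γ z).1, (γ z).2), hpos z⟩
  let k : {p : ((ℕ → Bool) × (ℕ → Bool)) × ℝ // 0 < p.2} → (ℕ → Bool) × ℝ :=
    fun p => (fun j => p.1.1.1 (off s + j), p.1.2)
  have hf : Continuous f := by
    refine Continuous.subtype_mk ?_ _
    refine Continuous.prodMk ?_ (continuous_snd.comp hγ.continuous)
    exact ((D.continuous_pos s).comp (continuous_fst.comp hγ.continuous)).prodMk continuous_const
  have hk : Continuous k := by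
    refine Continuous.prodMk (continuous_pi fun j => ?_) (by fun_prop)
    exact (continuous_apply _).comp
      (continuous_fst.comp (continuous_fst.comp continuous_subtype_val))
  have hkf : k ∘ f = γ := by
    funext z
    refine Prod.ext (funext fun j => ?_) rfl
    exact D.pos_shift s _ j
  exact (isEmbedding_ray Θ).comp (IsEmbedding.of_comp hf hk (hkf ▸ hγ))

/-- The endpoints outside the root block are a topological sum of copies of the endpoints of the
single blocks. -/
lemma homeo_blocks {Z : Type*} [TopologicalSpace Z] (node : ℕ → List ℕ)
    (hinj : Function.Injective node) (hrange : range node = {s | s ≠ []})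
    (γ : ℕ → Z → (ℕ → Bool) × ℝ) (hγ : ∀ n, IsEmbedding (γ n))
    (hγr : ∀ n, range (γ n) =
      {p | p.1 ∈ D.Y (node n) ∧ p.2 = D.hgt (node n) * D.G (node n) p.1}) :
    Nonempty (↥(ray Θ '' {z | ∃ s, s ≠ [] ∧ z ∈ D.blockTips s}) ≃ₜ ℕ × Z) := by
  set E := ray Θ '' {z | ∃ s, s ≠ [] ∧ z ∈ D.blockTips s} with hEdef
  have hE : E ⊆ ray Θ '' tips D.prof := by
    refine image_mono ?_
    rw [tips_eq]; rintro z ⟨s, -, h⟩; exact ⟨s, h⟩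
  have hmem : ∀ n z, (γ n z).1 ∈ D.Y (node n) ∧
      (γ n z).2 = D.hgt (node n) * D.G (node n) (γ n z).1 := fun n z => by
    have := mem_range_self (f := γ n) z
    rwa [hγr n] at this
  have hnode : ∀ n, node n ≠ [] := fun n => by
    have := mem_range_self (f := node) n
    rwa [hrange] at this
  have hpos : ∀ n z, 0 < (γ n z).2 := fun n z => by
    rw [(hmem n z).2]; exact D.H_pos _ (hmem n z).1
  have hbt : ∀ n z, (D.loc (node n) (γ n z).1, (γ n z).2) ∈ D.blockTips (node n) :=
    fun n z => ⟨_, (hmem n z).1, Prod.ext rfl (hmem n z).2⟩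
  let F : ℕ × Z → E := fun q => ⟨ray Θ (D.loc (node q.1) (γ q.1 q.2).1, (γ q.1 q.2).2),
    _, ⟨node q.1, hnode _, hbt q.1 q.2⟩, rfl⟩
  have hemb : ∀ n, IsEmbedding fun z => F (n, z) := fun n =>
    IsEmbedding.of_comp (((D.isEmbedding_loc Θ (node n) (hγ n) (hpos n)).continuous).subtype_mk _)
      continuous_subtype_val (D.isEmbedding_loc Θ (node n) (hγ n) (hpos n))
  have hr : ∀ n, range (fun z => F (n, z)) = Subtype.val ⁻¹' (ray Θ '' D.blockTips (node n)) := by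
    intro n
    ext ⟨q, hq⟩
    constructor
    · rintro ⟨z, hz⟩
      exact ⟨_, hbt n z, congrArg Subtype.val hz⟩
    · rintro ⟨_, ⟨y, hy, rfl⟩, he⟩
      have : (y, D.hgt (node n) * D.G (node n) y) ∈ range (γ n) := by
        rw [hγr n]; exact ⟨hy, rfl⟩
      obtain ⟨z, hz⟩ := this
      refine ⟨z, Subtype.ext ?_⟩
      simp only [F, hz]; exact he
  have hopen : ∀ n, IsOpenMap fun z => F (n, z) := fun n =>
    (hemb n).toIsInducing.isOpenMap (hr n ▸ D.isOpen_block Θ _ hE)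
  have hbij : Function.Bijective F := by
    constructor
    · rintro ⟨n, z⟩ ⟨m, w⟩ h
      have h' := ray_inj Θ (congrArg Subtype.val h) (hpos n z).ne'
      have hnm := hinj (D.loc_injective (congrArg Prod.fst h')).1
      subst hnm
      rw [(hemb n).injective h]
    · rintro ⟨_, z, ⟨s, hs, hz⟩, rfl⟩
      have : s ∈ range node := by rw [hrange]; exact hs
      obtain ⟨n, rfl⟩ := this
      have : (⟨ray Θ z, z, ⟨_, hs, hz⟩, rfl⟩ : E) ∈ range fun w => F (n, w) := by
        rw [hr n]; exact ⟨z, hz, rfl⟩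
      obtain ⟨w, hw⟩ := this
      exact ⟨(n, w), hw⟩
  have hcont : Continuous F := continuous_iff_continuousAt.2 fun q => by
    exact (continuous_prod_of_discrete_left.2 fun n => (hemb n).continuous).continuousAt
  have hFo : IsOpenMap F := by
    intro U hU
    have : F '' U = ⋃ n, (fun z => F (n, z)) '' ((fun z => (n, z)) ⁻¹' U) := by
      ext q
      simp only [mem_iUnion]
      constructor
      · rintro ⟨⟨n, z⟩, h, rfl⟩; exact ⟨n, z, h, rfl⟩
      · rintro ⟨n, z, h, rfl⟩; exact ⟨(n, z), h, rfl⟩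
    rw [this]
    exact isOpen_iUnion fun n => hopen n _ (hU.preimage (by fun_prop))
  exact ⟨((Equiv.ofBijective F hbij).toHomeomorphOfContinuousOpen hcont hFo).symm⟩

end FanData

/-! ### Prescribed traces -/

/-- A compact subset of `(0,1)` has order isomorphic copies in every interval `(0,b]`: apply a high
power map. -/
lemma exists_small_copy {K : Set ℝ} (hK : IsCompact K) (hK1 : K ⊆ Ioo 0 1) {b : ℝ} (hb : 0 < b) :
    ∃ K' : Set ℝ, IsClosed K' ∧ (∀ x ∈ K', 0 < x ∧ x ≤ b) ∧ OrderIsomorphic K' K := by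
  obtain ⟨m, hm0, hm1, hm⟩ : ∃ m : ℝ, 0 ≤ m ∧ m < 1 ∧ ∀ x ∈ K, x ≤ m := by
    rcases K.eq_empty_or_nonempty with rfl | hne
    · exact ⟨0, le_rfl, one_pos, by simp⟩
    · obtain ⟨m, hmK, hm⟩ := hK.exists_isGreatest hne
      exact ⟨m, (hK1 hmK).1.le, (hK1 hmK).2, fun x hx => hm hx⟩
  obtain ⟨N, hN⟩ := exists_pow_lt_of_lt_one hb hm1
  have hN' : m ^ (N + 1) ≤ b := (pow_le_pow_of_le_one hm0 hm1.le (Nat.le_succ N)).trans hN.le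
  let f : Icc (0:ℝ) 1 → Icc (0:ℝ) 1 :=
    fun x => ⟨(x:ℝ) ^ (N + 1), pow_nonneg x.2.1 _, pow_le_one₀ x.2.1 x.2.2⟩
  have hf : StrictMono f := fun x y hxy => pow_lt_pow_left₀ hxy x.2.1 (Nat.succ_ne_zero N)
  have hs : Function.Surjective f := by
    have hc : ContinuousOn (fun x : ℝ => x ^ (N + 1)) (Icc 0 1) := by fun_prop
    intro y
    obtain ⟨x, hx, hxy⟩ := intermediate_value_Icc zero_le_one hc
      (show (y:ℝ) ∈ Icc ((0:ℝ) ^ (N+1)) (1 ^ (N+1)) by simp)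
    exact ⟨⟨x, hx⟩, Subtype.ext hxy⟩
  let e := hf.orderIsoOfSurjective f hs
  have he : ∀ x, e x = f x := fun x => rfl
  refine ⟨(fun x => x ^ (N + 1)) '' K, (hK.image (by fun_prop)).isClosed, ?_,
    e.symm.toHomeomorph, e.symm.strictMono, ?_⟩
  · rintro _ ⟨x, hx, rfl⟩
    exact ⟨pow_pos (hK1 hx).1 _, (pow_le_pow_left₀ (hK1 hx).1.le (hm x hx) _).trans hN'⟩
  · ext x
    constructor
    · rintro ⟨_, ⟨z, ⟨w, hw, hwz⟩, rfl⟩, rfl⟩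
      have : z = e ⟨w, Ioo_subset_Icc_self (hK1 hw)⟩ := Subtype.ext hwz.symm
      rw [this]
      simpa using hw
    · intro hx
      refine ⟨⟨x, Ioo_subset_Icc_self (hK1 hx)⟩, ⟨e ⟨x, Ioo_subset_Icc_self (hK1 hx)⟩, ⟨x, hx, rfl⟩,
        ?_⟩, rfl⟩
      simp

lemma OrderIsomorphic.nonempty {A K : Set ℝ} (h : OrderIsomorphic A K) (hK : K.Nonempty) :
    A.Nonempty := by
  obtain ⟨h, -, rfl⟩ := h
  obtain ⟨_, _, ⟨z, hz, -⟩, -⟩ := hK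
  exact ⟨z, hz⟩

/-- A sequence in `S` for which every point of `S` is a cluster point: a dense sequence in which every
term is repeated infinitely often. -/
lemma exists_cluster_seq {S : Set ((ℕ → Bool) × ℝ)} (hS : S.Nonempty) :
    ∃ pt : ℕ → (ℕ → Bool) × ℝ, (∀ i, pt i ∈ S) ∧ ∀ p ∈ S, ∀ N : ℕ, ∃ i, N ≤ i ∧
      (∀ j < N, (pt i).1 j = p.1 j) ∧ |(pt i).2 - p.2| < 1 / ((N : ℝ) + 1) := by
  have : Nonempty S := hS.to_subtype
  refine ⟨fun i => TopologicalSpace.denseSeq S i.unpair.1, fun i => Subtype.property _, ?_⟩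
  rintro ⟨c, t⟩ hp N
  have h : (c, t) ∈ closure (range fun i => (TopologicalSpace.denseSeq S i : (ℕ → Bool) × ℝ)) := by
    have h1 := TopologicalSpace.denseRange_denseSeq S ⟨(c, t), hp⟩
    have h2 := image_closure_subset_closure_image continuous_subtype_val
      (mem_image_of_mem Subtype.val h1)
    rwa [← range_comp] at h2
  obtain ⟨_, ⟨i, rfl⟩, h1, h2⟩ := mem_closure_code'.1 h N
  exact ⟨Nat.pair i N, Nat.right_le_pair i N, by simpa using h1, by simpa using h2⟩

/-- An enumeration of the nodes other than the root. -/
def node (n : ℕ) : List ℕ :=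
  (Denumerable.ofNat (ℕ × List ℕ) n).1 :: (Denumerable.ofNat (ℕ × List ℕ) n).2

/-- The inverse of the enumeration `node`, with the junk value `0` at the root. -/
def num : List ℕ → ℕ
  | [] => 0
  | i :: s => Encodable.encode (i, s)

lemma num_node (n : ℕ) : num (node n) = n := by simp [num, node]

lemma node_ne_nil (n : ℕ) : node n ≠ [] := by simp [node]

lemma node_injective : Function.Injective node := fun m n h => by
  rw [← num_node m, h, num_node]

lemma range_node : range node = {s | s ≠ []} := by
  ext s
  constructor
  · rintro ⟨n, rfl⟩; exact node_ne_nil n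
  · intro h
    cases s with
    | nil => exact absurd rfl h
    | cons i s => exact ⟨Encodable.encode (i, s), by simp [node]⟩

/-- A model for the blocks that are added: legs over the closed set `B`, whose heights exceed the
height of the distinguished leg `d` by a multiple of the upper semicontinuous function `ψ`. The
endpoints of such a block form a copy of the graph of `ψ` over `B`. -/
structure BlockModel where
  B : Set (ℕ → Bool)
  ψ : (ℕ → Bool) → ℝ
  d : ℕ → Bool
  closed : IsClosed B
  nonneg : ∀ y, 0 ≤ ψ y
  le_one : ∀ y, ψ y ≤ 1
  hypo_closed : IsClosed {p : (ℕ → Bool) × ℝ | p.1 ∈ B ∧ p.2 ≤ ψ p.1}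
  d_mem : d ∈ B
  ψ_d : ψ d = 0

/-- The data for the extension: the root block is the given fan, the other blocks are copies of the
model, the traces on the distinguished legs are the given compact sets, and all other legs
carry accumulation points of arbitrarily small height. -/
lemma exists_fanData (M : BlockModel) {φ : (ℕ → Bool) → ℝ} (hφ : IsProfile φ) {ε : ℝ} (hε : 0 < ε)
    (hε1 : ε ≤ 1) (hφε : ∀ y, 0 < φ y → ε ≤ φ y) (hne : ∃ y, 0 < φ y) {K : ℕ → Set ℝ}
    (hK : ∀ n, IsCompact (K n) ∧ K n ⊆ Ioo (0:ℝ) 1)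
    (hKne : (∀ n, (K n).Nonempty) ∨ ∃ y ∈ M.B, y ≠ M.d) :
    ∃ D : FanData, D.Y [] = {y | 0 < φ y} ∧ D.G [] = φ ∧ (∀ s, s ≠ [] → D.Y s = M.B) ∧
      (∀ s, s ≠ [] → D.G s = fun y => 1 + (1 / 2) ^ off s * M.ψ y) ∧ D.d = M.d ∧
      (∀ n, OrderIsomorphic {x | (D.d, x) ∈ D.S (node n)} (K n)) ∧
      (∀ s, ∀ y ∈ D.Y s, (s = [] ∨ y ≠ D.d) → ∀ η > 0, ∃ x < η, (y, x) ∈ D.S s) := by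
  let Θ0 : (ℕ → Bool) ≃ₜ cantorSet := cantorSetHomeomorphNatToBool.symm
  let δ : (ℕ → Bool) → ℝ := fun y => |(Θ0 y : ℝ) - Θ0 M.d|
  have hδ : Continuous δ := by fun_prop
  have hδ1 : ∀ y, δ y ≤ 1 := fun y => by
    have h1 := cantorSet_subset_unitInterval (Θ0 y).2
    have h2 := cantorSet_subset_unitInterval (Θ0 M.d).2
    exact abs_le.2 ⟨by linarith [h1.1, h2.2], by linarith [h1.2, h2.1]⟩
  have hδ0 : ∀ y, 0 ≤ δ y := fun y => abs_nonneg _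
  have hδpos : ∀ y, y ≠ M.d → 0 < δ y := fun y hy => abs_pos.2 fun h =>
    hy (Θ0.injective (Subtype.ext (sub_eq_zero.1 h)))
  let Y : List ℕ → Set (ℕ → Bool) := fun
    | [] => {y | 0 < φ y}
    | _ :: _ => M.B
  let G : List ℕ → (ℕ → Bool) → ℝ := fun
    | [] => φ
    | i :: s => fun y => 1 + (1 / 2) ^ off (i :: s) * M.ψ y
  let β : List ℕ → ℝ := fun
    | [] => ε / 2
    | i :: s => (1 / 2) ^ (off (i :: s) + 1)
  have hβ : ∀ s, 0 < β s := by
    rintro (_ | ⟨i, s⟩)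
    · exact half_pos hε
    · exact pow_pos (by norm_num) _
  choose K' hK'c hK'b hK'i using fun s => exists_small_copy (hK (num s)).1 (hK (num s)).2 (hβ s)
  -- `δ` is positive off `d`, so every other leg carries an initial interval of prescribed points,
  -- while on the leg `d` only the small copy of `K n` remains
  let S : List ℕ → Set ((ℕ → Bool) × ℝ) := fun
    | [] => {p | 0 < φ p.1 ∧ 0 < p.2 ∧ p.2 ≤ β []}
    | i :: s => {p | p.1 = M.d ∧ p.2 ∈ K' (i :: s)} ∪
        {p | p.1 ∈ M.B ∧ 0 < p.2 ∧ p.2 ≤ β (i :: s) * δ p.1}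
  have hroot : ∀ y, 0 < φ y ↔ ε ≤ φ y := fun y => ⟨hφε y, fun h => hε.trans_le h⟩
  have hYroot : IsClosed {y | 0 < φ y} := by
    simp only [hroot]
    exact hφ.closed.preimage (by fun_prop : Continuous fun y : ℕ → Bool => (y, ε))
  have hYc : ∀ s, IsClosed (Y s) := by
    rintro (_ | ⟨i, s⟩)
    · exact hYroot
    · exact M.closed
  have hsmall : ∀ s, ∀ y ∈ Y s, (s = [] ∨ y ≠ M.d) → ∀ η > 0, ∃ x < η, (y, x) ∈ S s := by
    rintro (_ | ⟨i, s⟩) y hy hd η hη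
    · have := hβ []
      exact ⟨min (η / 2) (β []), (min_le_left _ _).trans_lt (half_lt_self hη), hy,
        lt_min (half_pos hη) this, min_le_right _ _⟩
    · have h1 := mul_pos (hβ (i :: s)) (hδpos y (hd.resolve_left (by simp)))
      exact ⟨min (η / 2) (β (i :: s) * δ y), (min_le_left _ _).trans_lt (half_lt_self hη), Or.inr
        ⟨hy, lt_min (half_pos hη) h1, min_le_right _ _⟩⟩
  have hSne : ∀ s, (S s).Nonempty := by
    rintro (_ | ⟨i, s⟩)
    · obtain ⟨y, hy⟩ := hne
      obtain ⟨x, -, hx⟩ := hsmall [] y hy (Or.inl rfl) 1 one_pos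
      exact ⟨_, hx⟩
    · rcases hKne with h | ⟨y, hy, hyd⟩
      · obtain ⟨x, hx⟩ := (hK'i (i :: s)).nonempty (h _)
        exact ⟨(M.d, x), Or.inl ⟨rfl, hx⟩⟩
      · obtain ⟨x, -, hx⟩ := hsmall (i :: s) y hy (Or.inr hyd) 1 one_pos
        exact ⟨_, hx⟩
  choose pt hptS hptc using fun s => exists_cluster_seq (hSne s)
  let D : FanData :=
    { Y := Y, G := G, β := β, S := S, pt := pt, d := M.d
      Y_closed := hYc
      hypo_closed := by
        rintro (_ | ⟨i, s⟩)
        · exact (hYroot.preimage continuous_fst).inter hφ.closed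
        · have hc : (0:ℝ) < (1 / 2) ^ off (i :: s) := pow_pos (by norm_num) _
          have := M.hypo_closed.preimage (by fun_prop : Continuous fun p : (ℕ → Bool) × ℝ =>
            (p.1, (p.2 - 1) / (1 / 2) ^ off (i :: s)))
          convert this using 1
          ext p
          simp only [mem_preimage, mem_ofPred_eq, div_le_iff₀ hc, Y, G]
          refine and_congr_right fun _ => ?_
          rw [sub_le_iff_le_add', mul_comm]
      β_pos := hβ
      β_le := by
        rintro (_ | ⟨i, s⟩)
        · simp only [off, β]; linarith
        · exact le_rfl
      β_lt := by
        rintro (_ | ⟨i, s⟩) y hy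
        · have := hφε y hy
          simp only [β, G]; linarith
        · have h1 : ((1:ℝ)/2) ^ (off (i :: s) + 1) < 1 :=
            pow_lt_one₀ (by norm_num) (by norm_num) (by omega)
          have h2 : 0 ≤ (1/2) ^ off (i :: s) * M.ψ y :=
            mul_nonneg (pow_nonneg (by norm_num) _) (M.nonneg y)
          simp only [β, G]; linarith
      G_root := fun y _ => hφ.le_one y
      G_ge := by
        rintro (_ | ⟨i, s⟩) hs y hy
        · exact absurd rfl hs
        · have h2 : 0 ≤ (1/2) ^ off (i :: s) * M.ψ y :=
            mul_nonneg (pow_nonneg (by norm_num) _) (M.nonneg y)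
          simp only [G]; linarith
      G_le := by
        rintro (_ | ⟨i, s⟩) hs y hy
        · exact absurd rfl hs
        · have h2 : (1/2) ^ off (i :: s) * M.ψ y ≤ (1/2) ^ off (i :: s) :=
            mul_le_of_le_one_right (pow_nonneg (by norm_num) _) (M.le_one y)
          simp only [G]; linarith
      S_sub := by
        rintro (_ | ⟨i, s⟩) p hp
        · exact hp
        · rcases hp with ⟨h1, h2⟩ | ⟨h1, h2, h3⟩
          · exact ⟨h1 ▸ M.d_mem, hK'b _ _ h2⟩
          · exact ⟨h1, h2, h3.trans (mul_le_of_le_one_right (hβ (i :: s)).le (hδ1 _))⟩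
      S_closed := by
        rintro (_ | ⟨i, s⟩) p hp h0
        · have hc : IsClosed {p : (ℕ → Bool) × ℝ | 0 < φ p.1 ∧ p.2 ≤ β []} :=
            (hYroot.preimage continuous_fst).inter (isClosed_le continuous_snd continuous_const)
          have := closure_minimal (fun q (hq : q ∈ S []) => (⟨hq.1, hq.2.2⟩ : _ ∧ _)) hc hp
          exact ⟨this.1, h0, this.2⟩
        · have hc1 : IsClosed {p : (ℕ → Bool) × ℝ | p.1 = M.d ∧ p.2 ∈ K' (i :: s)} :=
            (isClosed_eq continuous_fst continuous_const).inter
              ((hK'c _).preimage continuous_snd)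
          have hc2 : IsClosed {p : (ℕ → Bool) × ℝ | p.1 ∈ M.B ∧ p.2 ≤ β (i :: s) * δ p.1} :=
            (M.closed.preimage continuous_fst).inter (isClosed_le continuous_snd
              (continuous_const.mul (hδ.comp continuous_fst)))
          have := closure_minimal (fun q (hq : q ∈ S (i :: s)) =>
            hq.imp id (fun h => (⟨h.1, h.2.2⟩ : _ ∧ _))) (hc1.union hc2) hp
          exact this.imp id fun h => ⟨h.1, h0, h.2⟩
      pt_mem := hptS
      pt_cluster := hptc
      d_mem := by
        rintro (_ | ⟨i, s⟩) hs
        · exact absurd rfl hs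
        · exact M.d_mem
      d_G := by
        rintro (_ | ⟨i, s⟩) hs
        · exact absurd rfl hs
        · simp [G, M.ψ_d] }
  refine ⟨D, rfl, rfl, ?_, ?_, rfl, fun n => ?_, hsmall⟩
  · rintro (_ | ⟨i, s⟩) hs
    · exact absurd rfl hs
    · rfl
  · rintro (_ | ⟨i, s⟩) hs
    · exact absurd rfl hs
    · rfl
  · have h := hK'i (node n)
    rw [num_node] at h
    convert h using 1
    ext x
    -- the second part of `S` misses the leg `d`, because `δ` vanishes there
    have hδd : δ M.d = 0 := by simp [δ]
    constructor
    · rintro (⟨-, h⟩ | ⟨-, h1, h2⟩)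
      · exact h
      · simp only [D, hδd, mul_zero] at h1 h2; linarith
    · exact fun h => Or.inl ⟨rfl, h⟩

/-! ### The extension for a given model of the added blocks -/

/-- Pairs of binary sequences parametrize the Cantor set. -/
def pairCode : ((ℕ → Bool) × (ℕ → Bool)) ≃ₜ cantorSet :=
  (Homeomorph.sumArrowHomeomorphProdArrow.symm.trans
    (Homeomorph.piCongrLeft (Y := fun _ => Bool) Equiv.natSumNatEquivNat)).trans
      cantorSetHomeomorphNatToBool.symm

/-- The inclusion of a fan into the fan assembled around it. It is the identity in leg coordinates, and
it is read off from the compact set of these coordinates, of which the fan is a quotient. -/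
lemma exists_root_embedding (D : FanData) {φ : (ℕ → Bool) → ℝ} (hφ : IsProfile φ)
    (Θ0 : (ℕ → Bool) ≃ₜ cantorSet) (Θ : ((ℕ → Bool) × (ℕ → Bool)) ≃ₜ cantorSet)
    (hY : D.Y [] = {y | 0 < φ y}) (hG : D.G [] = φ) :
    ∃ g : ↥(fanOf Θ0 φ) → ↥(D.fan Θ), IsEmbedding g ∧
      ∀ x : ↥(fanOf Θ0 φ), ∀ p : (ℕ → Bool) × ℝ, p.2 ≠ 0 → ray Θ0 p = x →
        (g x : ℝ × ℝ) = ray Θ (D.loc [] p.1, p.2) := by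
  have hP : ∀ p : (ℕ → Bool) × ℝ, 0 ≤ p.2 ∧ p.2 ≤ φ p.1 →
      ray Θ (D.loc [] p.1, p.2) ∈ D.fan Θ := by
    rintro ⟨y, t⟩ ⟨h0, h1⟩
    refine ⟨_, ⟨h0, ?_⟩, rfl⟩
    simp only at h0 h1 ⊢
    rcases (hφ.nonneg y).eq_or_lt with h | h
    · rw [← h] at h1; exact h1.trans (D.prof_nonneg _)
    · rw [D.prof_loc (hY ▸ h), hG, FanData.hgt, one_mul]; exact h1
  choose c hc hcx using fun x : ↥(fanOf Θ0 φ) => x.2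
  let g : ↥(fanOf Θ0 φ) → ↥(D.fan Θ) := fun x => ⟨_, hP _ (hc x)⟩
  have hg : ∀ x : ↥(fanOf Θ0 φ), ∀ p : (ℕ → Bool) × ℝ, ray Θ0 p = x →
      (g x : ℝ × ℝ) = ray Θ (D.loc [] p.1, p.2) := by
    intro x p hp
    have h := (hcx x).trans hp.symm
    by_cases h0 : (c x).2 = 0
    · have h1 : p.2 = 0 := by
        have := congrArg (fun q : ℝ × ℝ => q.2) h
        exact this.symm.trans h0
      simp only [g, h0, h1, ray_zero]
    · simp only [g, ray_inj Θ0 h h0]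
  have hcomp : IsCompact {p : (ℕ → Bool) × ℝ | 0 ≤ p.2 ∧ p.2 ≤ φ p.1} := isCompact_sub Θ0 hφ
  have : CompactSpace {p : (ℕ → Bool) × ℝ | 0 ≤ p.2 ∧ p.2 ≤ φ p.1} :=
    isCompact_iff_compactSpace.1 hcomp
  let q : {p : (ℕ → Bool) × ℝ | 0 ≤ p.2 ∧ p.2 ≤ φ p.1} → ↥(fanOf Θ0 φ) :=
    fun p => ⟨ray Θ0 p.1, p.1, p.2, rfl⟩
  have hq : Continuous q := ((continuous_ray Θ0).comp continuous_subtype_val).subtype_mk _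
  have hqs : Function.Surjective q := by
    rintro ⟨_, p, hp, rfl⟩; exact ⟨⟨p, hp⟩, rfl⟩
  have hgc : Continuous g := by
    rw [(hq.isClosedMap.isQuotientMap hq hqs).continuous_iff]
    refine continuous_induced_rng.2 ?_
    have : (Subtype.val ∘ g ∘ q) = fun p => ray Θ (D.loc [] p.1.1, p.1.2) :=
      funext fun p => hg (q p) p.1 rfl
    rw [this]
    refine (continuous_ray Θ).comp (Continuous.prodMk ?_ (by fun_prop))
    exact ((D.continuous_pos []).comp (by fun_prop)).prodMk continuous_const
  have hgi : Function.Injective g := by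
    intro x x' h
    have h' : ray Θ (D.loc [] (c x).1, (c x).2) = ray Θ (D.loc [] (c x').1, (c x').2) :=
      congrArg Subtype.val h
    refine Subtype.ext ?_
    rw [← hcx x, ← hcx x']
    by_cases h0 : (c x).2 = 0
    · have h1 : (c x').2 = 0 := (congrArg (fun q : ℝ × ℝ => q.2) h').symm.trans h0
      rw [show c x = ((c x).1, 0) from Prod.ext rfl h0, show c x' = ((c x').1, 0) from Prod.ext rfl h1,
        ray_zero, ray_zero]
    · have h2 := ray_inj Θ h' h0
      rw [Prod.mk.injEq] at h2
      rw [show c x = c x' from Prod.ext (D.loc_injective h2.1).2 h2.2]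
  have : CompactSpace ↥(fanOf Θ0 φ) :=
    isCompact_iff_compactSpace.1 (hcomp.image (continuous_ray Θ0))
  exact ⟨g, (hgc.isClosedEmbedding hgi).isEmbedding, fun x p _ h => hg x p h⟩

/-- The extension theorem for a given model of the added blocks. Some prescribed point is needed in every
added block; if the `K n` may be empty, a leg besides the distinguished one provides it. -/
theorem exists_extension (M : BlockModel) {K : ℕ → Set ℝ} (hK : KFamily K)
    (hKne : (∀ n, (K n).Nonempty) ∨ ∃ y ∈ M.B, y ≠ M.d) {X : Set (ℝ × ℝ)} (hX : IsSmoothFan X)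
    (hp : fanVertex ∉ closure (Endpoints X)) :
    ∃ (X' : Set (ℝ × ℝ)) (e : ℕ → ℝ × ℝ) (g : ↥X → ↥X'),
        IsKFanExtension K X X' e g ∧
        IsClopen (Subtype.val ⁻¹' imageOfEndpoints X X' g : Set ↥(Endpoints X')) ∧
        (M.B ⊆ {M.d} → Endpoints X' \ imageOfEndpoints X X' g = Set.range e) ∧
        Nonempty (↥(Endpoints X' \ imageOfEndpoints X X' g) ≃ₜ
          ℕ × ↥{p : (ℕ → Bool) × ℝ | p.1 ∈ M.B ∧ p.2 = M.ψ p.1}) := by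
  let Θ0 : (ℕ → Bool) ≃ₜ cantorSet := cantorSetHomeomorphNatToBool.symm
  obtain ⟨φ, hφ, rfl⟩ := exists_profile Θ0 hX
  have hEX := endpoints_fanOf Θ0 hφ hX.vertex_order
  obtain ⟨ε, hε, hε1, hφε⟩ : ∃ ε : ℝ, 0 < ε ∧ ε ≤ 1 ∧ ∀ y, 0 < φ y → ε ≤ φ y := by
    obtain ⟨r, hr, hball⟩ := Metric.isOpen_iff.1 isClosed_closure.isOpen_compl _ hp
    refine ⟨min r 1, lt_min hr one_pos, min_le_right _ _, fun y hy => ?_⟩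
    refine (min_le_left _ _).trans (not_lt.1 fun hlt => ?_)
    have hmem : ray Θ0 (y, φ y) ∈ Metric.ball fanVertex r := by
      have h1 := cantorSet_subset_unitInterval (Θ0 y).2
      rw [Metric.mem_ball, Prod.dist_eq]
      refine max_lt ?_ ?_
      · simp only [ray, fanVertex, Real.dist_eq, sub_zero, abs_mul, abs_of_pos hy,
          abs_of_nonneg h1.1]
        exact lt_of_le_of_lt (mul_le_of_le_one_right hy.le h1.2) hlt
      · simp only [ray, fanVertex, Real.dist_eq, sub_zero, abs_of_pos hy]; exact hlt
    exact hball hmem (subset_closure (hEX ▸ ⟨(y, φ y), ⟨hy, rfl⟩, rfl⟩))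
  have hne : ∃ y, 0 < φ y := by
    by_contra! hcon
    obtain ⟨_, ⟨p, hp1, rfl⟩, _, ⟨p', hp1', rfl⟩, hxy⟩ := hX.nondegenerate
    refine hxy ?_
    have h0 : p.2 = 0 := le_antisymm (hp1.2.trans (hcon _)) hp1.1
    have h1 : p'.2 = 0 := le_antisymm (hp1'.2.trans (hcon _)) hp1'.1
    rw [show p = (p.1, 0) from Prod.ext rfl h0, show p' = (p'.1, 0) from Prod.ext rfl h1,
        ray_zero, ray_zero]
  obtain ⟨D, hY, hG, hYs, hGs, hd, hiso, hsmall⟩ := exists_fanData M hφ hε hε1 hφε hne hK.1 hKne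
  have hYne : (D.Y []).Nonempty := by rw [hY]; exact hne
  obtain ⟨g, hg, hgr⟩ := exists_root_embedding D hφ Θ0 pairCode hY hG
  have hE := D.endpoints_fan pairCode hYne
  let e : ℕ → ℝ × ℝ := fun n => ray pairCode (D.loc (node n) D.d, D.hgt (node n))
  have hrange : range e = ray pairCode '' {z | ∃ u, u ≠ [] ∧ z = (D.loc u D.d, D.hgt u)} := by
    ext q
    constructor
    · rintro ⟨n, rfl⟩; exact ⟨_, ⟨_, node_ne_nil n, rfl⟩, rfl⟩
    · rintro ⟨_, ⟨u, hu, rfl⟩, rfl⟩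
      have : u ∈ range node := by rw [range_node]; exact hu
      obtain ⟨n, rfl⟩ := this
      exact ⟨n, rfl⟩
  have himage : imageOfEndpoints (fanOf Θ0 φ) (D.fan pairCode) g =
      ray pairCode '' D.blockTips [] := by
    ext q
    constructor
    · rintro ⟨x, hx, rfl⟩
      rw [mem_ofPred_eq, hEX] at hx
      obtain ⟨⟨y, t⟩, ⟨h0, h1⟩, hyt⟩ := hx
      simp only at h0 h1
      refine ⟨(D.loc [] y, t), ⟨y, hY ▸ (h1 ▸ h0 : 0 < φ y), ?_⟩, (hgr x (y, t) h0.ne' hyt).symm⟩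
      rw [hG, FanData.hgt, one_mul, ← h1]
    · rintro ⟨_, ⟨y, hy, rfl⟩, rfl⟩
      rw [hY] at hy
      have hy0 : 0 < φ y := hy
      have hx : ray Θ0 (y, φ y) ∈ Endpoints (fanOf Θ0 φ) := hEX ▸ ⟨(y, φ y), ⟨hy0, rfl⟩, rfl⟩
      refine ⟨⟨_, hx.1⟩, hx, ?_⟩
      simp only
      rw [hgr _ (y, φ y) hy0.ne' rfl, hG, FanData.hgt, one_mul]
  have hdiff : Endpoints (D.fan pairCode) \ ray pairCode '' D.blockTips [] =
      ray pairCode '' {z | ∃ s, s ≠ [] ∧ z ∈ D.blockTips s} := by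
    rw [hE, D.tips_eq]
    ext q
    constructor
    · rintro ⟨⟨z, ⟨s, hs⟩, rfl⟩, hn⟩
      exact ⟨z, ⟨s, fun h => hn ⟨z, h ▸ hs, rfl⟩, hs⟩, rfl⟩
    · rintro ⟨z, ⟨s, hs, hz⟩, rfl⟩
      refine ⟨⟨z, ⟨s, hz⟩, rfl⟩, ?_⟩
      rintro ⟨z', ⟨y', hy', rfl⟩, he⟩
      have := ray_inj pairCode he (D.H_pos [] hy').ne'
      subst this
      obtain ⟨y, hy, hyz⟩ := hz
      exact hs (D.loc_injective (congrArg Prod.fst hyz)).1.symm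
  -- an endpoint that is not distinguished carries accumulation points of arbitrarily small height
  have hother : ∀ x ∈ Endpoints (D.fan pairCode) \ range e, ∃ s, ∃ y ∈ D.Y s,
      x = ray pairCode (D.loc s y, D.hgt s * D.G s y) ∧ (s = [] ∨ y ≠ D.d) := by
    rintro x ⟨hx, hxe⟩
    rw [hE, D.tips_eq] at hx
    obtain ⟨_, ⟨s, y, hy, rfl⟩, rfl⟩ := hx
    refine ⟨s, y, hy, rfl, ?_⟩
    by_contra! hcon
    refine hxe (hrange ▸ ⟨_, ⟨s, hcon.1, rfl⟩, ?_⟩)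
    rw [hcon.2, D.d_G s hcon.1, mul_one]
  refine ⟨D.fan pairCode, e, g, ⟨⟨D.isSmoothFan pairCode hYne, ?_, ?_, ?_, ?_⟩, hg, ?_⟩, ?_, ?_, ?_⟩
  · intro n
    rw [hE]
    exact ⟨_, D.dtips_subset ⟨node n, node_ne_nil n, rfl⟩, rfl⟩
  · intro n
    rw [D.trace_d pairCode hYne (node_ne_nil n)]
    exact hiso n
  · intro x hx n
    obtain ⟨s, y, hy, rfl, hsy⟩ := hother x hx
    exact not_orderIsomorphic_of_small (D.trace_sub pairCode hYne hy)
      (D.trace_small pairCode hYne hy (hsmall s y hy hsy)) (hK.1 n).1 (hK.1 n).2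
  · intro x hx
    obtain ⟨s, y, hy, rfl, hsy⟩ := hother x hx
    obtain ⟨t, -, ht⟩ := hsmall s y hy hsy 1 one_pos
    rw [hrange]
    exact D.meets pairCode hy ht
  · intro x hx
    have : (g x : ℝ × ℝ) ∈ imageOfEndpoints (fanOf Θ0 φ) (D.fan pairCode) g := ⟨x, hx, rfl⟩
    rw [himage] at this
    rw [hE, D.tips_eq]
    exact image_mono (fun z hz => (⟨[], hz⟩ : ∃ s, z ∈ D.blockTips s)) this
  · rw [himage]
    exact D.isClopen_block pairCode [] hE.subset
  · intro hB
    rw [himage, hdiff, hrange]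
    congr 1
    ext z
    constructor
    · rintro ⟨s, hs, y, hy, rfl⟩
      rw [hYs s hs] at hy
      have : y = D.d := hd ▸ hB hy
      exact ⟨s, hs, by rw [this, D.d_G s hs, mul_one]⟩
    · rintro ⟨s, hs, rfl⟩
      exact ⟨s, hs, D.d, D.d_mem s hs, by rw [D.d_G s hs, mul_one]⟩
  · rw [himage, hdiff]
    have hc : ∀ n, (1/2:ℝ) ^ off (node n) ≠ 0 := fun n => pow_ne_zero _ (by norm_num)
    refine D.homeo_blocks pairCode node node_injective range_node
      (fun n p => (p.1.1, D.hgt (node n) * (1 + (1/2) ^ off (node n) * p.1.2))) (fun n => ?_)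
      (fun n => ?_)
    · have hcont : Continuous fun p : ↥{p : (ℕ → Bool) × ℝ | p.1 ∈ M.B ∧ p.2 = M.ψ p.1} =>
          (p.1.1, D.hgt (node n) * (1 + (1/2) ^ off (node n) * p.1.2)) := by fun_prop
      have hinv : Continuous fun p : (ℕ → Bool) × ℝ =>
          (p.1, (p.2 / D.hgt (node n) - 1) / (1/2) ^ off (node n)) := by fun_prop
      refine IsEmbedding.of_comp hcont hinv ?_
      convert IsEmbedding.subtypeVal using 1
      funext p
      have h1 := (D.hgt_pos (node n)).ne'
      have h2 := hc n
      refine Prod.ext rfl ?_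
      simp only [Function.comp_apply]
      field_simp
      ring
    · rw [hYs _ (node_ne_nil n), hGs _ (node_ne_nil n)]
      ext ⟨y, t⟩
      constructor
      · rintro ⟨⟨⟨y', r⟩, hy', hr⟩, h⟩
        simp only [Prod.mk.injEq] at h hy' hr
        obtain ⟨rfl, rfl⟩ := h
        subst hr
        exact ⟨hy', rfl⟩
      · rintro ⟨h1, h2⟩
        simp only at h1 h2
        exact ⟨⟨(y, M.ψ y), h1, rfl⟩, by simp only [h2]⟩

/-! ### Models of the added blocks -/

/-- The model in which all legs of an added block have the same height; the endpoints of a block form a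
copy of `B`. -/
def flatModel (B : Set (ℕ → Bool)) (hB : IsClosed B) (d : ℕ → Bool) (hd : d ∈ B) : BlockModel where
  B := B
  ψ := fun _ => 0
  d := d
  closed := hB
  nonneg := fun _ => le_rfl
  le_one := fun _ => zero_le_one
  hypo_closed := (hB.preimage continuous_fst).inter (isClosed_le continuous_snd continuous_const)
  d_mem := hd
  ψ_d := rfl

lemma flat_graph (B : Set (ℕ → Bool)) :
    Nonempty (↥{p : (ℕ → Bool) × ℝ | p.1 ∈ B ∧ p.2 = 0} ≃ₜ B) :=
  ⟨{ toFun := fun p => ⟨p.1.1, p.2.1⟩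
     invFun := fun y => ⟨(y.1, 0), y.2, rfl⟩
     left_inv := fun p => Subtype.ext (Prod.ext rfl p.2.2.symm)
     right_inv := fun _ => rfl
     continuous_toFun := by fun_prop
     continuous_invFun := by fun_prop }⟩

/-- The majorant of the series below, a series with sum `1`. -/
def wt (k : ℕ) : ℝ := 1 / 2 / 2 ^ k

lemma hasSum_wt : HasSum wt 1 := hasSum_geometric_two' 1

lemma wt_pos (k : ℕ) : 0 < wt k := by unfold wt; positivity

/-- Dominated sums of upper semicontinuous functions are upper semicontinuous: they are infima of partial
sums plus tails of the majorant. -/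
lemma isClosed_hypo_tsum {C : Type*} [TopologicalSpace C] {z : ℕ → C → ℝ}
    (hz : ∀ k, UpperSemicontinuous (z k)) (h0 : ∀ k x, 0 ≤ z k x) (h1 : ∀ k x, z k x ≤ wt k) :
    IsClosed {p : C × ℝ | p.2 ≤ ∑' k, z k p.1} := by
  have hsum : ∀ x, Summable fun k => z k x := fun x =>
    Summable.of_nonneg_of_le (fun k => h0 k x) (fun k => h1 k x) hasSum_wt.summable
  have : {p : C × ℝ | p.2 ≤ ∑' k, z k p.1} = ⋂ m : ℕ, {p : C × ℝ | p.2 ≤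
      ∑ k ∈ Finset.range m, z k p.1 + (1 - ∑ k ∈ Finset.range m, wt k)} := by
    ext ⟨x, t⟩
    simp only [mem_iInter, mem_ofPred_eq]
    constructor
    · intro h m
      have h2 := (hasSum_wt.summable.sub (hsum x)).sum_le_tsum (Finset.range m)
        (fun k _ => sub_nonneg.2 (h1 k x))
      rw [hasSum_wt.summable.tsum_sub (hsum x), hasSum_wt.tsum_eq, Finset.sum_sub_distrib] at h2
      linarith
    · intro h
      have h2 := ((hsum x).hasSum.tendsto_sum_nat).add
        (hasSum_wt.tendsto_sum_nat.const_sub 1)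
      rw [sub_self, add_zero] at h2
      exact ge_of_tendsto' h2 h
  rw [this]
  refine isClosed_iInter fun m => ?_
  exact ((upperSemicontinuous_sum fun k _ => hz k).add
    continuous_const.upperSemicontinuous).IsClosed_hypograph

/-- The binary matrices whose row `i` vanishes; matrices are coded by sequences via pairing. -/
def emptyRow (i : ℕ) : Set (ℕ → Bool) := {x | ∀ j, x (Nat.pair i j) = false}

/-- The binary matrices with at most one true entry in every row. -/
def thinMatrices : Set (ℕ → Bool) :=
  {x | ∀ i j k, x (Nat.pair i j) = true → x (Nat.pair i k) = true → j = k}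

lemma isClosed_emptyRow (i : ℕ) : IsClosed (emptyRow i) := by
  simp only [emptyRow, ofPred_forall]
  exact isClosed_iInter fun j => isClosed_eq (continuous_apply _) continuous_const

lemma isClosed_thinMatrices : IsClosed thinMatrices := by
  simp only [thinMatrices, ofPred_forall]
  refine isClosed_iInter fun i => isClosed_iInter fun j => isClosed_iInter fun k => ?_
  by_cases hjk : j = k
  · simp [hjk]
  · have : {x : ℕ → Bool | x (Nat.pair i j) = true → x (Nat.pair i k) = true → j = k} =
        {x | (x (Nat.pair i j) && x (Nat.pair i k)) = false} := by
      ext x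
      simp only [mem_ofPred_eq, hjk]
      cases x (Nat.pair i j) <;> cases x (Nat.pair i k) <;> simp
    rw [this]
    refine (isClosed_discrete {false}).preimage
      (f := fun x : ℕ → Bool => (x (Nat.pair i j) && x (Nat.pair i k))) ?_
    have h : Continuous fun x : ℕ → Bool => (x (Nat.pair i j), x (Nat.pair i k)) :=
      (continuous_apply _).prodMk (continuous_apply _)
    exact (continuous_of_discreteTopology (f := fun q : Bool × Bool => (q.1 && q.2))).comp h

/-- The contribution of row `i` to the height. -/
def rowWt (i : ℕ) : (ℕ → Bool) → ℝ := (emptyRow i).indicator fun _ => wt i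

lemma rowWt_usc (i : ℕ) : UpperSemicontinuous (rowWt i) :=
  (isClosed_emptyRow i).upperSemicontinuous_indicator (wt_pos i).le

lemma rowWt_nonneg (i : ℕ) (x : ℕ → Bool) : 0 ≤ rowWt i x :=
  indicator_nonneg (fun _ _ => (wt_pos i).le) x

lemma rowWt_le (i : ℕ) (x : ℕ → Bool) : rowWt i x ≤ wt i :=
  indicator_le_self' (fun _ _ => (wt_pos i).le) x

lemma rowWt_pos {i : ℕ} {x : ℕ → Bool} : 0 < rowWt i x ↔ x ∈ emptyRow i := by
  classical
  rw [rowWt, indicator_apply]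
  split_ifs with h
  · simp [h, wt_pos]
  · simp [h]

lemma summable_rowWt (x : ℕ → Bool) : Summable fun i => rowWt i x :=
  Summable.of_nonneg_of_le (fun k => rowWt_nonneg k x) (fun k => rowWt_le k x) hasSum_wt.summable

/-- The weight of the set of empty rows. It is upper semicontinuous, and on its graph the emptiness
of each row becomes an open condition. -/
def matrixWt (x : ℕ → Bool) : ℝ := ∑' i, rowWt i x

/-- The model whose graph is the Baire space. -/
def baireModel : BlockModel where
  B := thinMatrices
  ψ := matrixWt
  d := fun n => decide (n.unpair.2 = 0)
  closed := isClosed_thinMatrices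
  nonneg := fun x => tsum_nonneg fun i => rowWt_nonneg i x
  le_one := fun x => by
    rw [← hasSum_wt.tsum_eq]
    exact (summable_rowWt x).tsum_le_tsum (fun i => rowWt_le i x) hasSum_wt.summable
  hypo_closed := (isClosed_thinMatrices.preimage continuous_fst).inter
    (isClosed_hypo_tsum rowWt_usc rowWt_nonneg rowWt_le)
  d_mem := by
    intro i j k h1 h2
    simp only [Nat.unpair_pair, decide_eq_true_eq] at h1 h2
    rw [h1, h2]
  ψ_d := by
    have : ∀ i, rowWt i (fun n => decide (n.unpair.2 = 0)) = 0 := fun i =>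
      indicator_of_notMem (fun h => by simpa using h 0) _
    simp only [matrixWt, this, tsum_zero]

/-- The matrix coding `α`: row `i` is empty if `α i = 0`, and has its true entry in column `j` if
`α i = j + 1`. -/
def toMatrix (α : ℕ → ℕ) : ℕ → Bool := fun n => decide (α n.unpair.1 = n.unpair.2 + 1)

lemma toMatrix_pair (α : ℕ → ℕ) (i j : ℕ) : toMatrix α (Nat.pair i j) = true ↔ α i = j + 1 := by
  simp [toMatrix]

lemma toMatrix_mem (α : ℕ → ℕ) : toMatrix α ∈ thinMatrices := by
  intro i j k h1 h2
  rw [toMatrix_pair] at h1 h2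
  omega

lemma toMatrix_emptyRow (α : ℕ → ℕ) (i : ℕ) : toMatrix α ∈ emptyRow i ↔ α i = 0 := by
  constructor
  · intro h
    by_contra h0
    have h1 := (toMatrix_pair α i (α i - 1)).2 (by omega)
    rw [h] at h1
    exact Bool.noConfusion h1
  · intro h j
    rw [← Bool.not_eq_true, toMatrix_pair]
    omega

lemma continuous_toMatrix : Continuous toMatrix :=
  continuous_pi fun n => (continuous_of_discreteTopology
    (f := fun k : ℕ => decide (k = n.unpair.2 + 1))).comp (continuous_apply n.unpair.1)

lemma continuous_matrixWt_toMatrix : Continuous fun α => matrixWt (toMatrix α) := by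
  refine continuous_tsum (fun i => ?_) hasSum_wt.summable (fun i α => ?_)
  · have : (fun α => rowWt i (toMatrix α)) = (fun k : ℕ => if k = 0 then wt i else 0) ∘ fun α => α i := by
      classical
      funext α
      simp only [rowWt, indicator_apply, toMatrix_emptyRow, Function.comp_apply]
    rw [this]
    exact continuous_of_discreteTopology.comp (continuous_apply i)
  · rw [Real.norm_of_nonneg (rowWt_nonneg _ _)]; exact rowWt_le _ _

open Classical in
/-- Reading a matrix with at most one true entry per row as a sequence; inverse to `toMatrix`. -/
def ofMatrix (x : ℕ → Bool) (i : ℕ) : ℕ :=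
  if h : ∃ j, x (Nat.pair i j) = true then h.choose + 1 else 0

lemma ofMatrix_eq_zero {x : ℕ → Bool} {i : ℕ} : ofMatrix x i = 0 ↔ x ∈ emptyRow i := by
  unfold ofMatrix
  by_cases h : ∃ j, x (Nat.pair i j) = true
  · rw [dif_pos h]
    refine ⟨fun h0 => absurd h0 (Nat.succ_ne_zero _), fun h2 => ?_⟩
    obtain ⟨j, hj⟩ := h
    rw [h2 j] at hj
    exact Bool.noConfusion hj
  · rw [dif_neg h]
    refine ⟨fun _ j => ?_, fun _ => rfl⟩
    simpa using fun hj => h ⟨j, hj⟩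

lemma ofMatrix_eq_succ {x : ℕ → Bool} (hx : x ∈ thinMatrices) {i j : ℕ} :
    ofMatrix x i = j + 1 ↔ x (Nat.pair i j) = true := by
  unfold ofMatrix
  by_cases h : ∃ j, x (Nat.pair i j) = true
  · rw [dif_pos h]
    have h2 := h.choose_spec
    constructor
    · intro h3
      rwa [Nat.add_right_cancel h3] at h2
    · intro h3
      rw [hx i _ _ h2 h3]
  · rw [dif_neg h]
    exact ⟨fun h3 => absurd h3.symm (Nat.succ_ne_zero _), fun h3 => absurd ⟨j, h3⟩ h⟩

lemma toMatrix_ofMatrix {x : ℕ → Bool} (hx : x ∈ thinMatrices) : toMatrix (ofMatrix x) = x := by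
  funext n
  rw [Bool.eq_iff_iff, ← Nat.pair_unpair n, toMatrix_pair, ofMatrix_eq_succ hx]

lemma ofMatrix_toMatrix (α : ℕ → ℕ) : ofMatrix (toMatrix α) = α := by
  funext i
  cases h : α i with
  | zero => rw [ofMatrix_eq_zero, toMatrix_emptyRow, h]
  | succ j => rw [ofMatrix_eq_succ (toMatrix_mem α), toMatrix_pair, h]

/-- On the graph of the weight, the digits read off from a matrix are continuous. The delicate digit is
`0`: matrices whose row `i` is empty are limits of others, but their weight is not. -/
lemma continuous_ofMatrix_graph :
    Continuous fun p : ↥{p : (ℕ → Bool) × ℝ | p.1 ∈ thinMatrices ∧ p.2 = matrixWt p.1} =>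
      ofMatrix p.1.1 := by
  refine continuous_pi fun i => continuous_discrete_rng.2 fun b => ?_
  cases b with
  | succ j =>
    have : ((fun p : ↥{p : (ℕ → Bool) × ℝ | p.1 ∈ thinMatrices ∧ p.2 = matrixWt p.1} =>
        ofMatrix p.1.1 i) ⁻¹' {j + 1}) = (fun p => p.1.1 (Nat.pair i j)) ⁻¹' {true} := by
      ext p
      exact ofMatrix_eq_succ p.2.1
    rw [this]
    exact (isOpen_discrete {true}).preimage (by fun_prop)
  | zero =>
    -- row `i` is empty iff the total weight exceeds that of the other rows, an open condition
    let z : ℕ → (ℕ → Bool) → ℝ := fun k x => if k = i then 0 else rowWt k x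
    have hz : IsClosed {p : (ℕ → Bool) × ℝ | p.2 ≤ ∑' k, z k p.1} := by
      refine isClosed_hypo_tsum (fun k => ?_) (fun k x => ?_) (fun k x => ?_)
      · by_cases h : k = i
        · simp only [z, h, if_true]; exact continuous_const.upperSemicontinuous
        · simp only [z, h, if_false]; exact rowWt_usc k
      · simp only [z]; split_ifs
        · exact le_rfl
        · exact rowWt_nonneg k x
      · simp only [z]; split_ifs
        · exact (wt_pos k).le
        · exact rowWt_le k x
    have : ((fun p : ↥{p : (ℕ → Bool) × ℝ | p.1 ∈ thinMatrices ∧ p.2 = matrixWt p.1} =>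
        ofMatrix p.1.1 i) ⁻¹' {0}) = Subtype.val ⁻¹' {p : (ℕ → Bool) × ℝ | p.2 ≤ ∑' k, z k p.1}ᶜ := by
      ext p
      have h := (summable_rowWt p.1.1).tsum_eq_add_tsum_ite i
      have h2 : p.1.2 = rowWt i p.1.1 + ∑' k, z k p.1.1 := p.2.2.trans h
      simp only [mem_preimage, mem_singleton_iff, mem_compl_iff, mem_ofPred_eq, not_le]
      rw [ofMatrix_eq_zero, ← rowWt_pos, h2]
      constructor <;> intro h <;> linarith
    rw [this]
    exact hz.isOpen_compl.preimage continuous_subtype_val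

/-- The graph of the weight over the thin matrices is the Baire space. -/
def graphHomeoBaire :
    ↥{p : (ℕ → Bool) × ℝ | p.1 ∈ thinMatrices ∧ p.2 = matrixWt p.1} ≃ₜ (ℕ → ℕ) where
  toFun := fun p => ofMatrix p.1.1
  invFun := fun α => ⟨(toMatrix α, matrixWt (toMatrix α)), toMatrix_mem α, rfl⟩
  left_inv := by
    rintro ⟨⟨x, t⟩, hx, ht⟩
    simp only at hx ht
    refine Subtype.ext (Prod.ext (toMatrix_ofMatrix hx) ?_)
    simp only [toMatrix_ofMatrix hx, ht]
  right_inv := ofMatrix_toMatrix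
  continuous_toFun := continuous_ofMatrix_graph
  continuous_invFun := (continuous_toMatrix.prodMk continuous_matrixWt_toMatrix).subtype_mk _

/-! ### The theorem -/

/-- Every smooth fan `X` whose vertex is not in the closure of `E(X)`
embeds in a `𝒦`-fan `X'` in which (the image of) `E(X)` is a clopen subset of `E(X')`;
moreover `X'` can be chosen with `E(X') ∖ E(X)` equal to the witnessing set `E_𝒦` and
homeomorphic to `ℕ` (when all `K n` are nonempty), or homeomorphic to the irrationals, or
homeomorphic to (Cantor set) `× ℕ`. -/
theorem kfan_clopen_extension_exists (K : ℕ → Set ℝ) (hK : KFamily K)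
    (X : Set (ℝ × ℝ)) (hX : IsSmoothFan X)
    (hp : fanVertex ∉ closure (Endpoints X)) :
    ((∀ n, (K n).Nonempty) →
      ∃ (X' : Set (ℝ × ℝ)) (e : ℕ → ℝ × ℝ) (g : ↥X → ↥X'),
        IsKFanExtension K X X' e g ∧
        IsClopen (Subtype.val ⁻¹' imageOfEndpoints X X' g : Set ↥(Endpoints X')) ∧
        Endpoints X' \ imageOfEndpoints X X' g = Set.range e ∧
        Nonempty (↥(Endpoints X' \ imageOfEndpoints X X' g) ≃ₜ ℕ)) ∧
    (∃ (X' : Set (ℝ × ℝ)) (e : ℕ → ℝ × ℝ) (g : ↥X → ↥X'),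
        IsKFanExtension K X X' e g ∧
        IsClopen (Subtype.val ⁻¹' imageOfEndpoints X X' g : Set ↥(Endpoints X')) ∧
        Nonempty (↥(Endpoints X' \ imageOfEndpoints X X' g) ≃ₜ {x : ℝ // Irrational x})) ∧
    (∃ (X' : Set (ℝ × ℝ)) (e : ℕ → ℝ × ℝ) (g : ↥X → ↥X'),
        IsKFanExtension K X X' e g ∧
        IsClopen (Subtype.val ⁻¹' imageOfEndpoints X X' g : Set ↥(Endpoints X')) ∧
        Nonempty (↥(Endpoints X' \ imageOfEndpoints X X' g) ≃ₜ (↥cantorSet × ℕ))) := by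
  refine ⟨fun hne => ?_, ?_, ?_⟩
  · obtain ⟨X', e, g, h1, h2, h3, ⟨h4⟩⟩ := exists_extension
      (flatModel {fun _ => false} isClosed_singleton _ (mem_singleton _)) hK (Or.inl hne) hX hp
    obtain ⟨F⟩ := flat_graph {fun _ => false}
    exact ⟨X', e, g, h1, h2, h3 subset_rfl,
      ⟨h4.trans (((Homeomorph.refl ℕ).prodCongr F).trans (Homeomorph.prodUnique ℕ _))⟩⟩
  · have hd : toMatrix 0 ≠ baireModel.d := fun h => by
      have := congrFun h 0
      simp [toMatrix, baireModel] at this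
    obtain ⟨X', e, g, h1, h2, -, ⟨h4⟩⟩ := exists_extension baireModel hK
      (Or.inr ⟨toMatrix 0, toMatrix_mem 0, hd⟩) hX hp
    obtain ⟨F⟩ := nat_prod_baire_homeo_irrational
    exact ⟨X', e, g, h1, h2,
      ⟨h4.trans (((Homeomorph.refl ℕ).prodCongr graphHomeoBaire).trans F)⟩⟩
  · obtain ⟨X', e, g, h1, h2, -, ⟨h4⟩⟩ := exists_extension
      (flatModel univ isClosed_univ (fun _ => false) (mem_univ _)) hK
      (Or.inr ⟨fun _ => true, mem_univ _, fun h => Bool.noConfusion (congrFun h 0)⟩) hX hp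
    obtain ⟨F⟩ := flat_graph univ
    exact ⟨X', e, g, h1, h2, ⟨h4.trans (((Homeomorph.refl ℕ).prodCongr (F.trans
      ((Homeomorph.Set.univ _).trans cantorSetHomeomorphNatToBool.symm))).trans
        (Homeomorph.prodComm _ _))⟩⟩

end SmoothFanPaper
end
end

section
/- The sum of finitely many smooth fans is a smooth fan whose endpoint set is homeomorphic to the disjoint union of their endpoint sets; likewise, the sum of a countably infinite sequence of smooth fans is a smooth fan whose endpoint set is homeomorphic to the topological disjoint union of their endpoint sets, i.e., E(Σ_i X_i) ≅ ⊔_i E(X_i). -/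
/-!
Any countable family of fans can be packed into the Cantor fan: the Cantor set contains the
pairwise disjoint scaled copies `(2 + C) / 3 ^ (n + 1)`, so a linear map `squeeze n` carries the
Cantor fan into the sector over the `n`-th copy. Shrinking the heights by `1 / (n + 1)` makes the
sectors converge to the vertex, so the squeezing maps fit together to a continuous map on the
one-point compactification of the disjoint union (`continuous_planarMap`). Its fibres are exactly
the classes that are glued in the sum (`planarMap_eq_iff`), and compactness gives a homeomorphism of
the sum onto a smooth fan in the plane (`exists_homeomorph_planarSum`, `isSmoothFan_planarSum`).

For the endpoints, the order of a point depends only on a neighbourhood of it, since arcs can be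
shortened (`orderAtLeast_inter_iff`). The disjoint union of the fans without their vertices is
openly embedded in the sum (`isOpenEmbedding_puncturedMap`), so the points of the sum other than
the vertex have the same order as in their own fans, while the vertex of the sum and those of the
summands have order at least 2. Hence the disjoint union of the endpoint sets is embedded in the sum
with the endpoint set of the sum as its image (`range_endpointMap`).
-/

open Set Topology

noncomputable section

namespace SmoothFanPaper

/-! ### Arcs and orders under embeddings -/

lemma isArc_iff_exists_embedding {α : Type*} [TopologicalSpace α] {A : Set α} {a b : α} :
    IsArc A a b ↔ ∃ g : Set.Icc (0:ℝ) 1 → α, IsEmbedding g ∧ Set.range g = A ∧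
      g ⟨0, Set.left_mem_Icc.mpr zero_le_one⟩ = a ∧
      g ⟨1, Set.right_mem_Icc.mpr zero_le_one⟩ = b := by
  constructor
  · rintro ⟨h, h0, h1⟩
    refine ⟨fun t => (h t : α), IsEmbedding.subtypeVal.comp h.isEmbedding, ?_, h0, h1⟩
    change Set.range (Subtype.val ∘ h) = A
    rw [h.surjective.range_comp, Subtype.range_val]
  · rintro ⟨g, hg, rfl, h0, h1⟩
    exact ⟨hg.toHomeomorph, h0, h1⟩

lemma IsArc.image {α β : Type*} [TopologicalSpace α] [TopologicalSpace β] {f : α → β}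
    (hf : IsEmbedding f) {A : Set α} {a b : α} (h : IsArc A a b) :
    IsArc (f '' A) (f a) (f b) := by
  obtain ⟨g, hg, rfl, rfl, rfl⟩ := isArc_iff_exists_embedding.1 h
  exact isArc_iff_exists_embedding.2 ⟨f ∘ g, hf.comp hg, Set.range_comp f g, rfl, rfl⟩

lemma IsArc.of_image {α β : Type*} [TopologicalSpace α] [TopologicalSpace β] {f : α → β}
    (hf : IsEmbedding f) {A : Set α} {a : α} {y : β} (h : IsArc (f '' A) (f a) y) :
    ∃ b, IsArc A a b := by
  obtain ⟨h, h0, -⟩ := h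
  refine ⟨_, h.trans (hf.homeomorphImage A).symm, ?_, rfl⟩
  apply hf.injective
  rw [← h0]
  exact congrArg Subtype.val ((hf.homeomorphImage A).apply_symm_apply _)

lemma OrderAtLeast.mono {α : Type*} [TopologicalSpace α] {S T : Set α} (hST : S ⊆ T) {x : α}
    {n : ℕ} (h : OrderAtLeast S x n) : OrderAtLeast T x n := by
  obtain ⟨A, hA, h⟩ := h
  exact ⟨A, fun i => (hA i).trans hST, h⟩

lemma orderAtLeast_image_iff {α β : Type*} [TopologicalSpace α] [TopologicalSpace β] {f : α → β}
    (hf : IsEmbedding f) {S : Set α} {x : α} {n : ℕ} :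
    OrderAtLeast (f '' S) (f x) n ↔ OrderAtLeast S x n := by
  constructor
  · rintro ⟨B, hB, harc, hint⟩
    have him : ∀ i, f '' (f ⁻¹' B i) = B i := fun i =>
      Set.image_preimage_eq_of_subset ((hB i).trans (Set.image_subset_range _ _))
    refine ⟨fun i => f ⁻¹' B i, fun i => ?_, fun i => ?_, fun i j hij => ?_⟩
    · rw [← Set.image_subset_image_iff hf.injective, him]
      exact hB i
    · obtain ⟨y, hy⟩ := harc i
      rw [← him i] at hy
      exact hy.of_image hf
    · rw [← Set.preimage_inter, hint i j hij]
      ext z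
      simp [hf.injective.eq_iff]
  · rintro ⟨A, hA, harc, hint⟩
    refine ⟨fun i => f '' A i, fun i => Set.image_mono (hA i), fun i => ?_, fun i j hij => ?_⟩
    · obtain ⟨b, hb⟩ := harc i
      exact ⟨f b, hb.image hf⟩
    · rw [← Set.image_inter hf.injective, hint i j hij, Set.image_singleton]

/-- An arc can be shortened to an arc with the same initial point inside any prescribed open
neighbourhood of that point. -/
lemma IsArc.exists_subarc {α : Type*} [TopologicalSpace α] {A U : Set α} {x b : α}
    (h : IsArc A x b) (hU : IsOpen U) (hx : x ∈ U) :
    ∃ A' ⊆ A ∩ U, ∃ b', IsArc A' x b' := by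
  obtain ⟨g, hg, rfl, rfl, -⟩ := isArc_iff_exists_embedding.1 h
  have hnhds : g ⁻¹' U ∈ 𝓝 (⟨0, Set.left_mem_Icc.mpr zero_le_one⟩ : Set.Icc (0:ℝ) 1) :=
    (hU.preimage hg.continuous).mem_nhds hx
  obtain ⟨δ, hδ, hball⟩ := Metric.mem_nhds_iff.1 hnhds
  set ε : ℝ := min (δ / 2) 1
  have hε : 0 < ε := by positivity
  have hε1 : ε ≤ 1 := min_le_right _ _
  have hεδ : ε < δ := (min_le_left _ _).trans_lt (by linarith)
  let s : Set.Icc (0:ℝ) 1 → Set.Icc (0:ℝ) 1 := fun t =>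
    ⟨ε * t, by have := t.2.1; positivity, mul_le_one₀ hε1 t.2.1 t.2.2⟩
  have hs : IsEmbedding s := by
    refine (Continuous.isClosedEmbedding (by fun_prop) fun t u htu => ?_).isEmbedding
    exact Subtype.ext (mul_left_cancel₀ hε.ne' (congrArg Subtype.val htu))
  refine ⟨Set.range (g ∘ s), ?_, _,
    isArc_iff_exists_embedding.2 ⟨g ∘ s, hg.comp hs, rfl, ?_, rfl⟩⟩
  · rintro _ ⟨t, rfl⟩
    refine ⟨⟨s t, rfl⟩, hball ?_⟩
    have h1 : ε * t ≤ ε := mul_le_of_le_one_right hε.le t.2.2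
    have h0 : 0 ≤ ε * t := mul_nonneg hε.le t.2.1
    rw [Metric.mem_ball, Subtype.dist_eq, Real.dist_eq]
    simp only [s, sub_zero]
    rw [abs_of_nonneg h0]
    linarith
  · simp [s]

/-- The order of a point is a local notion. -/
lemma orderAtLeast_inter_iff {α : Type*} [TopologicalSpace α] {S U : Set α} {x : α} {n : ℕ}
    (hU : IsOpen U) (hx : x ∈ U) : OrderAtLeast (S ∩ U) x n ↔ OrderAtLeast S x n := by
  refine ⟨fun h => h.mono Set.inter_subset_left, ?_⟩
  rintro ⟨A, hA, harc, hint⟩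
  have key : ∀ i, ∃ A' ⊆ A i ∩ U, ∃ b', IsArc A' x b' := fun i => by
    obtain ⟨b, hb⟩ := harc i
    exact hb.exists_subarc hU hx
  choose A' hA' b' hb' using key
  have hmem : ∀ i, x ∈ A' i := fun i => by
    obtain ⟨h, h0, -⟩ := hb' i
    exact h0 ▸ (h _).2
  refine ⟨A', fun i => (hA' i).trans (Set.inter_subset_inter_left _ (hA i)),
    fun i => ⟨b' i, hb' i⟩, fun i j hij => Set.Subset.antisymm ?_ ?_⟩
  · rw [← hint i j hij]
    exact Set.inter_subset_inter ((hA' i).trans Set.inter_subset_left)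
      ((hA' j).trans Set.inter_subset_left)
  · rintro _ rfl
    exact ⟨hmem i, hmem j⟩

/-! ### Squeezing the Cantor fan into thin sectors of itself -/

/-- The linear map that sends the leg of the Cantor fan over `c` to a leg of height `1 / (n + 1)`
over `(2 + c) / 3 ^ (n + 1)`. The images of the Cantor fan for different `n` meet only at the
vertex, and they shrink to the vertex as `n → ∞`. -/
def squeeze (n : ℕ) (q : ℝ × ℝ) : ℝ × ℝ :=
  ((2 * q.2 + q.1) / 3 ^ (n + 1) / (n + 1), q.2 / (n + 1))

lemma squeeze_vertex (n : ℕ) : squeeze n fanVertex = fanVertex := by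
  simp [squeeze, fanVertex]

lemma isEmbedding_squeeze (n : ℕ) : IsEmbedding (squeeze n) := by
  have hinv : Function.LeftInverse
      (fun p : ℝ × ℝ => (3 ^ (n + 1) * (n + 1) * p.1 - 2 * ((n + 1) * p.2), (n + 1) * p.2))
      (squeeze n) := by
    intro q
    have : (n : ℝ) + 1 ≠ 0 := by positivity
    ext
    · simp only [squeeze]
      field_simp
      ring
    · simp only [squeeze]
      field_simp
  exact hinv.isEmbedding (by fun_prop) (by unfold squeeze; fun_prop)

lemma div_three_pow_mem_cantorSet {c : ℝ} (hc : c ∈ cantorSet) (n : ℕ) :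
    c / 3 ^ n ∈ cantorSet := by
  induction n with
  | zero => simpa using hc
  | succ n ih =>
    rw [cantorSet_eq_union_halves]
    refine Or.inl ⟨_, ih, ?_⟩
    rw [pow_succ, ← div_div]

lemma squeeze_mem_cantorFan (n : ℕ) {q : ℝ × ℝ} (hq : q ∈ CantorFan) :
    squeeze n q ∈ CantorFan := by
  obtain ⟨c, hc, t, ht, rfl⟩ := hq
  have hc' : (2 + c) / 3 ∈ cantorSet := by
    rw [cantorSet_eq_union_halves]
    exact Or.inr ⟨c, hc, rfl⟩
  refine ⟨_, div_three_pow_mem_cantorSet hc' n, t / (n + 1), ⟨?_, ?_⟩, ?_⟩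
  · exact div_nonneg ht.1 (by positivity)
  · exact div_le_one_of_le₀ (by linarith [ht.2, (Nat.cast_nonneg n : (0:ℝ) ≤ n)]) (by positivity)
  · simp only [squeeze, Prod.mk.injEq, and_true]
    rw [pow_succ]
    field_simp

lemma dist_squeeze_vertex_le (n : ℕ) {q : ℝ × ℝ} (hq : q ∈ CantorFan) :
    dist (squeeze n q) fanVertex ≤ 1 / (n + 1) := by
  obtain ⟨c, hc, t, ht, rfl⟩ := hq
  have hc := cantorSet_subset_unitInterval hc
  have hn : (0:ℝ) < n + 1 := by positivity
  have h3 : (3:ℝ) ≤ 3 ^ (n + 1) := le_self_pow₀ (by norm_num) (by omega)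
  have htc : 0 ≤ t * c := mul_nonneg ht.1 hc.1
  have htc1 : t * c ≤ 1 := mul_le_one₀ ht.2 hc.1 hc.2
  rw [Prod.dist_eq, Real.dist_eq, Real.dist_eq]
  simp only [squeeze, fanVertex, sub_zero]
  rw [abs_of_nonneg (div_nonneg (div_nonneg (by linarith [ht.1]) (by positivity)) hn.le),
    abs_of_nonneg (div_nonneg ht.1 hn.le)]
  refine max_le ?_ ?_
  · gcongr
    rw [div_le_one (by positivity)]
    linarith [ht.2]
  · gcongr
    exact ht.2

lemma eq_vertex_of_snd_eq_zero {q : ℝ × ℝ} (hq : q ∈ CantorFan) (h : q.2 = 0) :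
    q = fanVertex := by
  obtain ⟨c, hc, t, ht, rfl⟩ := hq
  simp only at h
  simp [h, fanVertex]

/-- Different sectors meet only at the vertex, because `(2 + c) / 3 ^ (n + 1)` lies in
`(1 / 3 ^ (n + 1), 1 / 3 ^ n]` for every `c ∈ [0, 1]`. -/
lemma eq_vertex_of_squeeze_eq_of_lt {m n : ℕ} (hmn : m < n) {q r : ℝ × ℝ} (hq : q ∈ CantorFan)
    (hr : r ∈ CantorFan) (h : squeeze m q = squeeze n r) :
    q = fanVertex ∧ r = fanVertex := by
  suffices hq0 : q.2 = 0 by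
    refine ⟨eq_vertex_of_snd_eq_zero hq hq0, eq_vertex_of_snd_eq_zero hr ?_⟩
    have h2 := congrArg Prod.snd h
    simp only [squeeze, hq0, zero_div] at h2
    rcases div_eq_zero_iff.1 h2.symm with h | h
    · exact h
    · exact absurd h (by positivity)
  obtain ⟨c, hc, t, ht, rfl⟩ := hq
  obtain ⟨d, hd, u, hu, rfl⟩ := hr
  have hc := cantorSet_subset_unitInterval hc
  have hd := cantorSet_subset_unitInterval hd
  by_contra ht0
  have htpos : 0 < t := lt_of_le_of_ne ht.1 (Ne.symm ht0)
  have h1 := congrArg Prod.fst h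
  have h2 := congrArg Prod.snd h
  simp only [squeeze] at h1 h2
  have hy : 0 < t / ((m:ℝ) + 1) := by positivity
  have e1 : (2 * t + t * c) / 3 ^ (m + 1) / ((m:ℝ) + 1) =
      t / ((m:ℝ) + 1) * ((2 + c) / 3 ^ (m + 1)) := by field_simp
  have e2 : (2 * u + u * d) / 3 ^ (n + 1) / ((n:ℝ) + 1) =
      u / ((n:ℝ) + 1) * ((2 + d) / 3 ^ (n + 1)) := by field_simp
  rw [e1, e2, ← h2] at h1
  have h3 := mul_left_cancel₀ hy.ne' h1
  have hpow : (3:ℝ) ^ (m + 1) * 3 ≤ 3 ^ (n + 1) := by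
    rw [← pow_succ]
    exact pow_le_pow_right₀ (by norm_num) (by omega)
  have hpos : (0:ℝ) < 3 ^ (m + 1) := by positivity
  rw [div_eq_div_iff (by positivity) (by positivity)] at h3
  nlinarith [hc.1, hd.2]

lemma eq_or_vertex_of_squeeze_eq {m n : ℕ} {q r : ℝ × ℝ} (hq : q ∈ CantorFan)
    (hr : r ∈ CantorFan) (h : squeeze m q = squeeze n r) :
    (m = n ∧ q = r) ∨ (q = fanVertex ∧ r = fanVertex) := by
  rcases lt_trichotomy m n with hmn | rfl | hmn
  · exact Or.inr (eq_vertex_of_squeeze_eq_of_lt hmn hq hr h)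
  · exact Or.inl ⟨rfl, (isEmbedding_squeeze m).injective h⟩
  · exact Or.inr (eq_vertex_of_squeeze_eq_of_lt hmn hr hq h.symm).symm

/-! ### Realizing the sum of fans in the plane -/

section Realization

variable {ι : Type} {X : ι → Set (ℝ × ℝ)}

/-- The map on the one-point compactification that squeezes the fan with index `i` into the sector
with number `e i` and sends `∞` to the vertex. -/
def planarMap (X : ι → Set (ℝ × ℝ)) (e : ι → ℕ) : OnePoint (Σ i : ι, X i) → ℝ × ℝ :=
  fun a => a.elim fanVertex (fun p => squeeze (e p.1) p.2)

/-- The union of the fans, each squeezed into its own sector. -/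
def planarSum (X : ι → Set (ℝ × ℝ)) (e : ι → ℕ) : Set (ℝ × ℝ) :=
  ⋃ i, squeeze (e i) '' X i

lemma continuous_planarMap (hX : ∀ i, IsSmoothFan (X i)) {e : ι → ℕ}
    (he : Function.Injective e) : Continuous (planarMap X e) := by
  rw [OnePoint.continuous_iff]
  constructor
  · change Filter.Tendsto (fun p : Σ i, X i => squeeze (e p.1) p.2) _ (𝓝 fanVertex)
    rw [Metric.tendsto_nhds]
    intro ε hε
    obtain ⟨N, hN⟩ := exists_nat_one_div_lt hε
    -- Outside the finitely many fans of index below `N` the image is `ε`-close to the vertex.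
    have hfin : (e ⁻¹' Set.Iio N).Finite := (Set.finite_Iio N).preimage he.injOn
    set K : Set (Σ i, X i) := Sigma.fst ⁻¹' (e ⁻¹' Set.Iio N) with hK
    have hKU : K = ⋃ i ∈ e ⁻¹' Set.Iio N, Set.range (Sigma.mk i) := by
      ext ⟨i, q⟩
      simp [hK]
    have hKc : IsCompact K := by
      rw [hKU]
      refine hfin.isCompact_biUnion fun i _ => ?_
      have := isCompact_iff_compactSpace.1 (hX i).isCompact
      exact isCompact_range continuous_sigmaMk
    refine Filter.mem_of_superset (hKc.compl_mem_coclosedCompact_of_isClosed hKc.isClosed) ?_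
    rintro ⟨i, q⟩ hq
    have hle : N ≤ e i := not_lt.1 hq
    refine (dist_squeeze_vertex_le _ ((hX i).subset_fan q.2)).trans_lt (lt_of_le_of_lt ?_ hN)
    gcongr
  · change Continuous (fun p : Σ i, X i => squeeze (e p.1) p.2)
    exact continuous_sigma fun i => (isEmbedding_squeeze (e i)).continuous.comp
      continuous_subtype_val

lemma isGluedPoint_iff (e : ι → ℕ) (a : OnePoint (Σ i : ι, X i)) :
    isGluedPoint X a ↔ planarMap X e a = fanVertex := by
  induction a using OnePoint.rec with
  | infty => exact iff_of_true trivial rfl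
  | coe p =>
    change (p.2 : ℝ × ℝ) = fanVertex ↔ squeeze (e p.1) p.2 = fanVertex
    rw [← (isEmbedding_squeeze (e p.1)).injective.eq_iff (b := fanVertex), squeeze_vertex]

lemma planarMap_eq_iff (hX : ∀ i, IsSmoothFan (X i)) {e : ι → ℕ} (he : Function.Injective e)
    (a b : OnePoint (Σ i : ι, X i)) :
    planarMap X e a = planarMap X e b ↔ fanSumSetoid X a b := by
  constructor
  · intro h
    by_cases ha : planarMap X e a = fanVertex
    · exact Or.inr ⟨(isGluedPoint_iff e a).2 ha, (isGluedPoint_iff e b).2 (h ▸ ha)⟩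
    · have hb : planarMap X e b ≠ fanVertex := h ▸ ha
      induction a using OnePoint.rec with
      | infty => exact absurd rfl ha
      | coe p =>
      induction b using OnePoint.rec with
      | infty => exact absurd rfl hb
      | coe r =>
      obtain ⟨i, q⟩ := p
      obtain ⟨j, r⟩ := r
      rcases eq_or_vertex_of_squeeze_eq ((hX i).subset_fan q.2) ((hX j).subset_fan r.2) h with
        ⟨hij, hqr⟩ | ⟨hq, -⟩
      · obtain rfl := he hij
        obtain rfl := Subtype.ext hqr
        exact Or.inl rfl
      · refine absurd ?_ ha
        change squeeze (e i) q = fanVertex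
        rw [hq, squeeze_vertex]
  · rintro (rfl | ⟨ha, hb⟩)
    · rfl
    · rw [(isGluedPoint_iff e a).1 ha, (isGluedPoint_iff e b).1 hb]

lemma range_planarMap [Nonempty ι] (hX : ∀ i, IsSmoothFan (X i)) (e : ι → ℕ) :
    Set.range (planarMap X e) = planarSum X e := by
  ext z
  simp only [planarSum, Set.mem_iUnion, Set.mem_image, Set.mem_range]
  constructor
  · rintro ⟨a, rfl⟩
    induction a using OnePoint.rec with
    | infty =>
      obtain ⟨i⟩ := ‹Nonempty ι›
      exact ⟨i, fanVertex, (hX i).vertex_mem, squeeze_vertex _⟩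
    | coe p => exact ⟨p.1, p.2, p.2.2, rfl⟩
  · rintro ⟨i, q, hq, rfl⟩
    exact ⟨((⟨i, ⟨q, hq⟩⟩ : Σ i, X i) : OnePoint _), rfl⟩

/-- The quotient projection onto the sum of the fans. -/
def fanSumMk (X : ι → Set (ℝ × ℝ)) (a : OnePoint (Σ i : ι, X i)) : FanSum X :=
  Quotient.mk (fanSumSetoid X) a

instance compactSpace_fanSum (X : ι → Set (ℝ × ℝ)) : CompactSpace (FanSum X) :=
  inferInstanceAs (CompactSpace (Quotient (fanSumSetoid X)))

/-- Being compact, the sum of the fans is homeomorphic to its continuous injective image in the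
plane. -/
lemma exists_homeomorph_planarSum [Nonempty ι] (hX : ∀ i, IsSmoothFan (X i)) {e : ι → ℕ}
    (he : Function.Injective e) :
    ∃ H : FanSum X ≃ₜ planarSum X e, ∀ a : OnePoint (Σ i : ι, X i),
      (H (fanSumMk X a) : ℝ × ℝ) = planarMap X e a := by
  let F : FanSum X → ℝ × ℝ :=
    Quotient.lift (planarMap X e) fun a b h => (planarMap_eq_iff hX he a b).2 h
  have hF : Continuous F := (continuous_planarMap hX he).quotient_lift _
  have hinj : Function.Injective F := by
    rintro ⟨a⟩ ⟨b⟩ h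
    exact Quotient.sound ((planarMap_eq_iff hX he a b).1 h)
  have hrange : Set.range F = planarSum X e := by
    rw [← range_planarMap hX e]
    exact Set.range_quot_lift _
  exact ⟨(hF.isClosedEmbedding hinj).isEmbedding.toHomeomorph.trans (.setCongr hrange),
    fun a => rfl⟩

lemma isSmoothFan_planarSum [Nonempty ι] (hX : ∀ i, IsSmoothFan (X i)) {e : ι → ℕ}
    (he : Function.Injective e) : IsSmoothFan (planarSum X e) := by
  obtain ⟨i₀⟩ := ‹Nonempty ι›
  have hsub : squeeze (e i₀) '' X i₀ ⊆ planarSum X e :=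
    Set.subset_iUnion (fun i => squeeze (e i) '' X i) i₀
  have hv : ∀ i, fanVertex ∈ squeeze (e i) '' X i := fun i =>
    ⟨fanVertex, (hX i).vertex_mem, squeeze_vertex _⟩
  refine ⟨?_, ?_, ⟨⟨fanVertex, hsub (hv i₀)⟩, ?_⟩, ?_, hsub (hv i₀), ?_⟩
  · refine Set.iUnion_subset fun i => ?_
    rintro _ ⟨q, hq, rfl⟩
    exact squeeze_mem_cantorFan _ ((hX i).subset_fan hq)
  · have : Nonempty ι := ⟨i₀⟩
    rw [← range_planarMap hX e]
    exact isCompact_range (continuous_planarMap hX he)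
  · refine isPreconnected_iUnion ⟨fanVertex, Set.mem_iInter.2 hv⟩ fun i => ?_
    exact (hX i).isConnected.isPreconnected.image _
      (isEmbedding_squeeze _).continuous.continuousOn
  · obtain ⟨x, hx, y, hy, hxy⟩ := (hX i₀).nondegenerate
    exact ⟨_, hsub ⟨x, hx, rfl⟩, _, hsub ⟨y, hy, rfl⟩, (isEmbedding_squeeze _).injective.ne hxy⟩
  · have h := (orderAtLeast_image_iff (isEmbedding_squeeze (e i₀))).2 (hX i₀).vertex_order
    rw [squeeze_vertex] at h
    exact h.mono hsub

end Realization

/-! ### Endpoints of the sum -/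

section Endpoints

variable {ι : Type} {X : ι → Set (ℝ × ℝ)}

/-- The fan `X i` without its vertex, mapped into the sum. -/
def puncturedMap (X : ι → Set (ℝ × ℝ)) :
    (Σ i : ι, ↥(X i ∩ {fanVertex}ᶜ)) → FanSum X :=
  fun p => fanSumMk X
    ((Sigma.map id (fun _ => Set.inclusion Set.inter_subset_left) p : Σ i : ι, X i) : OnePoint _)

lemma isOpenEmbedding_puncturedMap (X : ι → Set (ℝ × ℝ)) :
    IsOpenEmbedding (puncturedMap X) := by
  have hincl : ∀ i, IsOpenEmbedding
      (Set.inclusion (Set.inter_subset_left : X i ∩ {fanVertex}ᶜ ⊆ X i)) := fun i => by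
    refine ⟨IsEmbedding.inclusion _, ?_⟩
    rw [Set.range_inclusion]
    convert (isOpen_compl_singleton (x := fanVertex)).preimage
      (continuous_subtype_val (p := (· ∈ X i))) using 1
    ext q
    simp
  have hg : IsOpenEmbedding (fun p : Σ i : ι, ↥(X i ∩ {fanVertex}ᶜ) =>
      ((Sigma.map id (fun _ => Set.inclusion Set.inter_subset_left) p : Σ i : ι, X i) :
        OnePoint (Σ i : ι, X i))) :=
    OnePoint.isOpenEmbedding_coe.comp
      ((isOpenEmbedding_sigmaMap Function.injective_id).2 hincl)
  have hrel : ∀ (p : Σ i : ι, ↥(X i ∩ {fanVertex}ᶜ)) (a : OnePoint (Σ i : ι, X i)),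
      fanSumSetoid X ((Sigma.map id (fun _ => Set.inclusion Set.inter_subset_left) p :
        Σ i : ι, X i) : OnePoint _) a →
      ((Sigma.map id (fun _ => Set.inclusion Set.inter_subset_left) p : Σ i : ι, X i) :
        OnePoint (Σ i : ι, X i)) = a := by
    rintro p a (h | ⟨h, -⟩)
    · exact h
    · exact absurd h p.2.2.2
  refine .of_continuous_injective_isOpenMap (continuous_quotient_mk'.comp hg.continuous) ?_ ?_
  · intro p r h
    exact hg.injective (hrel p _ (Quotient.exact h))
  · intro U hU
    refine isOpen_coinduced.2 ?_
    convert hg.isOpenMap U hU using 1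
    ext a
    constructor
    · rintro ⟨p, hp, h⟩
      exact ⟨p, hp, hrel p a (Quotient.exact h)⟩
    · rintro ⟨p, hp, rfl⟩
      exact ⟨p, hp, rfl⟩

/-- Away from the vertex the order of a point in the sum agrees with its order in its own fan. -/
lemma orderAtLeast_puncturedMap_iff (i : ι) (q : ↥(X i ∩ {fanVertex}ᶜ)) (n : ℕ) :
    OrderAtLeast (Set.univ : Set (FanSum X)) (puncturedMap X ⟨i, q⟩) n ↔
      OrderAtLeast (X i) (q : ℝ × ℝ) n := by
  have hemb : IsOpenEmbedding (puncturedMap X ∘ Sigma.mk i) :=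
    (isOpenEmbedding_puncturedMap X).comp .sigmaMk
  rw [← orderAtLeast_inter_iff (S := X i) isOpen_compl_singleton q.2.2,
    ← orderAtLeast_inter_iff (S := Set.univ) (x := puncturedMap X ⟨i, q⟩)
      hemb.isOpen_range ⟨q, rfl⟩, Set.univ_inter,
    ← Set.image_univ]
  refine (orderAtLeast_image_iff hemb.isEmbedding).trans ?_
  rw [← orderAtLeast_image_iff IsEmbedding.subtypeVal, Set.image_univ, Subtype.range_val]

lemma orderAtLeast_two_of_isGluedPoint [Countable ι] [Nonempty ι]
    (hX : ∀ i, IsSmoothFan (X i)) {a : OnePoint (Σ i : ι, X i)} (ha : isGluedPoint X a) :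
    OrderAtLeast (Set.univ : Set (FanSum X)) (fanSumMk X a) 2 := by
  obtain ⟨e, he⟩ := exists_injective_nat ι
  obtain ⟨H, hH⟩ := exists_homeomorph_planarSum hX he
  have hrange : Set.range (Subtype.val ∘ H) = planarSum X e := by
    rw [H.surjective.range_comp, Subtype.range_val]
  rw [← orderAtLeast_image_iff (IsEmbedding.subtypeVal.comp H.isEmbedding), Set.image_univ,
    hrange, Function.comp_apply, hH, (isGluedPoint_iff e a).1 ha]
  exact (isSmoothFan_planarSum hX he).vertex_order

/-- The endpoint sets of the fans, mapped into the sum. -/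
def endpointMap (hX : ∀ i, IsSmoothFan (X i)) : (Σ i : ι, ↥(Endpoints (X i))) → FanSum X :=
  puncturedMap X ∘ Sigma.map id (fun i => Set.inclusion fun _ hq =>
    ⟨hq.1, fun h => hq.2.2 (h ▸ (hX i).vertex_order)⟩)

lemma isEmbedding_endpointMap (hX : ∀ i, IsSmoothFan (X i)) : IsEmbedding (endpointMap hX) :=
  (isOpenEmbedding_puncturedMap X).isEmbedding.comp
    ((isEmbedding_sigmaMap Function.injective_id).2 fun _ => IsEmbedding.inclusion _)

lemma range_endpointMap [Countable ι] [Nonempty ι] (hX : ∀ i, IsSmoothFan (X i)) :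
    Set.range (endpointMap hX) = Endpoints (Set.univ : Set (FanSum X)) := by
  apply Set.Subset.antisymm
  · rintro _ ⟨⟨i, q, hq⟩, rfl⟩
    exact ⟨trivial, (orderAtLeast_puncturedMap_iff i _ 1).2 hq.2.1,
      fun h => hq.2.2 ((orderAtLeast_puncturedMap_iff i _ 2).1 h)⟩
  · rintro ⟨a⟩ ⟨-, h1, h2⟩
    have ha : ¬ isGluedPoint X a := fun ha => h2 (orderAtLeast_two_of_isGluedPoint hX ha)
    induction a using OnePoint.rec with
    | infty => exact absurd trivial ha
    | coe p =>
      obtain ⟨i, q, hq⟩ := p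
      have hv : q ∈ X i ∩ {fanVertex}ᶜ := ⟨hq, ha⟩
      exact ⟨⟨i, q, hq, (orderAtLeast_puncturedMap_iff i ⟨q, hv⟩ 1).1 h1,
        fun h => h2 ((orderAtLeast_puncturedMap_iff i ⟨q, hv⟩ 2).2 h)⟩, rfl⟩

end Endpoints

/-- The sum of a finite or countably infinite (nonempty) family of smooth
fans is a smooth fan, and its endpoint set is homeomorphic to the topological disjoint union
of the endpoint sets of the summands: `E(Σᵢ Xᵢ) ≅ ⊔ᵢ E(Xᵢ)`. -/
theorem fanSum_isSmoothFan_and_endpoints {ι : Type} [Countable ι] [Nonempty ι]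
    (X : ι → Set (ℝ × ℝ)) (hX : ∀ i, IsSmoothFan (X i)) :
    (∃ Y : Set (ℝ × ℝ), IsSmoothFan Y ∧ Nonempty (FanSum X ≃ₜ ↥Y)) ∧
    Nonempty (↥(Endpoints (Set.univ : Set (FanSum X))) ≃ₜ
      (Σ i : ι, ↥(Endpoints (X i)))) := by
  constructor
  · obtain ⟨e, he⟩ := exists_injective_nat ι
    obtain ⟨H, -⟩ := exists_homeomorph_planarSum hX he
    exact ⟨planarSum X e, isSmoothFan_planarSum hX he, ⟨H⟩⟩
  · exact ⟨((isEmbedding_endpointMap hX).toHomeomorph.trans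
      (.setCongr (range_endpointMap hX))).symm⟩

end SmoothFanPaper
end
end
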